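/- arXiv:2001.02470 — 3 statements merged into one kernel-verified Lean document; each statement's English description precedes it below -/
import Mathlib

section
/- Suppose a is contained in the Jacobson radical of R and M is an a-relative surjective Buchsbaum R-module with cd(a,M) = ara(a,M). Then M is a-relative Buchsbaum. -/
/-!
Formalization of a statement from "A theory of relative generalized Cohen-Macaulay modules"
by Divaani-Aazar, Ghanbari Doust, Tousi and Zakeri.

Throughout, `R` is a commutative Noetherian ring and `M` a finitely generated `R`-module.
Conventions used below:
* `locH I i M` is the local cohomology module `H^i_I(M)` (Mathlib's `localCohomology`).
* Conditions `cd(I,M) = c`, `ara(I,M) = n`, `f_I(M) = f`, `grade(I,M) = r` are expressed by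
  the predicates `IsCd`, `IsAra`, `IsFinDim`, `IsGrade`.
* Sequences are given as functions `Fin r → R`; `pSpan M x i = ⟨x_0,…,x_{i-1}⟩M`.
* Koszul (co)homology is defined via the explicit (co)chain complex on the `p`-element
  subsets of `{0,…,n-1}`, and the canonical map `λ^i` into local cohomology is the structure
  map (at exponent 1) into the direct limit of Koszul cohomologies of powers of the sequence,
  which is the realization of `H^i_{⟨x⟩}(M)` used in the paper (2.1(iv)).
-/

open CategoryTheory

noncomputable section

variable {R : Type} [CommRing R]

/-! ### Sequences: prefix spans, weak sequences, filter regular sequences, d-sequences -/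

/-- `pSpan M x i` is the submodule `⟨x_0, …, x_{i-1}⟩M` of `M`. -/
def pSpan (M : Type) [AddCommGroup M] [Module R M] {r : ℕ} (x : Fin r → R) (i : Fin r) :
    Submodule R M :=
  Ideal.span (x '' {j | j < i}) • (⊤ : Submodule R M)

/-- `x_1, …, x_r` is an `I`-weak sequence on `M`:
`(⟨x_1,…,x_{i-1}⟩M :_M x_i) ⊆ (⟨x_1,…,x_{i-1}⟩M :_M I)` for all `i`. -/
def IsWeakSeq (I : Ideal R) (M : Type) [AddCommGroup M] [Module R M] {r : ℕ}
    (x : Fin r → R) : Prop :=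
  ∀ i : Fin r, ∀ m : M, x i • m ∈ pSpan M x i → ∀ a ∈ I, a • m ∈ pSpan M x i

/-- `x_1, …, x_r` is an `I`-filter regular sequence on `M`:
`(⟨x_1,…,x_{i-1}⟩M :_M x_i) ⊆ ⋃ₜ (⟨x_1,…,x_{i-1}⟩M :_M I^t)` for all `i`. -/
def IsFilterRegSeq (I : Ideal R) (M : Type) [AddCommGroup M] [Module R M] {r : ℕ}
    (x : Fin r → R) : Prop :=
  ∀ i : Fin r, ∀ m : M, x i • m ∈ pSpan M x i →
    ∃ t : ℕ, ∀ a ∈ I ^ t, a • m ∈ pSpan M x i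

/-- An unconditioned `I`-filter regular sequence: filter regular in any order. -/
def IsUncondFilterRegSeq (I : Ideal R) (M : Type) [AddCommGroup M] [Module R M] {r : ℕ}
    (x : Fin r → R) : Prop :=
  ∀ σ : Equiv.Perm (Fin r), IsFilterRegSeq I M (x ∘ σ)

/-- An unconditioned `I`-weak sequence: all positive powers, in any order, form an
`I`-weak sequence. -/
def IsUncondWeakSeq (I : Ideal R) (M : Type) [AddCommGroup M] [Module R M] {r : ℕ}
    (x : Fin r → R) : Prop :=
  ∀ σ : Equiv.Perm (Fin r), ∀ α : Fin r → ℕ, (∀ k, 0 < α k) →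
    IsWeakSeq I M fun k => x (σ k) ^ α k

/-- `x_1, …, x_r` is a d-sequence on `M`:
`(⟨x_1,…,x_{i-1}⟩M :_M x_i x_j) = (⟨x_1,…,x_{i-1}⟩M :_M x_j)` for all `i ≤ j`. -/
def IsDSeq (M : Type) [AddCommGroup M] [Module R M] {r : ℕ} (x : Fin r → R) : Prop :=
  ∀ i j : Fin r, i ≤ j → ∀ m : M,
    ((x i * x j) • m ∈ pSpan M x i ↔ x j • m ∈ pSpan M x i)

/-- An u.s.d-sequence on `M`: all positive powers, in any order, form a d-sequence. -/
def IsUSDSeq (M : Type) [AddCommGroup M] [Module R M] {r : ℕ} (x : Fin r → R) : Prop :=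
  ∀ σ : Equiv.Perm (Fin r), ∀ α : Fin r → ℕ, (∀ k, 0 < α k) →
    IsDSeq M fun k => x (σ k) ^ α k

/-! ### Local cohomology, cohomological dimension, arithmetic rank -/

/-- The `i`-th local cohomology module `H^i_I(M)`. -/
abbrev locH (I : Ideal R) (i : ℕ) (M : Type) [AddCommGroup M] [Module R M] : ModuleCat R :=
  (localCohomology I i).obj (ModuleCat.of R M)

/-- `cd(I, M) = c`: the cohomological dimension of `I` on `M` equals `c`, i.e.
`H^c_I(M) ≠ 0` and `H^i_I(M) = 0` for all `i > c`. -/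
def IsCd (I : Ideal R) (M : Type) [AddCommGroup M] [Module R M] (c : ℕ) : Prop :=
  Nontrivial (locH I c M) ∧ ∀ i : ℕ, c < i → Subsingleton (locH I i M)

/-- `f_I(M) = f`: the `I`-finiteness dimension of `M` equals `f`, i.e. `f` is the least
integer such that `H^f_I(M)` is not finitely generated. -/
def IsFinDim (I : Ideal R) (M : Type) [AddCommGroup M] [Module R M] (f : ℕ) : Prop :=
  (∀ i : ℕ, i < f → Module.Finite R (locH I i M)) ∧ ¬ Module.Finite R (locH I f M)

/-- `M` is `I`-relative generalized Cohen-Macaulay: `cd(I,M) ≤ 0` or `cd(I,M) = f_I(M)`. -/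
def IsRelGCM (I : Ideal R) (M : Type) [AddCommGroup M] [Module R M] : Prop :=
  (∀ i : ℕ, 0 < i → Subsingleton (locH I i M)) ∨
    ∃ c : ℕ, IsCd I M c ∧ IsFinDim I M c

/-- `ara(I, M) = n`: the arithmetic rank of `I` with respect to `M` equals `n`, i.e. `n` is the
least integer such that there are `x_1, …, x_n ∈ R` with
`Rad(⟨x_1,…,x_n⟩ + Ann M) = Rad(I + Ann M)`. -/
def IsAra (I : Ideal R) (M : Type) [AddCommGroup M] [Module R M] (n : ℕ) : Prop :=
  IsLeast {k : ℕ | ∃ x : Fin k → R,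
    (Ideal.span (Set.range x) + Module.annihilator R M).radical
      = (I + Module.annihilator R M).radical} n

/-- `x_1, …, x_c` is an `I`-relative system of parameters of `M` (where `c = cd(I,M)`):
the `x_i` lie in `I` and `Rad(⟨x_1,…,x_c⟩ + Ann M) = Rad(I + Ann M)`. -/
def IsRsop (I : Ideal R) (M : Type) [AddCommGroup M] [Module R M] {c : ℕ}
    (x : Fin c → R) : Prop :=
  (∀ j, x j ∈ I) ∧
    (Ideal.span (Set.range x) + Module.annihilator R M).radical
      = (I + Module.annihilator R M).radical

/-! ### Relative Buchsbaum and relative quasi Buchsbaum modules -/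

/-- `M` is `I`-relative Buchsbaum: `cd(I,M) = ara(I,M)` and every `I`-relative system of
parameters of `M` is an `I`-weak sequence on `M`. -/
def IsRelBuchsbaum (I : Ideal R) (M : Type) [AddCommGroup M] [Module R M] : Prop :=
  ∃ c : ℕ, IsCd I M c ∧ IsAra I M c ∧
    ∀ x : Fin c → R, IsRsop I M x → IsWeakSeq I M x

/-- `M` is `I`-relative quasi Buchsbaum: `cd(I,M) = ara(I,M)` and every `I`-relative system of
parameters of `M` contained in `I²` is an `I`-weak sequence on `M`. -/
def IsRelQuasiBuchsbaum (I : Ideal R) (M : Type) [AddCommGroup M] [Module R M] : Prop :=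
  ∃ c : ℕ, IsCd I M c ∧ IsAra I M c ∧
    ∀ x : Fin c → R, IsRsop I M x → (∀ j, x j ∈ I ^ 2) → IsWeakSeq I M x

/-! ### The natural maps `φ^i_M : Ext^i(R/I, M) → H^i_I(M)` and relative surjective
Buchsbaum modules -/

/-- The `i`-th Ext module `Ext^i_R(R/I, M)`. -/
abbrev extH (I : Ideal R) (i : ℕ) (M : Type) [AddCommGroup M] [Module R M] : ModuleCat R :=
  ((Ext R (ModuleCat R) i).obj (Opposite.op (ModuleCat.of R (R ⧸ I)))).obj (ModuleCat.of R M)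

/-- The natural map `φ^i_M : Ext^i_R(R/I, M) → H^i_I(M)`, i.e. the structure map into the
colimit `H^i_I(M) = colim_n Ext^i_R(R/I^n, M)` at `n = 1`. -/
def phi (I : Ideal R) (i : ℕ) (M : Type) [AddCommGroup M] [Module R M] :
    ((localCohomology.diagram (localCohomology.idealPowersDiagram I) i).obj
        (Opposite.op (Opposite.op (1 : ℕ)))).obj (ModuleCat.of R M) ⟶
      (localCohomology I i).obj (ModuleCat.of R M) :=
  have := localCohomology.hasColimitDiagram.{0, 0} (localCohomology.idealPowersDiagram I) i
  (Limits.colimit.ι (localCohomology.diagram (localCohomology.idealPowersDiagram I) i)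
      (Opposite.op (Opposite.op (1 : ℕ)))).app (ModuleCat.of R M)

/-- `φ^i_M` is surjective. -/
def PhiSurj (I : Ideal R) (i : ℕ) (M : Type) [AddCommGroup M] [Module R M] : Prop :=
  Function.Surjective (phi I i M)

/-- `M` is `I`-relative surjective Buchsbaum: `φ^i_M` is surjective for all `i < cd(I,M)`. -/
def IsRelSurjBuchsbaum (I : Ideal R) (M : Type) [AddCommGroup M] [Module R M] : Prop :=
  ∀ i : ℕ, (∃ j : ℕ, i < j ∧ Nontrivial (locH I j M)) → PhiSurj I i M

/-- `grade(I, M) = r`: `r` is the least integer with `Ext^r_R(R/I, M) ≠ 0`. -/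
def IsGrade (I : Ideal R) (M : Type) [AddCommGroup M] [Module R M] (r : ℕ) : Prop :=
  Nontrivial (extH I r M) ∧ ∀ i : ℕ, i < r → Subsingleton (extH I i M)

lemma sq_inv' {C : Type*} [Category C] {A B A' B' : C} (i : A ≅ B) (j : A' ≅ B') (f : A ⟶ A')
    (g : B ⟶ B') (h : f ≫ j.hom = i.hom ≫ g) : i.inv ≫ f = g ≫ j.inv := by
  rw [Iso.inv_comp_eq, ← Category.assoc, Iso.eq_comp_inv]
  exact h

lemma sq_paste' {C : Type*} [Category C] {A B D A' B' D' : C} (a : A ⟶ A') (b : B ⟶ B')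
    (c : D ⟶ D') (p : A ⟶ B) (p' : A' ⟶ B') (q : B ⟶ D) (q' : B' ⟶ D')
    (h : a ≫ p' = p ≫ b) (h' : b ≫ q' = q ≫ c) : a ≫ (p' ≫ q') = (p ≫ q) ≫ c := by
  rw [← Category.assoc, h, Category.assoc, h', Category.assoc]

abbrev yo {X : ModuleCat.{0} R} (P : ProjectiveResolution X) (Y : ModuleCat.{0} R) :
   CochainComplex (ModuleCat R) ℕ := P.complex.linearYonedaObj R Y

def yoMap {X X' : ModuleCat.{0} R} {P : ProjectiveResolution X} {P' : ProjectiveResolution X'}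
   (ψ : P'.complex ⟶ P.complex) (Y : ModuleCat.{0} R) : yo P Y ⟶ yo P' Y :=
  ((HomologicalComplex.unopFunctor (ModuleCat R) (ComplexShape.down ℕ)).map
    ((((linearYoneda R _).obj Y).rightOp.mapHomologicalComplex _).map ψ).op)

lemma yoMap_f {X X' : ModuleCat.{0} R} {P : ProjectiveResolution X} {P' : ProjectiveResolution X'}
   (ψ : P'.complex ⟶ P.complex) (Y : ModuleCat.{0} R) (n : ℕ) (f : P.complex.X n ⟶ Y) :
   (yoMap ψ Y).f n f = ψ.f n ≫ f := rfl

lemma isoExt_naturality {X X' : ModuleCat.{0} R} {P : ProjectiveResolution X} {P' : ProjectiveResolution X'}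
   (g : X' ⟶ X) (ψ : P'.complex ⟶ P.complex) (comm : ψ.f 0 ≫ P.π.f 0 = P'.π.f 0 ≫ g)
   (Y : ModuleCat.{0} R) (n : ℕ) :
   ((Ext R (ModuleCat R) n).map g.op).app Y ≫ (P'.isoExt n Y).hom = (P.isoExt n Y).hom ≫
     HomologicalComplex.homologyMap (yoMap ψ Y) n := by
  have h1 := ProjectiveResolution.isoLeftDerivedObj_inv_naturality g P' P ψ comm
     ((linearYoneda R (ModuleCat.{0} R)).obj Y).rightOp n
  have h2 := HomologicalComplex.homologyOp_hom_naturality (yoMap ψ Y) n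
  have h3 : ((yo P' Y).homologyOp n).inv ≫ HomologicalComplex.homologyMap
      ((HomologicalComplex.opFunctor _ _).map (yoMap ψ Y).op) n =
      (HomologicalComplex.homologyMap (yoMap ψ Y) n).op ≫ ((yo P Y).homologyOp n).inv := sq_inv' _ _ _ _ h2
  have h1' := congrArg Quiver.Hom.unop h1
  have h3' := congrArg Quiver.Hom.unop h3
  have e1 : ((Ext R (ModuleCat R) n).map g.op).app Y ≫ (P'.isoLeftDerivedObj
      ((linearYoneda R (ModuleCat.{0} R)).obj Y).rightOp n).inv.unop =
      (P.isoLeftDerivedObj ((linearYoneda R (ModuleCat.{0} R)).obj Y).rightOp n).inv.unop ≫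
        (HomologicalComplex.homologyMap
      ((HomologicalComplex.opFunctor _ _).map (yoMap ψ Y).op) n).unop := h1'
  have e2 : (HomologicalComplex.homologyMap
      ((HomologicalComplex.opFunctor _ _).map (yoMap ψ Y).op) n).unop ≫
      ((yo P' Y).homologyOp n).inv.unop = ((yo P Y).homologyOp n).inv.unop ≫
      HomologicalComplex.homologyMap (yoMap ψ Y) n := h3'
  exact sq_paste' _ _ _ _ _ _ _ e1 e2

def oldCls {X : ModuleCat.{0} R} (P : ProjectiveResolution X) (Y : ModuleCat.{0} R) (n : ℕ)
    (z : (yo P Y).cycles n) : ((Ext R (ModuleCat R) n).obj (Opposite.op X)).obj Y :=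
  (P.isoExt n Y).inv ((yo P Y).homologyπ n z)

lemma oldCls_surj {X : ModuleCat.{0} R} (P : ProjectiveResolution X) (Y : ModuleCat.{0} R) (n : ℕ) :
    Function.Surjective (oldCls P Y n) := by
  have h1 : Function.Surjective ((yo P Y).homologyπ n) :=
    (ModuleCat.epi_iff_surjective _).1 inferInstance
  have h2 : Function.Surjective (P.isoExt (R := R) n Y).inv :=
    (ModuleCat.epi_iff_surjective _).1 inferInstance
  exact h2.comp h1

/-- the underlying cochain of a cycle -/
def co {X : ModuleCat.{0} R} (P : ProjectiveResolution X) (Y : ModuleCat.{0} R) (n : ℕ)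
    (z : (yo P Y).cycles n) : P.complex.X n ⟶ Y := (yo P Y).iCycles n z

lemma co_d {X : ModuleCat.{0} R} (P : ProjectiveResolution X) (Y : ModuleCat.{0} R) (n m : ℕ)
    (z : (yo P Y).cycles n) : P.complex.d m n ≫ co P Y n z = 0 := by
  have h := (yo P Y).iCycles_d n m
  have := congrArg (fun f => f z) h
  exact this

/-- the class in the derived-category Ext -/
def newCls {X : ModuleCat.{0} R} (P : ProjectiveResolution X) (Y : ModuleCat.{0} R) (n : ℕ)
    (z : (yo P Y).cycles n) : Abelian.Ext.{0} X Y n :=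
  P.extMk (co P Y n z) (n+1) rfl (co_d P Y n (n+1) z)

lemma newCls_surj {X : ModuleCat.{0} R} (P : ProjectiveResolution X) (Y : ModuleCat.{0} R) (n : ℕ) :
    Function.Surjective (newCls P Y n) := by
  intro e
  obtain ⟨f, hf, rfl⟩ := P.extMk_surjective e (n+1) rfl
  refine ⟨(yo P Y).cyclesMk (i := n) (f : P.complex.X n ⟶ Y) (n+1) (by simp) ?_, ?_⟩
  · exact hf
  · have := (yo P Y).i_cyclesMk (i := n) (f : P.complex.X n ⟶ Y) (n+1) (by simp) hf
    unfold newCls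
    congr 1

lemma oldCls_eq {X : ModuleCat.{0} R} (P : ProjectiveResolution X) (Y : ModuleCat.{0} R) (n : ℕ)
    (z w : (yo P Y).cycles n) (h : oldCls P Y n z = oldCls P Y n w) :
    newCls P Y n z = newCls P Y n w := by
  have h2 : Function.Injective (P.isoExt (R := R) n Y).inv :=
    (ModuleCat.mono_iff_injective _).1 inferInstance
  have h1 : (yo P Y).homologyπ n z = (yo P Y).homologyπ n w := h2 h
  have h3 : (yo P Y).homologyπ n (z - w) = 0 := by rw [map_sub, h1, sub_self]
  have : ∃ u, (yo P Y).toCycles ((ComplexShape.up ℕ).prev n) n u = z - w := by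
    have := ShortComplex.exact_of_g_is_cokernel
      (ShortComplex.mk ((yo P Y).toCycles ((ComplexShape.up ℕ).prev n) n) ((yo P Y).homologyπ n) (by simp))
      ((yo P Y).homologyIsCokernel ((ComplexShape.up ℕ).prev n) n rfl)
    rw [ShortComplex.moduleCat_exact_iff] at this
    exact this _ h3
  obtain ⟨u, hu⟩ := this
  have hu' : (yo P Y).d ((ComplexShape.up ℕ).prev n) n u = co P Y n z - co P Y n w := by
    have e := (yo P Y).toCycles_i ((ComplexShape.up ℕ).prev n) n
    have e' := congrArg (fun f => f u) e
    have e'' : (yo P Y).iCycles n ((yo P Y).toCycles ((ComplexShape.up ℕ).prev n) n u) =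
      (yo P Y).d ((ComplexShape.up ℕ).prev n) n u := e'
    rw [← e'', hu, map_sub]
    rfl
  unfold newCls
  rw [← sub_eq_zero, P.sub_extMk]
  rcases n with _ | p
  · have : co P Y 0 z - co P Y 0 w = 0 := by
      rw [← hu', (yo P Y).shape _ _ (by simp)]
      rfl
    simp [this]
  · rw [P.extMk_eq_zero_iff _ _ _ _ p rfl]
    have hp : (ComplexShape.up ℕ).prev (p+1) = p := by simp
    rw [← hu']
    clear hu' hu 
    revert u
    rw [hp]
    intro u
    exact ⟨u, rfl⟩

lemma cls_map {X X' : ModuleCat.{0} R} (P : ProjectiveResolution X) (P' : ProjectiveResolution X')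
   (g : X' ⟶ X) (Y : ModuleCat.{0} R) (n : ℕ) (z : (yo P Y).cycles n) :
   ∃ z', ((Ext R (ModuleCat R) n).map g.op).app Y (oldCls P Y n z) = oldCls P' Y n z' ∧
     (Abelian.Ext.mk₀ g).comp (newCls P Y n z) (zero_add n) = newCls P' Y n z' := by
  let ψ := ProjectiveResolution.lift g P' P
  have comm : ψ.f 0 ≫ P.π.f 0 = P'.π.f 0 ≫ g := ProjectiveResolution.lift_commutes_zero g P' P
  refine ⟨HomologicalComplex.cyclesMap (yoMap ψ Y) n z, ?_, ?_⟩
  · have h := isoExt_naturality g ψ comm Y n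
    have h' : (P.isoExt n Y).inv ≫ ((Ext R (ModuleCat R) n).map g.op).app Y =
       HomologicalComplex.homologyMap (yoMap ψ Y) n ≫ (P'.isoExt n Y).inv := by
      rw [Iso.inv_comp_eq, ← Category.assoc, Iso.eq_comp_inv]
      exact h
    have h2 := HomologicalComplex.homologyπ_naturality (yoMap ψ Y) n
    have h3 : (yo P Y).homologyπ n ≫ (P.isoExt n Y).inv ≫ ((Ext R (ModuleCat R) n).map g.op).app Y
       = HomologicalComplex.cyclesMap (yoMap ψ Y) n ≫ (yo P' Y).homologyπ n ≫ (P'.isoExt n Y).inv := by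
      rw [h', ← Category.assoc, h2, Category.assoc]
    exact congrArg (fun f => f z) h3
  · unfold newCls
    rw [ProjectiveResolution.mk₀_comp_extMk _ _ _ _ (φ := ⟨ψ, by simpa using comm⟩)]
    congr 1
    have h4 := HomologicalComplex.cyclesMap_i (yoMap ψ Y) n
    have h5 := congrArg (fun f => f z) h4
    exact h5.symm

open Limits Opposite in
/-- `R / I^k` as an object of `ModuleCat R`. -/
abbrev qq (I : Ideal R) (k : ℕ) : ModuleCat.{0} R := ModuleCat.of R (R ⧸ I ^ k)

/-- The transition map `R / I^l → R / I^k`. -/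
def tr (I : Ideal R) {k l : ℕ} (h : k ≤ l) : qq I l ⟶ qq I k :=
  ModuleCat.ofHom (Submodule.mapQ _ _ LinearMap.id (Ideal.pow_le_pow_right h))

lemma tr_comp (I : Ideal R) {k l m : ℕ} (h : k ≤ l) (h' : l ≤ m) :
    tr I h' ≫ tr I h = tr I (h.trans h') := by
  ext; rfl

/-- restriction of Ext classes along `R/I^l → R/I^k` -/
def res (I : Ideal R) {k l : ℕ} (h : k ≤ l) {M : ModuleCat.{0} R} {i : ℕ}
    (e : Abelian.Ext.{0} (qq I k) M i) : Abelian.Ext.{0} (qq I l) M i :=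
  (Abelian.Ext.mk₀ (tr I h)).comp e (zero_add i)

/-- Surjectivity of `φ^i`. -/
def SurjE (I : Ideal R) (M : ModuleCat.{0} R) (i : ℕ) : Prop :=
  ∀ (k : ℕ) (e : Abelian.Ext.{0} (qq I k) M i), ∃ (l : ℕ) (hk : k ≤ l) (h1 : 1 ≤ l)
    (e1 : Abelian.Ext.{0} (qq I 1) M i), res I hk e = res I h1 e1

open Limits Opposite in
lemma phi_exists (I : Ideal R) (i : ℕ) (M : Type) [AddCommGroup M] [Module R M]
    (h : PhiSurj I i M) (k : ℕ)
    (e : ((Ext R (ModuleCat R) i).obj (op (qq I k))).obj (ModuleCat.of R M)) :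
    ∃ (l : ℕ) (hk : k ≤ l) (h1 : 1 ≤ l)
    (e1 : ((Ext R (ModuleCat R) i).obj (op (qq I 1))).obj (ModuleCat.of R M)),
    ((Ext R (ModuleCat R) i).map (tr I hk).op).app (ModuleCat.of R M) e =
    ((Ext R (ModuleCat R) i).map (tr I h1).op).app (ModuleCat.of R M) e1 := by
  let Y := ModuleCat.of R M
  let D := localCohomology.diagram (localCohomology.idealPowersDiagram I) i
  have : HasColimit D := localCohomology.hasColimitDiagram.{0, 0} (localCohomology.idealPowersDiagram I) i
  let E := (evaluation (ModuleCat.{0} R) (ModuleCat.{0} R)).obj Y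
  let c := E.mapCocone (colimit.cocone D)
  have hc : IsColimit c := isColimitOfPreserves E (colimit.isColimit D)
  let y := c.ι.app (op (op k)) e
  obtain ⟨e1, he1⟩ := h y
  have he1' : c.ι.app (op (op 1)) e1 = c.ι.app (op (op k)) e := he1
  obtain ⟨j, f, g, hfg⟩ := Concrete.isColimit_exists_of_rep_eq (D ⋙ E) hc _ _ he1'
  refine ⟨j.unop.unop, g.unop.unop.le, f.unop.unop.le, e1, ?_⟩
  exact hfg.symm

lemma surjE_of_phi (I : Ideal R) (i : ℕ) (M : Type) [AddCommGroup M] [Module R M]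
    (h : PhiSurj I i M) : SurjE I (ModuleCat.of R M) i := by
  intro k e
  let P := fun k => projectiveResolution (qq I k)
  obtain ⟨z, rfl⟩ := newCls_surj (P k) _ _ e
  obtain ⟨l, hk, h1, e1, he⟩ := phi_exists I i M h k (oldCls (P k) _ _ z)
  obtain ⟨w, rfl⟩ := oldCls_surj (P 1) _ _ e1
  refine ⟨l, hk, h1, newCls (P 1) _ _ w, ?_⟩
  obtain ⟨z', hz, hz'⟩ := cls_map (P k) (P l) (tr I hk) _ _ z
  obtain ⟨w', hw, hw'⟩ := cls_map (P 1) (P l) (tr I h1) _ _ w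
  unfold res
  rw [hz', hw']
  apply oldCls_eq
  rw [← hz, ← hw]
  exact he

open Abelian in
lemma restrict_zero {S' S : ShortComplex (ModuleCat.{0} R)} (h' : S'.ShortExact) (h : S.ShortExact)
    (f : S' ⟶ S) {T : ModuleCat.{0} R} {i : ℕ} (e : Ext.{0} S.X₁ T i)
    (he : (Ext.mk₀ f.τ₁).comp e (zero_add i) = 0) :
    (Ext.mk₀ f.τ₃).comp (h.extClass.comp e (add_comm 1 i)) (zero_add _) = 0 := by
  rw [← Ext.comp_assoc (a₁₂ := 1) _ _ _ (by lia) (by lia) (by lia),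
    ← ShortComplex.ShortExact.extClass_naturality h' h f,
    Ext.comp_assoc (a₂₃ := i) _ _ _ (by lia) (by lia) (by lia), he, Ext.comp_zero]

lemma mkSES {A B C : Type} [AddCommGroup A] [AddCommGroup B] [AddCommGroup C] [Module R A]
    [Module R B] [Module R C] (f : A →ₗ[R] B) (g : B →ₗ[R] C) (hf : Function.Injective f)
    (hg : Function.Surjective g) (hfg : Function.Exact f g) :
    (ShortComplex.mk (ModuleCat.ofHom f) (ModuleCat.ofHom g)
      (by ext x; exact hfg.apply_apply_eq_zero x)).ShortExact where
  exact := by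
    rw [ShortComplex.moduleCat_exact_iff]
    exact fun x hx => (hfg x).1 hx
  mono_f := (ModuleCat.mono_iff_injective _).2 hf
  epi_g := (ModuleCat.epi_iff_surjective _).2 hg

/-- the short complex attached to an exact pair of linear maps -/
abbrev scOf {A B C : Type} [AddCommGroup A] [AddCommGroup B] [AddCommGroup C] [Module R A]
    [Module R B] [Module R C] (f : A →ₗ[R] B) (g : B →ₗ[R] C) (hfg : Function.Exact f g) :
    ShortComplex (ModuleCat.{0} R) := ShortComplex.mk (ModuleCat.ofHom f) (ModuleCat.ofHom g)
      (by ext x; exact hfg.apply_apply_eq_zero x)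

/-- the short complex of a kernel -/
abbrev kerSC {B C : Type} [AddCommGroup B] [AddCommGroup C]
    [Module R B] [Module R C] (g : B →ₗ[R] C) :=
  scOf (LinearMap.ker g).subtype g (LinearMap.exact_subtype_ker_map g)

lemma mkSESker {B C : Type} [AddCommGroup B] [AddCommGroup C]
    [Module R B] [Module R C] (g : B →ₗ[R] C)
    (hg : Function.Surjective g) :
    (kerSC g).ShortExact :=
  mkSES _ _ (LinearMap.ker g).injective_subtype hg (LinearMap.exact_subtype_ker_map g)

/-- the inclusion `I^s L → L` -/
abbrev isub (I : Ideal R) (s : ℕ) (L : Type) [AddCommGroup L] [Module R L] :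
    ModuleCat.of R (I ^ s • (⊤ : Submodule R L) : Submodule R L) ⟶ ModuleCat.of R L :=
  ModuleCat.ofHom (I ^ s • (⊤ : Submodule R L)).subtype

/-- factor a map through `I^s L` -/
abbrev icod (I : Ideal R) (s : ℕ) {A L : Type} [AddCommGroup L] [Module R L]
    [AddCommGroup A] [Module R A] (t : A →ₗ[R] L) (h : ∀ x, t x ∈ I ^ s • (⊤ : Submodule R L)) :
    ModuleCat.of R A ⟶ ModuleCat.of R (I ^ s • (⊤ : Submodule R L) : Submodule R L) :=
  ModuleCat.ofHom (LinearMap.codRestrict _ t h)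

open Abelian in
lemma van1 [IsNoetherianRing R] (I : Ideal R) (T : ModuleCat.{0} R) (n : ℕ)
    (hT : ∀ a ∈ I ^ n, ∀ t : T, a • t = 0) (i : ℕ) : ∀ (L : Type) [AddCommGroup L] [Module R L]
    [Module.Finite R L] (e : Ext.{0} (ModuleCat.of R L) T i),
    ∃ s : ℕ, (Ext.mk₀ (isub I s L)).comp e
      (zero_add i) = 0 := by
  induction i with
  | zero =>
    intro L _ _ _ e
    obtain ⟨f, rfl⟩ := (Ext.mk₀_bijective _ _).2 e
    refine ⟨n, ?_⟩
    rw [Ext.mk₀_comp_mk₀]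
    have : ModuleCat.ofHom (I ^ n • (⊤ : Submodule R L)).subtype ≫ f = 0 := by
      ext ⟨x, hx⟩
      change f.hom x = 0
      have : I ^ n • (⊤ : Submodule R L) ≤ LinearMap.ker f.hom := by
        rw [Submodule.smul_le]
        intro a ha m _
        rw [LinearMap.mem_ker, map_smul]
        exact hT a ha _
      exact this hx
    rw [this, Ext.mk₀_zero]
  | succ i ih =>
    intro L _ _ _ e
    obtain ⟨m, π, hπ⟩ := Module.Finite.exists_fin' R L
    let K := LinearMap.ker π
    have hex : Function.Exact K.subtype π := LinearMap.exact_subtype_ker_map π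
    have hS := mkSES K.subtype π K.injective_subtype hπ hex
    have : Projective (ModuleCat.of R (Fin m → R)) := inferInstance
    obtain ⟨e', he'⟩ := Ext.contravariant_sequence_exact₃ hS _ e
      (Ext.eq_zero_of_projective _) (add_comm 1 i)
    obtain ⟨s, hs⟩ := ih K e'
    obtain ⟨k, hk⟩ := Ideal.exists_pow_inf_eq_pow_smul I K
    have hAR : I ^ (s + k) • (⊤ : Submodule R (Fin m → R)) ⊓ K ≤ I ^ s • K := by
      rw [hk (s + k) (by lia), Nat.add_sub_cancel]
      exact Submodule.smul_mono le_rfl inf_le_right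
    let F' := I ^ (s + k) • (⊤ : Submodule R (Fin m → R))
    let L' := I ^ (s + k) • (⊤ : Submodule R L)
    have hmap : F'.map π = L' := by
      change (I ^ (s + k) • (⊤ : Submodule R (Fin m → R))).map π = L'
      rw [Submodule.map_smul'', Submodule.map_top, LinearMap.range_eq_top.2 hπ]
    have hin : ∀ x ∈ F', π x ∈ L' := fun x hx => hmap ▸ Submodule.mem_map_of_mem hx
    let π' : F' →ₗ[R] L' := π.restrict hin
    have hπ' : Function.Surjective π' := by
      rintro ⟨y, hy⟩
      rw [← hmap] at hy
      obtain ⟨x, hx, rfl⟩ := hy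
      exact ⟨⟨x, hx⟩, rfl⟩
    let K' : Submodule R F' := LinearMap.ker π'
    have hS' := mkSESker π' hπ'
    have hK' : ∀ x : K', ((x : F') : Fin m → R) ∈ K := fun x => by
      have := x.2
      have h2 : π' x = 0 := this
      exact congrArg Subtype.val h2
    let t1 : K' →ₗ[R] K := LinearMap.codRestrict K (F'.subtype ∘ₗ K'.subtype) hK'
    have hin1 : ∀ x : K', t1 x ∈ I ^ s • (⊤ : Submodule R K) := fun x => by
      have h1 : ((x : F') : Fin m → R) ∈ I ^ s • K := hAR ⟨(x : F').2, hK' x⟩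
      have h2 : (I ^ s • (⊤ : Submodule R K)).map K.subtype = I ^ s • K := by
        rw [Submodule.map_smul'', Submodule.map_top, Submodule.range_subtype]
      rw [← h2] at h1
      obtain ⟨y, hy, hy'⟩ := h1
      have : y = t1 x := Subtype.ext hy'
      exact this ▸ hy
    let f : kerSC π' ⟶ scOf K.subtype π hex :=
      { τ₁ := ModuleCat.ofHom t1
        τ₂ := ModuleCat.ofHom F'.subtype
        τ₃ := ModuleCat.ofHom L'.subtype
        comm₁₂ := by ext; rfl
        comm₂₃ := by ext; rfl }
    refine ⟨s + k, ?_⟩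
    rw [← he']
    refine restrict_zero hS' hS f e' ?_
    have : f.τ₁ = icod I s t1 hin1 ≫ isub I s K := by ext; rfl
    rw [this, ← Ext.mk₀_comp_mk₀, Ext.comp_assoc (a₂₃ := i) _ _ _ (by lia) (by lia) (by lia),
      hs, Ext.comp_zero]

open Abelian in
lemma van2 [IsNoetherianRing R] (I : Ideal R) (T : ModuleCat.{0} R) (n : ℕ)
    (hT : ∀ a ∈ I ^ n, ∀ t : T, a • t = 0) (i k : ℕ) (e : Ext.{0} (qq I k) T (i + 1)) :
    ∃ (l : ℕ) (h : k ≤ l), res I h e = 0 := by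
  have ex : ∀ k, Function.Exact (I ^ k).subtype (I ^ k).mkQ := fun k =>
    LinearMap.exact_subtype_mkQ (I ^ k)
  have hS : ∀ k, (scOf (I ^ k).subtype (I ^ k).mkQ (ex k)).ShortExact := fun k =>
    mkSES _ _ (I ^ k).injective_subtype (I ^ k).mkQ_surjective (ex k)
  have : Projective (ModuleCat.of R R) := inferInstance
  obtain ⟨e', he'⟩ := Ext.contravariant_sequence_exact₃ (hS k) _ e
      (Ext.eq_zero_of_projective _) (add_comm 1 i)
  obtain ⟨s, hs⟩ := van1 I T n hT i (I ^ k : Ideal R) e'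
  have hle : I ^ (s + k) ≤ I ^ k := Ideal.pow_le_pow_right (by lia)
  let t1 : (I ^ (s + k) : Ideal R) →ₗ[R] (I ^ k : Ideal R) := Submodule.inclusion hle
  have hin1 : ∀ x, t1 x ∈ I ^ s • (⊤ : Submodule R (I ^ k : Ideal R)) := fun x => by
    have h1 : (x : R) ∈ I ^ s • (I ^ k) := by
      rw [smul_eq_mul, ← pow_add]; exact x.2
    have h2 : (I ^ s • (⊤ : Submodule R (I ^ k : Ideal R))).map (I ^ k).subtype = I ^ s • (I ^ k) := by
      rw [Submodule.map_smul'', Submodule.map_top, Submodule.range_subtype]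
    rw [← h2] at h1
    obtain ⟨y, hy, hy'⟩ := h1
    have : y = t1 x := Subtype.ext hy'
    exact this ▸ hy
  let f : scOf (I ^ (s + k)).subtype (I ^ (s + k)).mkQ (ex (s + k)) ⟶
      scOf (I ^ k).subtype (I ^ k).mkQ (ex k) :=
      { τ₁ := ModuleCat.ofHom t1
        τ₂ := 𝟙 _
        τ₃ := tr I (Nat.le_add_left k s)
        comm₁₂ := by ext; rfl
        comm₂₃ := by ext; rfl }
  refine ⟨s + k, Nat.le_add_left k s, ?_⟩
  rw [← he']
  refine restrict_zero (hS (s + k)) (hS k) f e' ?_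
  have : f.τ₁ = ModuleCat.ofHom (LinearMap.codRestrict _ t1 hin1) ≫
      ModuleCat.ofHom (I ^ s • (⊤ : Submodule R (I ^ k : Ideal R))).subtype := by ext; rfl
  rw [this, ← Ext.mk₀_comp_mk₀, Ext.comp_assoc (a₂₃ := i) _ _ _ (by lia) (by lia) (by lia),
      hs, Ext.comp_zero]


open Abelian in
lemma res_add (I : Ideal R) {k l : ℕ} (h : k ≤ l) {M : ModuleCat.{0} R} {i : ℕ}
    (e e' : Ext.{0} (qq I k) M i) : res I h (e + e') = res I h e + res I h e' := by
  simp [res]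

open Abelian in
lemma res_sub (I : Ideal R) {k l : ℕ} (h : k ≤ l) {M : ModuleCat.{0} R} {i : ℕ}
    (e e' : Ext.{0} (qq I k) M i) : res I h (e - e') = res I h e - res I h e' := by
  simp [res, sub_eq_add_neg]

open Abelian in
lemma res_res (I : Ideal R) {k l m : ℕ} (h : k ≤ l) (h' : l ≤ m) {M : ModuleCat.{0} R} {i : ℕ}
    (e : Ext.{0} (qq I k) M i) : res I h' (res I h e) = res I (h.trans h') e := by
  unfold res
  rw [← Ext.comp_assoc (a₁₂ := 0) _ _ _ (by lia) (by lia) (by lia), Ext.mk₀_comp_mk₀, tr_comp]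

open Abelian in
lemma res_comp (I : Ideal R) {k l : ℕ} (h : k ≤ l) {M N : ModuleCat.{0} R} {i j n : ℕ}
    (e : Ext.{0} (qq I k) M i) (f : Ext.{0} M N j) (hn : i + j = n) :
    res I h (e.comp f hn) = (res I h e).comp f hn := by
  unfold res
  rw [Ext.comp_assoc (a₂₃ := n) _ _ _ (by lia) (by lia) (by lia)]

open Abelian in
lemma surj0 (I : Ideal R) (M : Type) [AddCommGroup M] [Module R M]
    (h : SurjE I (ModuleCat.of R M) 0) (m : M) (k : ℕ) (hm : ∀ a ∈ I ^ k, a • m = 0) :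
    ∀ a ∈ I, a • m = 0 := by
  let f : (R ⧸ I ^ k) →ₗ[R] M := Submodule.liftQ _ (LinearMap.toSpanSingleton R M m)
    (fun a ha => by simpa using hm a ha)
  obtain ⟨l, hk, h1, e1, he⟩ := h k (Ext.mk₀ (ModuleCat.ofHom f))
  obtain ⟨g, rfl⟩ := (Ext.mk₀_bijective _ _).2 e1
  unfold res at he
  rw [Ext.mk₀_comp_mk₀, Ext.mk₀_comp_mk₀] at he
  have he' := (Ext.mk₀_bijective _ _).1 he
  have h2 := congrArg (fun φ => φ.hom (Submodule.Quotient.mk (1 : R))) he'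
  have h3 : f (Submodule.Quotient.mk (1 : R)) = g.hom (Submodule.Quotient.mk (1 : R)) := h2
  have h4 : f (Submodule.Quotient.mk (1 : R)) = m := by
    change (1 : R) • m = m
    simp
  intro a ha
  have h5 : a • (Submodule.Quotient.mk (1 : R) : R ⧸ I ^ 1) = 0 := by
    rw [← Submodule.Quotient.mk_smul, Submodule.Quotient.mk_eq_zero]
    simpa using ha
  have h6 : a • g.hom (Submodule.Quotient.mk (1 : R) : R ⧸ I ^ 1) = 0 := by
    rw [← map_smul, h5, map_zero]
  rw [← h4, h3]
  exact h6

open Abelian in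
lemma comp_smul_zero (I : Ideal R) (x : R) (hx : x ∈ I) (M : Type) [AddCommGroup M] [Module R M]
    (i : ℕ) (e : Ext.{0} (qq I 1) (ModuleCat.of R M) i) :
    e.comp (Ext.mk₀ (ModuleCat.ofHom (LinearMap.lsmul R M x))) (add_zero i) = 0 := by
  have h1 : ModuleCat.ofHom (LinearMap.lsmul R M x) = x • 𝟙 (ModuleCat.of R M) := by
    ext; rfl
  have h2 : x • 𝟙 (qq I 1) = 0 := by
    apply ModuleCat.hom_ext
    apply LinearMap.ext
    intro a
    obtain ⟨a, rfl⟩ := Submodule.Quotient.mk_surjective _ a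
    change x • (Submodule.Quotient.mk a : R ⧸ I ^ 1) = 0
    rw [← Submodule.Quotient.mk_smul, Submodule.Quotient.mk_eq_zero]
    simpa using Ideal.mul_mem_right a I hx
  have h3 : x • e = 0 := by
    have : (Ext.mk₀ (x • 𝟙 (qq I 1))).comp e (zero_add i) = x • e := by
      rw [Ext.mk₀_smul, Ext.smul_comp, Ext.mk₀_id_comp]
    rw [← this, h2, Ext.mk₀_zero, Ext.zero_comp]
  rw [h1, Ext.mk₀_smul, Ext.comp_smul, Ext.comp_mk₀_id, h3]

open Abelian in
lemma stepC [IsNoetherianRing R] (I : Ideal R) (x : R) (hx : x ∈ I) (M : Type) [AddCommGroup M]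
    [Module R M] (hfr : ∀ m : M, x • m = 0 → ∀ a ∈ I, a • m = 0) (i : ℕ)
    (h0 : SurjE I (ModuleCat.of R M) i) (h1 : SurjE I (ModuleCat.of R M) (i + 1)) :
    SurjE I (ModuleCat.of R (M ⧸ LinearMap.range (LinearMap.lsmul R M x))) i := by
  set μ := LinearMap.lsmul R M x with hμ
  let G := LinearMap.ker μ
  let N := LinearMap.range μ
  have hex1 : Function.Exact G.subtype μ.rangeRestrict := by
    intro y
    constructor
    · intro h
      exact ⟨⟨y, congrArg Subtype.val h⟩, rfl⟩
    · rintro ⟨y, rfl⟩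
      exact Subtype.ext y.2
  have hS1 : (scOf G.subtype μ.rangeRestrict hex1).ShortExact :=
    mkSES _ _ G.injective_subtype μ.surjective_rangeRestrict hex1
  have hex2 : Function.Exact N.subtype N.mkQ := LinearMap.exact_subtype_mkQ N
  have hS2 : (scOf N.subtype N.mkQ hex2).ShortExact :=
    mkSES _ _ N.injective_subtype N.mkQ_surjective hex2
  have hG : ∀ a ∈ I ^ 1, ∀ t : (ModuleCat.of R G), a • t = 0 := fun a ha t =>
    Subtype.ext (hfr t.1 t.2 a (by simpa using ha))
  intro k y
  let z := y.comp hS2.extClass (rfl : i + 1 = i + 1)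
  obtain ⟨l, hl, hz⟩ := van2 I (ModuleCat.of R G) 1 hG (i + 1) k (z.comp hS1.extClass rfl)
  rw [res_comp] at hz
  obtain ⟨w, hw⟩ := Ext.covariant_sequence_exact₃ _ hS1 (res I hl z) rfl hz
  obtain ⟨l1, hl1, hl1', e, he⟩ := h1 l w
  have hp : (e.comp (Ext.mk₀ (ModuleCat.ofHom μ.rangeRestrict)) (add_zero (i + 1))).comp
      (Ext.mk₀ (ModuleCat.ofHom N.subtype)) (add_zero (i + 1)) = 0 := by
    rw [Ext.comp_assoc (a₂₃ := 0) _ _ _ (by lia) (by lia) (by lia), Ext.mk₀_comp_mk₀]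
    exact comp_smul_zero I x hx M (i + 1) e
  obtain ⟨f, hf⟩ := Ext.covariant_sequence_exact₁ _ hS2 _ hp rfl
  have hd : (res I (hl.trans hl1) y - res I hl1' f).comp hS2.extClass (rfl : i + 1 = i + 1) = 0 := by
    rw [sub_eq_add_neg, Ext.add_comp, Ext.neg_comp, ← res_comp, ← res_comp, hf, ← res_res I hl hl1,
      res_comp I hl1' e, ← he, ← res_comp, ← sub_eq_add_neg, sub_eq_zero]
    exact congrArg (res I hl1) hw.symm
  obtain ⟨g, hg⟩ := Ext.covariant_sequence_exact₃ _ hS2 _ rfl hd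
  obtain ⟨l2, hl2, hl2', e', he'⟩ := h0 l1 g
  refine ⟨l2, (hl.trans hl1).trans hl2, hl2',
    f + e'.comp (Ext.mk₀ (ModuleCat.ofHom N.mkQ)) (add_zero i), ?_⟩
  rw [res_add, res_comp, ← he', ← res_comp]
  have := congrArg (res I hl2) hg
  rw [res_sub, res_res, res_res] at this
  refine Eq.trans ?_ (congrArg (fun t => res I hl2' f + t) this.symm)
  abel

lemma coset_avoid (S : Finset (Ideal R)) (hS : ∀ p ∈ S, p.IsPrime) (x : R) (J : Ideal R)
    (h : ∀ p ∈ S, x ∈ p → ¬ J ≤ p) : ∃ j ∈ J, ∀ p ∈ S, x + j ∉ p := by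
  classical
  induction S using Finset.strongInduction with
  | H S ih =>
    by_cases hne : S.Nonempty
    · obtain ⟨p, hp⟩ := S.exists_minimal hne
      obtain ⟨j, hj, hj'⟩ := ih (S.erase p) (Finset.erase_ssubset hp.1)
        (fun q hq => hS q (Finset.mem_of_mem_erase hq))
        (fun q hq => h q (Finset.mem_of_mem_erase hq))
      by_cases hxp : x + j ∈ p
      · have hpp := hS p hp.1
        have hJ : ¬ J ≤ p := fun hJ => h p hp.1 (by
          have := p.sub_mem hxp (hJ hj)
          simpa using this) hJ
        have h2 : ¬ (J ⊓ (S.erase p).inf id ≤ p) := by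
          rw [hpp.inf_le, hpp.inf_le']
          rintro (h3 | ⟨q, hq, hqp⟩)
          · exact hJ h3
          · have hq' := Finset.mem_erase.1 hq
            exact hq'.1 (le_antisymm hqp (hp.2 hq'.2 hqp))
        obtain ⟨j', hj1, hj2⟩ := SetLike.not_le_iff_exists.1 h2
        refine ⟨j + j', J.add_mem hj hj1.1, fun q hq hc => ?_⟩
        rw [← add_assoc] at hc
        by_cases hqp : q = p
        · subst hqp
          exact hj2 ((q.add_mem_iff_right hxp).1 hc)
        · have hq' := Finset.mem_erase.2 ⟨hqp, hq⟩
          have : j' ∈ q := (Finset.inf_le (f := id) hq') hj1.2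
          exact hj' q hq' ((q.add_mem_iff_left this).1 hc)
      · refine ⟨j, hj, fun q hq => ?_⟩
        by_cases hqp : q = p
        · subst hqp; exact hxp
        · exact hj' q (Finset.mem_erase.2 ⟨hqp, hq⟩)
    · rw [Finset.not_nonempty_iff_eq_empty] at hne
      subst hne
      exact ⟨0, J.zero_mem, by simp⟩

lemma pick [IsNoetherianRing R] (I : Ideal R) (M : Type) [AddCommGroup M] [Module R M]
    [Module.Finite R M] (x : R) (J : Ideal R)
    (h : I ≤ (Ideal.span {x} ⊔ J ⊔ Module.annihilator R M).radical) :
    ∃ j ∈ J, ∀ (t : ℕ) (m : M), (x + j) ^ t • m = 0 → ∃ k : ℕ, ∀ a ∈ I ^ k, a • m = 0 := by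
  classical
  let T : ℕ →o Submodule R M :=
    { toFun := fun k =>
        { carrier := {m | ∀ a ∈ I ^ k, a • m = 0}
          add_mem' := fun {m n} hm hn a ha => by rw [smul_add, hm a ha, hn a ha, add_zero]
          zero_mem' := fun a _ => smul_zero a
          smul_mem' := fun r m hm a ha => by rw [smul_comm, hm a ha, smul_zero] }
      monotone' := fun k l hkl m hm a ha => hm a (Ideal.pow_le_pow_right hkl ha) }
  obtain ⟨N, hN⟩ := monotone_stabilizes_iff_noetherian.2 (inferInstance : IsNoetherian R M) T
  have hT : ∀ m : M, (∀ a ∈ I, a • m ∈ T N) → m ∈ T N := by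
    intro m hm
    rw [hN (N + 1) (by lia)]
    intro a ha
    rw [pow_succ] at ha
    refine Submodule.mul_induction_on ha (fun b hb c hc => ?_) (fun b c hb hc => ?_)
    · rw [mul_smul]; exact hm c hc b hb
    · rw [add_smul, hb, hc, add_zero]
  have hfin := associatedPrimes.finite R (M ⧸ T N)
  obtain ⟨j, hj, hav⟩ := coset_avoid hfin.toFinset
    (fun p hp => ((Set.Finite.mem_toFinset _).1 hp).isPrime) x J (by
      intro p hp hx hJ
      have hp' := (Set.Finite.mem_toFinset _).1 hp
      have hpp : p.IsPrime := hp'.isPrime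
      obtain ⟨-, m, hm⟩ := (isAssociatedPrime_iff).1 hp'
      have hmem : ∀ a, a ∈ p ↔ a • m = 0 := fun a => by
        rw [hm, Submodule.mem_colon_singleton, Submodule.mem_bot]
      obtain ⟨m, rfl⟩ := (T N).mkQ_surjective m
      have hIp : I ≤ p := by
        refine h.trans (hpp.radical_le_iff.2 ?_)
        refine sup_le (sup_le ?_ hJ) ?_
        · rwa [Ideal.span_singleton_le_iff_mem]
        · intro a ha
          rw [hmem, ← map_smul, Module.mem_annihilator.1 ha, map_zero]
      have hmT : m ∈ T N := hT m fun a ha => by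
        have := (hmem a).1 (hIp ha)
        rwa [← map_smul, Submodule.mkQ_apply, Submodule.Quotient.mk_eq_zero] at this
      apply hpp.ne_top
      rw [Ideal.eq_top_iff_one, hmem, one_smul]
      simpa using hmT)
  have hreg : ∀ m : M, (x + j) • m ∈ T N → m ∈ T N := by
    intro m hm
    by_contra hmT
    have h1 : x + j ∈ ⋃ p ∈ associatedPrimes R (M ⧸ T N), (p : Set R) := by
      rw [biUnion_associatedPrimes_eq_zero_divisors]
      refine ⟨(T N).mkQ m, by simpa using hmT, ?_⟩
      rwa [← map_smul, Submodule.mkQ_apply, Submodule.Quotient.mk_eq_zero]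
    simp only [Set.mem_iUnion] at h1
    obtain ⟨p, hp, h2⟩ := h1
    exact hav p ((Set.Finite.mem_toFinset _).2 hp) h2
  refine ⟨j, hj, fun t m hm => ⟨N, ?_⟩⟩
  change m ∈ T N
  have hm' : (x + j) ^ t • m ∈ T N := by rw [hm]; exact Submodule.zero_mem _
  clear hm
  induction t with
  | zero => simpa using hm'
  | succ t ih =>
    rw [pow_succ', mul_smul] at hm'
    exact ih (hreg _ hm')

lemma le_ann_quot (y : R) (M : Type) [AddCommGroup M] [Module R M] :
    Ideal.span {y} ⊔ Module.annihilator R M ≤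
      Module.annihilator R (M ⧸ LinearMap.range (LinearMap.lsmul R M y)) := by
  refine sup_le ?_ fun a ha => ?_
  · rw [Ideal.span_singleton_le_iff_mem, Module.mem_annihilator]
    intro m
    obtain ⟨m, rfl⟩ := Submodule.mkQ_surjective _ m
    rw [← map_smul, Submodule.mkQ_apply, Submodule.Quotient.mk_eq_zero]
    exact ⟨m, rfl⟩
  · rw [Module.mem_annihilator]
    intro m
    obtain ⟨m, rfl⟩ := Submodule.mkQ_surjective _ m
    rw [← map_smul, Module.mem_annihilator.1 ha, map_zero]

lemma lemD [IsNoetherianRing R] (I : Ideal R) (hjac : I ≤ (⊥ : Ideal R).jacobson)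
    (x : R) (hx : x ∈ I) (l : List R) : ∀ (M : Type) [AddCommGroup M] [Module R M]
    [Module.Finite R M], (∀ y ∈ l, y ∈ I) →
    (∀ i, i < l.length + 1 → SurjE I (ModuleCat.of R M) i) →
    I ≤ (Ideal.span {x} ⊔ Ideal.span {y | y ∈ l} ⊔ Module.annihilator R M).radical →
    ∀ m : M, x • m = 0 → ∀ a ∈ I, a • m = 0 := by
  induction l with
  | nil =>
    intro M _ _ _ _ hs hI m hm
    obtain ⟨n, hn⟩ := Ideal.exists_pow_le_of_le_radical_of_fg hI (IsNoetherian.noetherian I)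
    refine surj0 I M (hs 0 (by simp)) m n fun a ha => ?_
    have h1 := hn ha
    have h2 : Ideal.span {x} ⊔ Ideal.span {y | y ∈ ([] : List R)} ⊔ Module.annihilator R M ≤
        LinearMap.ker (LinearMap.toSpanSingleton R M m) := by
      refine sup_le (sup_le ?_ ?_) ?_
      · rw [Ideal.span_singleton_le_iff_mem]
        simpa using hm
      · simp
      · intro b hb
        simpa using Module.mem_annihilator.1 hb m
    simpa using h2 h1
  | cons b l ih =>
    intro M _ _ _ hl hs hI m hm a ha
    have hset : {y | y ∈ b :: l} = insert b {y | y ∈ l} := by ext; simp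
    obtain ⟨j, hj, hreg⟩ := pick I M b (Ideal.span {x} ⊔ Ideal.span {y | y ∈ l}) (by
      refine hI.trans (Ideal.radical_mono (sup_le_sup_right ?_ _))
      rw [hset, Ideal.span_insert]
      exact (sup_left_comm _ _ _).le)
    have hJI : Ideal.span {x} ⊔ Ideal.span {y | y ∈ l} ≤ I := by
      refine sup_le ?_ ?_
      · rwa [Ideal.span_singleton_le_iff_mem]
      · rw [Ideal.span_le]
        intro y hy
        exact hl y (List.mem_cons_of_mem _ hy)
    have hyI : b + j ∈ I := I.add_mem (hl b (by simp)) (hJI hj)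
    have key : ∀ t : ℕ, a • m ∈ I ^ t • (⊤ : Submodule R M) := by
      intro t
      let u := (b + j) ^ (t + 1)
      have huI : u ∈ I := I.pow_mem_of_mem hyI _ (by lia)
      have hfr : ∀ m : M, u • m = 0 → ∀ a ∈ I, a • m = 0 := fun m hm => by
        obtain ⟨k, hk⟩ := hreg _ m hm
        exact surj0 I M (hs 0 (by simp)) m k hk
      let N := LinearMap.range (LinearMap.lsmul R M u)
      have h1 := ih (M ⧸ N) (fun y hy => hl y (List.mem_cons_of_mem _ hy))
        (fun i hi => stepC I u huI M hfr i (hs i (by simp at hi ⊢; lia))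
          (hs (i + 1) (by simpa using hi))) (by
          refine hI.trans ?_
          rw [Ideal.radical_le_radical_iff]
          have hann := le_ann_quot u M
          set A := Module.annihilator R (M ⧸ N)
          have huA : u ∈ A := hann (Ideal.mem_sup_left (Ideal.mem_span_singleton_self u))
          refine sup_le (sup_le ?_ ?_) ?_
          · exact (le_sup_left.trans le_sup_left).trans Ideal.le_radical
          · rw [hset, Ideal.span_insert]
            refine sup_le ?_ ((le_sup_right.trans le_sup_left).trans Ideal.le_radical)
            rw [Ideal.span_singleton_le_iff_mem]
            have e1 : b + j ∈ (Ideal.span {x} ⊔ Ideal.span {y | y ∈ l} ⊔ A).radical :=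
              ⟨t + 1, Ideal.mem_sup_right huA⟩
            have e2 : j ∈ (Ideal.span {x} ⊔ Ideal.span {y | y ∈ l} ⊔ A).radical :=
              Ideal.le_radical (Ideal.mem_sup_left hj)
            have := Ideal.sub_mem _ e1 e2
            simpa using this
          · exact ((le_sup_right.trans hann).trans le_sup_right).trans Ideal.le_radical)
        (N.mkQ m) (by rw [← map_smul, hm, map_zero]) a ha
      rw [← map_smul, Submodule.mkQ_apply, Submodule.Quotient.mk_eq_zero] at h1
      obtain ⟨m', hm'⟩ := h1
      rw [← hm']
      exact Submodule.smul_mem_smul (Ideal.pow_le_pow_right (Nat.le_succ t)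
        (Ideal.pow_mem_pow hyI (t + 1))) trivial
    have h2 : a • m ∈ (⨅ i : ℕ, I ^ i • ⊤ : Submodule R M) := by
      rw [Submodule.mem_iInf]
      exact key
    rw [Ideal.iInf_pow_smul_eq_bot_of_le_jacobson I hjac] at h2
    simpa using h2

lemma mem_pSpan_succ (M : Type) [AddCommGroup M] [Module R M] {c : ℕ} (x : Fin (c + 1) → R)
    (i : Fin c) (m : M) : m ∈ pSpan M x i.succ ↔
    (LinearMap.range (LinearMap.lsmul R M (x 0))).mkQ m ∈
      pSpan (M ⧸ LinearMap.range (LinearMap.lsmul R M (x 0))) (fun j : Fin c => x j.succ) i := by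
  set N := LinearMap.range (LinearMap.lsmul R M (x 0)) with hN
  have hset : x '' {j | j < i.succ} = insert (x 0) ((fun j : Fin c => x j.succ) '' {j | j < i}) := by
    ext r
    constructor
    · rintro ⟨j, hj, rfl⟩
      induction j using Fin.cases with
      | zero => exact Or.inl rfl
      | succ j => exact Or.inr ⟨j, Fin.succ_lt_succ_iff.1 hj, rfl⟩
    · rintro (rfl | ⟨j, hj, rfl⟩)
      · exact ⟨0, Fin.succ_pos i, rfl⟩
      · exact ⟨j.succ, Fin.succ_lt_succ_iff.2 hj, rfl⟩
  have hx : Ideal.span {x 0} • (⊤ : Submodule R M) = N := by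
    rw [Submodule.ideal_span_singleton_smul]
    ext m
    rw [Submodule.mem_smul_pointwise_iff_exists]
    constructor
    · rintro ⟨b, -, rfl⟩; exact ⟨b, rfl⟩
    · rintro ⟨b, rfl⟩; exact ⟨b, trivial, rfl⟩
  unfold pSpan
  rw [hset, Ideal.span_insert, Submodule.sup_smul, hx, ← Submodule.mem_comap]
  have : (Ideal.span ((fun j : Fin c => x j.succ) '' {j | j < i})) • (⊤ : Submodule R (M ⧸ N)) =
      ((Ideal.span ((fun j : Fin c => x j.succ) '' {j | j < i})) • (⊤ : Submodule R M)).map N.mkQ := by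
    rw [Submodule.map_smul'', Submodule.map_top, Submodule.range_mkQ]
  rw [this, Submodule.comap_map_mkQ]

lemma lemMain [IsNoetherianRing R] (I : Ideal R) (hjac : I ≤ (⊥ : Ideal R).jacobson)
    (c : ℕ) : ∀ (M : Type) [AddCommGroup M] [Module R M]
    [Module.Finite R M] (x : Fin c → R), (∀ j, x j ∈ I) →
    (∀ i, i < c → SurjE I (ModuleCat.of R M) i) →
    I ≤ (Ideal.span (Set.range x) ⊔ Module.annihilator R M).radical →
    IsWeakSeq I M x := by
  induction c with
  | zero => intro M _ _ _ x _ _ _ i; exact i.elim0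
  | succ c ih =>
    intro M _ _ _ x hx hs hI
    have hset : Set.range x = insert (x 0) (Set.range fun j : Fin c => x j.succ) := by
      ext r
      simp [Fin.exists_fin_succ, eq_comm]
    rw [hset, Ideal.span_insert] at hI
    have hD := lemD I hjac (x 0) (hx 0) (List.ofFn fun j : Fin c => x j.succ) M
      (fun y hy => by
        obtain ⟨j, rfl⟩ := (List.mem_ofFn' _ _).1 hy
        exact hx _)
      (fun i hi => hs i (by simpa using hi))
      (by
        have : {y | y ∈ List.ofFn fun j : Fin c => x j.succ} =
          Set.range fun j : Fin c => x j.succ := by ext y; exact List.mem_ofFn' _ _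
        rw [this]; exact hI)
    intro i
    induction i using Fin.cases with
    | zero =>
      intro m hm a ha
      have h0 : pSpan M x 0 = ⊥ := by
        unfold pSpan
        have : x '' {j | j < 0} = ∅ := by simp
        rw [this, Ideal.span_empty, Submodule.bot_smul]
      rw [h0, Submodule.mem_bot] at hm ⊢
      exact hD m hm a ha
    | succ i =>
      have h1 := ih (M ⧸ LinearMap.range (LinearMap.lsmul R M (x 0))) (fun j => x j.succ)
        (fun j => hx _)
        (fun i hi => stepC I (x 0) (hx 0) M hD i (hs i (by lia)) (hs (i + 1) (by lia)))
        (by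
          refine hI.trans (Ideal.radical_mono ?_)
          rw [sup_comm (Ideal.span {x 0}), sup_assoc]
          exact sup_le_sup_left (le_ann_quot (x 0) M) _) i
      intro m hm a ha
      rw [mem_pSpan_succ, map_smul] at hm ⊢
      exact h1 _ hm a ha

/-- **Corollary 4.3(ii).** If `I` is contained in the Jacobson radical of `R` and `M` is an
`I`-relative surjective Buchsbaum module with `cd(I,M) = ara(I,M)`, then `M` is `I`-relative
Buchsbaum. -/
theorem corollary_4_3_ii [IsNoetherianRing R] (I : Ideal R)
    (hjac : I ≤ (⊥ : Ideal R).jacobson)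
    (M : Type) [AddCommGroup M] [Module R M] [Module.Finite R M]
    (hsb : IsRelSurjBuchsbaum I M)
    (c : ℕ) (hc : IsCd I M c) (ha : IsAra I M c) :
    IsRelBuchsbaum I M := by
  refine ⟨c, hc, ha, fun x hx => ?_⟩
  refine lemMain I hjac c M x hx.1 (fun i hi => ?_) ?_
  · exact surjE_of_phi I i M (hsb i ⟨c, hi, hc.1⟩)
  · exact (le_sup_left.trans Ideal.le_radical).trans hx.2.ge
end
end

section
/- If M is an a-relative quasi Buchsbaum R-module, then M is an a-relative generalized Cohen-Macaulay R-module. -/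
/-!
Formalization of a statement from "A theory of relative generalized Cohen-Macaulay modules"
by Divaani-Aazar, Ghanbari Doust, Tousi and Zakeri.

Throughout, `R` is a commutative Noetherian ring and `M` a finitely generated `R`-module.
Conventions used below:
* `locH I i M` is the local cohomology module `H^i_I(M)` (Mathlib's `localCohomology`).
* Conditions `cd(I,M) = c`, `ara(I,M) = n`, `f_I(M) = f`, `grade(I,M) = r` are expressed by
  the predicates `IsCd`, `IsAra`, `IsFinDim`, `IsGrade`.
* Sequences are given as functions `Fin r → R`; `pSpan M x i = ⟨x_0,…,x_{i-1}⟩M`.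
* Koszul (co)homology is defined via the explicit (co)chain complex on the `p`-element
  subsets of `{0,…,n-1}`, and the canonical map `λ^i` into local cohomology is the structure
  map (at exponent 1) into the direct limit of Koszul cohomologies of powers of the sequence,
  which is the realization of `H^i_{⟨x⟩}(M)` used in the paper (2.1(iv)).
-/

open CategoryTheory

noncomputable section

variable {R : Type} [CommRing R]

namespace LC
open CategoryTheory Limits Opposite

/-- The functor `X ↦ op Hom(X, M)`. -/
abbrev FF (M : ModuleCat.{0} R) : ModuleCat.{0} R ⥤ (ModuleCat.{0} R)ᵒᵖ :=
  ((linearYoneda R (ModuleCat.{0} R)).obj M).rightOp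

/-- Contravariance in `M`. -/
abbrev FFmap {M N : ModuleCat.{0} R} (f : M ⟶ N) : FF N ⟶ FF M :=
  NatTrans.rightOp ((linearYoneda R (ModuleCat.{0} R)).map f)

/-- The complex `op Hom(P, M)`. -/
abbrev KK (P : ChainComplex (ModuleCat.{0} R) ℕ) (M : ModuleCat.{0} R) :
    ChainComplex (ModuleCat.{0} R)ᵒᵖ ℕ :=
  ((FF M).mapHomologicalComplex _).obj P

abbrev KKmap (P : ChainComplex (ModuleCat.{0} R) ℕ) {M N : ModuleCat.{0} R} (f : M ⟶ N) :
    KK P N ⟶ KK P M :=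
  (NatTrans.mapHomologicalComplex (FFmap f) _).app P

abbrev KKmapP {P Q : ChainComplex (ModuleCat.{0} R) ℕ} (φ : P ⟶ Q) (M : ModuleCat.{0} R) :
    KK P M ⟶ KK Q M :=
  ((FF M).mapHomologicalComplex _).map φ

lemma KK_nat {P Q : ChainComplex (ModuleCat.{0} R) ℕ} (φ : P ⟶ Q)
    {M N : ModuleCat.{0} R} (f : M ⟶ N) :
    KKmapP φ N ≫ KKmap Q f = KKmap P f ≫ KKmapP φ M :=
  (NatTrans.mapHomologicalComplex (FFmap f) _).naturality φ

lemma KKmap_comp (P : ChainComplex (ModuleCat.{0} R) ℕ) {M N L : ModuleCat.{0} R}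
    (f : M ⟶ N) (g : N ⟶ L) : KKmap P (f ≫ g) = KKmap P g ≫ KKmap P f := by
  ext i
  apply Quiver.Hom.unop_inj
  ext x
  rfl

lemma KKmap_zero (P : ChainComplex (ModuleCat.{0} R) ℕ) (M N : ModuleCat.{0} R) :
    KKmap P (0 : M ⟶ N) = 0 := by
  ext i
  apply Quiver.Hom.unop_inj
  ext (x : P.X i ⟶ M)
  exact (comp_zero : x ≫ (0 : M ⟶ N) = 0)

/-- short complex of complexes -/
def KS (P : ChainComplex (ModuleCat.{0} R) ℕ) (S : ShortComplex (ModuleCat.{0} R)) :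
    ShortComplex (ChainComplex (ModuleCat.{0} R)ᵒᵖ ℕ) :=
  ShortComplex.mk (KKmap P S.g) (KKmap P S.f) (by rw [← KKmap_comp, S.zero, KKmap_zero])

def KSmap {P Q : ChainComplex (ModuleCat.{0} R) ℕ} (φ : P ⟶ Q)
    (S : ShortComplex (ModuleCat.{0} R)) : KS P S ⟶ KS Q S where
  τ₁ := KKmapP φ S.X₃
  τ₂ := KKmapP φ S.X₂
  τ₃ := KKmapP φ S.X₁
  comm₁₂ := KK_nat φ S.g
  comm₂₃ := KK_nat φ S.f

lemma KS_shortExact (P : ChainComplex (ModuleCat.{0} R) ℕ) (hP : ∀ i, Projective (P.X i))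
    {S : ShortComplex (ModuleCat.{0} R)} (hS : S.ShortExact) : (KS P S).ShortExact := by
  apply HomologicalComplex.shortExact_of_degreewise_shortExact
  intro i
  have := hP i
  have := hS.mono_f
  have := hS.epi_g
  let S' : ShortComplex (ModuleCat.{0} R) :=
    ShortComplex.mk (((linearYoneda R (ModuleCat.{0} R)).map S.f).app (op (P.X i)))
      (((linearYoneda R (ModuleCat.{0} R)).map S.g).app (op (P.X i))) (by
        ext (x : P.X i ⟶ S.X₁)
        show (x ≫ S.f) ≫ S.g = 0
        rw [Category.assoc, S.zero, comp_zero])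
  have h : S'.ShortExact := by
    refine ShortComplex.ShortExact.mk' ?_ ?_ ?_
    · rw [ShortComplex.moduleCat_exact_iff]
      intro (x : P.X i ⟶ S.X₂) hx
      have hx' : x ≫ S.g = 0 := hx
      exact ⟨hS.exact.lift x hx', hS.exact.lift_f x hx'⟩
    · rw [ModuleCat.mono_iff_injective]
      intro (x : P.X i ⟶ S.X₁) (y : P.X i ⟶ S.X₁) hxy
      have : x ≫ S.f = y ≫ S.f := hxy
      exact (cancel_mono S.f).1 this
    · rw [ModuleCat.epi_iff_surjective]
      intro (x : P.X i ⟶ S.X₃)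
      exact ⟨Projective.factorThru x S.g, Projective.factorThru_comp x S.g⟩
  exact h.op

abbrev pr (X : ModuleCat.{0} R) : ProjectiveResolution X := projectiveResolution X

abbrev EE (n : ℕ) (X M : ModuleCat.{0} R) : ModuleCat.{0} R :=
  ((Ext R (ModuleCat.{0} R) n).obj (op X)).obj M

/-- iso of Ext with homology in the opposite category -/
def ei (n : ℕ) (X M : ModuleCat.{0} R) :
    EE n X M ≅ unop ((KK (pr X).complex M).homology n) :=
  ((pr X).isoLeftDerivedObj (FF M) n).unop.symm

lemma op_nat {D : Type*} [Category D] {A A' B B' : Dᵒᵖ} (a : A ≅ A') (b : B ≅ B')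
    (h : A' ⟶ B') (t : A ⟶ B) (ht : t = a.hom ≫ h ≫ b.inv) :
    t.unop ≫ a.unop.symm.hom = b.unop.symm.hom ≫ h.unop := by
  subst ht
  simp

lemma ei_natM (n : ℕ) (X : ModuleCat.{0} R) {M N : ModuleCat.{0} R} (f : M ⟶ N) :
    ((Ext R (ModuleCat.{0} R) n).obj (op X)).map f ≫ (ei n X N).hom =
      (ei n X M).hom ≫ (HomologicalComplex.homologyMap (KKmap (pr X).complex f) n).unop :=
  op_nat _ _ _ _ ((pr X).leftDerived_app_eq (FFmap f) n)

lemma ei_natX (n : ℕ) {X Y : ModuleCat.{0} R} (g : X ⟶ Y) (M : ModuleCat.{0} R) :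
    ((Ext R (ModuleCat.{0} R) n).map g.op).app M ≫ (ei n X M).hom =
      (ei n Y M).hom ≫ (HomologicalComplex.homologyMap
        (KKmapP (ProjectiveResolution.lift g (pr X) (pr Y)) M) n).unop :=
  op_nat _ _ _ _ (Functor.leftDerived_map_eq (FF M) n g (P := pr X) (Q := pr Y)
    (ProjectiveResolution.lift g (pr X) (pr Y)) (by simp))

/-- connecting map for complexes -/
def d0 (n : ℕ) (X : ModuleCat.{0} R) {S : ShortComplex (ModuleCat.{0} R)} (hS : S.ShortExact) :
    unop ((KK (pr X).complex S.X₃).homology n) ⟶ unop ((KK (pr X).complex S.X₁).homology (n + 1)) :=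
  ((KS_shortExact (pr X).complex (pr X).projective hS).δ (n+1) n rfl).unop

/-- connecting map in ModuleCat -/
def dd (n : ℕ) (X : ModuleCat.{0} R) {S : ShortComplex (ModuleCat.{0} R)} (hS : S.ShortExact) :
    EE n X S.X₃ ⟶ EE (n + 1) X S.X₁ :=
  (ei n X S.X₃).hom ≫ d0 n X hS ≫ (ei (n + 1) X S.X₁).inv

lemma dd_ei (n : ℕ) (X : ModuleCat.{0} R) {S : ShortComplex (ModuleCat.{0} R)}
    (hS : S.ShortExact) :
    dd n X hS ≫ (ei (n + 1) X S.X₁).hom = (ei n X S.X₃).hom ≫ d0 n X hS := by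
  simp [dd]

lemma d0_nat (n : ℕ) {X Y : ModuleCat.{0} R} (g : X ⟶ Y)
    {S : ShortComplex (ModuleCat.{0} R)} (hS : S.ShortExact) :
    (HomologicalComplex.homologyMap
        (KKmapP (ProjectiveResolution.lift g (pr X) (pr Y)) S.X₃) n).unop ≫ d0 n X hS =
    d0 n Y hS ≫ (HomologicalComplex.homologyMap
        (KKmapP (ProjectiveResolution.lift g (pr X) (pr Y)) S.X₁) (n+1)).unop :=
  congrArg Quiver.Hom.unop (HomologicalComplex.HomologySequence.δ_naturality
    (KSmap (ProjectiveResolution.lift g (pr X) (pr Y)) S)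
    (KS_shortExact (pr X).complex (pr X).projective hS)
    (KS_shortExact (pr Y).complex (pr Y).projective hS) (n+1) n rfl)

lemma dd_nat (n : ℕ) {X Y : ModuleCat.{0} R} (g : X ⟶ Y)
    {S : ShortComplex (ModuleCat.{0} R)} (hS : S.ShortExact) :
    dd n Y hS ≫ ((Ext R (ModuleCat.{0} R) (n + 1)).map g.op).app S.X₁ =
      ((Ext R (ModuleCat.{0} R) n).map g.op).app S.X₃ ≫ dd n X hS := by
  rw [← cancel_mono (ei (n+1) X S.X₁).hom, Category.assoc, Category.assoc, ei_natX, dd_ei,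
    ← Category.assoc, dd_ei, ← Category.assoc (_ : EE n Y S.X₃ ⟶ EE n X S.X₃), ei_natX,
    Category.assoc, Category.assoc, d0_nat]

lemma exact_of_iso {A B C A' B' C' : ModuleCat.{0} R} (f : A ⟶ B) (g : B ⟶ C)
    (f' : A' ⟶ B') (g' : B' ⟶ C') (a : A ≅ A') (b : B ≅ B') (c : C ≅ C')
    (h1 : f ≫ b.hom = a.hom ≫ f') (h2 : g ≫ c.hom = b.hom ≫ g')
    (h : Function.Exact f' g') : Function.Exact f g := by
  have e1 : ∀ x, b.hom (f x) = f' (a.hom x) := fun x => congrArg (fun t => t.hom x) h1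
  have e2 : ∀ x, c.hom (g x) = g' (b.hom x) := fun x => congrArg (fun t => t.hom x) h2
  have ia : ∀ x, a.hom (a.inv x) = x := fun x => by simp
  have ib : ∀ x y, b.hom x = b.hom y → x = y := fun x y h => by
    have := congrArg b.inv h; simpa using this
  have ic : ∀ x y, c.hom x = c.hom y → x = y := fun x y h => by
    have := congrArg c.inv h; simpa using this
  intro y
  constructor
  · intro hy
    have : g' (b.hom y) = 0 := by rw [← e2, hy, map_zero]
    obtain ⟨x, hx⟩ := (h _).1 this
    refine ⟨a.inv x, ib _ _ ?_⟩
    rw [e1, ia, hx]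
  · rintro ⟨x, rfl⟩
    apply ic
    rw [e2, e1, map_zero]
    exact (h _).2 ⟨_, rfl⟩

lemma ext_exact₂ (n : ℕ) (X : ModuleCat.{0} R) {S : ShortComplex (ModuleCat.{0} R)}
    (hS : S.ShortExact) :
    Function.Exact (((Ext R (ModuleCat.{0} R) n).obj (op X)).map S.f)
      (((Ext R (ModuleCat.{0} R) n).obj (op X)).map S.g) := by
  have h := ((KS_shortExact (pr X).complex (pr X).projective hS).homology_exact₂ n).unop
  rw [ShortComplex.ShortExact.moduleCat_exact_iff_function_exact] at h
  exact exact_of_iso _ _ _ _ (ei n X _) (ei n X _) (ei n X _) (ei_natM _ _ _) (ei_natM _ _ _) h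

lemma ext_exact₃ (n : ℕ) (X : ModuleCat.{0} R) {S : ShortComplex (ModuleCat.{0} R)}
    (hS : S.ShortExact) :
    Function.Exact (((Ext R (ModuleCat.{0} R) n).obj (op X)).map S.g) (dd n X hS) := by
  have h := ((KS_shortExact (pr X).complex (pr X).projective hS).homology_exact₁ (n+1) n rfl).unop
  rw [ShortComplex.ShortExact.moduleCat_exact_iff_function_exact] at h
  exact exact_of_iso _ _ _ _ (ei n X _) (ei n X _) (ei (n+1) X _) (ei_natM _ _ _) (dd_ei _ _ _) h

lemma ext_exact₁ (n : ℕ) (X : ModuleCat.{0} R) {S : ShortComplex (ModuleCat.{0} R)}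
    (hS : S.ShortExact) :
    Function.Exact (dd n X hS) (((Ext R (ModuleCat.{0} R) (n+1)).obj (op X)).map S.f) := by
  have h := ((KS_shortExact (pr X).complex (pr X).projective hS).homology_exact₃ (n+1) n rfl).unop
  rw [ShortComplex.ShortExact.moduleCat_exact_iff_function_exact] at h
  exact exact_of_iso _ _ _ _ (ei n X _) (ei (n+1) X _) (ei (n+1) X _) (dd_ei _ _ _) (ei_natM _ _ _) h

/-- scalar endomorphism of a module -/
abbrev sc (r : R) (M : ModuleCat.{0} R) : M ⟶ M := ModuleCat.ofHom (r • LinearMap.id)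

lemma sc_nat (r : R) {M N : ModuleCat.{0} R} (f : M ⟶ N) : sc r M ≫ f = f ≫ sc r N := by
  ext x
  simp

lemma sc_nat_op (r : R) {M N : (ModuleCat.{0} R)ᵒᵖ} (f : M ⟶ N) :
    (sc r M.unop).op ≫ f = f ≫ (sc r N.unop).op := by
  apply Quiver.Hom.unop_inj
  simp only [unop_comp, Quiver.Hom.unop_op]
  exact (sc_nat r f.unop).symm

lemma homologyMap_sc (K : ChainComplex (ModuleCat.{0} R)ᵒᵖ ℕ) (r : R) (φ : K ⟶ K)
    (hφ : ∀ i, φ.f i = (sc r (K.X i).unop).op) (n : ℕ) :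
    HomologicalComplex.homologyMap φ n = (sc r (K.homology n).unop).op := by
  have h1 : HomologicalComplex.cyclesMap φ n = (sc r (K.cycles n).unop).op := by
    rw [← cancel_mono (K.iCycles n), HomologicalComplex.cyclesMap_i, hφ, sc_nat_op]
  rw [← cancel_epi (K.homologyπ n), HomologicalComplex.homologyπ_naturality, h1, sc_nat_op]

lemma ext_sc (n : ℕ) (X M : ModuleCat.{0} R) (r : R) :
    ((Ext R (ModuleCat.{0} R) n).obj (op X)).map (sc r M) = sc r _ := by
  rw [← cancel_mono (ei n X M).hom, ei_natM, sc_nat, homologyMap_sc _ r]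
  · rfl
  · intro i
    apply Quiver.Hom.unop_inj
    ext (x : (pr X).complex.X i ⟶ M)
    show x ≫ sc r M = r • x
    ext y
    simp

lemma ext_injective (n : ℕ) (X E : ModuleCat.{0} R) [Injective E] :
    Subsingleton (EE (n+1) X E) := by
  rw [← ModuleCat.isZero_iff_subsingleton]
  refine IsZero.of_iso ?_ ((pr X).isoExt (R := R) (n + 1) E)
  rw [← HomologicalComplex.exactAt_iff_isZero_homology, HomologicalComplex.exactAt_iff' _ n (n+1) (n+2) (by simp) (by simp)]
  rw [ShortComplex.moduleCat_exact_iff]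
  intro (x : (pr X).complex.X (n+1) ⟶ E) hx
  have hx' : (pr X).complex.d (n+2) (n+1) ≫ x = 0 := hx
  have hex := (pr X).exact_succ n
  exact ⟨(hex.descToInjective x hx' : (pr X).complex.X n ⟶ E), hex.comp_descToInjective x hx'⟩

instance (M : ModuleCat.{0} R) : PreservesFiniteColimits (FF M) := by
  have : PreservesLimits ((linearYoneda R (ModuleCat.{0} R)).obj M ⋙ forget (ModuleCat.{0} R)) :=
    inferInstanceAs (PreservesLimits (yoneda.obj M))
  have : PreservesLimits ((linearYoneda R (ModuleCat.{0} R)).obj M) :=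
    preservesLimits_of_reflects_of_preserves _ (forget (ModuleCat.{0} R))
  have : PreservesFiniteLimits ((linearYoneda R (ModuleCat.{0} R)).obj M) := inferInstance
  exact preservesFiniteColimits_rightOp _

/-- `Ext^0 = Hom` -/
def e0 (X M : ModuleCat.{0} R) : ModuleCat.of R (X ⟶ M) ≅ EE 0 X M :=
  ((FF M).leftDerivedZeroIsoSelf.app X).unop

lemma e0_natX {X Y : ModuleCat.{0} R} (g : X ⟶ Y) (M : ModuleCat.{0} R) (f : Y ⟶ M) :
    ((Ext R (ModuleCat.{0} R) 0).map g.op).app M ((e0 Y M).hom f) =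
      (e0 X M).hom (g ≫ f) := by
  have := congrArg Quiver.Hom.unop ((FF M).fromLeftDerivedZero.naturality g)
  exact congrArg (fun t => ModuleCat.Hom.hom t f) this

lemma e0_natM (X : ModuleCat.{0} R) {M N : ModuleCat.{0} R} (g : M ⟶ N) (f : X ⟶ M) :
    ((Ext R (ModuleCat.{0} R) 0).obj (op X)).map g ((e0 X M).hom f) =
      (e0 X N).hom (f ≫ g) := by
  have : (NatTrans.leftDerived (FFmap g) 0).app X ≫ (FF M).fromLeftDerivedZero.app X =
      (FF N).fromLeftDerivedZero.app X ≫ (FFmap g).app X := by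
    rw [(pr X).leftDerived_app_eq, (pr X).fromLeftDerivedZero_eq, (pr X).fromLeftDerivedZero_eq]
    have h1 := HomologicalComplex.homologyι_naturality (KKmap (pr X).complex g) 0
    have h2 : HomologicalComplex.opcyclesMap (KKmap (pr X).complex g) 0 ≫
        (pr X).fromLeftDerivedZero' (FF M) =
        (pr X).fromLeftDerivedZero' (FF N) ≫ (FFmap g).app X := by
      rw [← cancel_epi (HomologicalComplex.pOpcycles _ _)]
      have h3 := (FFmap g).naturality ((pr X).π.f 0)
      have h4 := (pr X).pOpcycles_comp_fromLeftDerivedZero' (FF M)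
      have h5 := (pr X).pOpcycles_comp_fromLeftDerivedZero' (FF N)
      have h6 := HomologicalComplex.p_opcyclesMap (KKmap (pr X).complex g) 0
      rw [← Category.assoc, ← Category.assoc, h6, h5, Category.assoc, h4]
      exact h3.symm
    have key : ∀ {A B C D E A' B' C' : (ModuleCat.{0} R)ᵒᵖ} (a : A ≅ A') (b : B ≅ B') (h : A' ⟶ B')
      (u : B' ⟶ C) (v : C ⟶ D) (u' : A' ⟶ C') (w : C' ⟶ C) (v' : C' ⟶ E) (z : E ⟶ D)
      (h1 : h ≫ u = u' ≫ w) (h2 : w ≫ v = v' ≫ z),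
      (a.hom ≫ h ≫ b.inv) ≫ b.hom ≫ u ≫ v = (a.hom ≫ u' ≫ v') ≫ z := by
      intros A B C D E A' B' C' a b h u v u' w v' z h1 h2
      simp only [Category.assoc, Iso.inv_hom_id_assoc]
      rw [← Category.assoc h, h1, Category.assoc, h2]
    exact key _ _ _ _ _ _ _ _ _ h1 h2
  exact congrArg (fun t => t.unop.hom f) this

end LC
namespace LC
open CategoryTheory Limits Opposite

/-- The diagram defining local cohomology. -/
abbrev dg (I : Ideal R) (i : ℕ) : ℕᵒᵖᵒᵖ ⥤ ModuleCat.{0} R ⥤ ModuleCat.{0} R :=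
  localCohomology.diagram (localCohomology.idealPowersDiagram I) i

/-- the colimit cocone -/
def cc (I : Ideal R) (i : ℕ) : Cocone (dg I i) :=
  colimit.cocone (dg I i)

def ccEv (I : Ideal R) (i : ℕ) (M : ModuleCat.{0} R) :
    IsColimit (((evaluation _ _).obj M).mapCocone (cc I i)) :=
  isColimitOfPreserves _ (colimit.isColimit (dg I i))

/-- The diagram of the `R/I^n`. -/
abbrev XX (I : Ideal R) : ℕᵒᵖ ⥤ ModuleCat.{0} R :=
  localCohomology.ringModIdeals (localCohomology.idealPowersDiagram I)

/-- the structure maps -/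
def io (I : Ideal R) (i : ℕ) (j : ℕᵒᵖ) (M : ModuleCat.{0} R) :
    EE i ((XX I).obj j) M ⟶ (localCohomology I i).obj M :=
  ((cc I i).ι.app (op j)).app M

lemma io_rep (I : Ideal R) (i : ℕ) (M : ModuleCat.{0} R) (t : (localCohomology I i).obj M) :
    ∃ j y, io I i j M y = t := by
  obtain ⟨j, y, h⟩ := Concrete.isColimit_exists_rep _ (ccEv I i M) t
  exact ⟨j.unop, y, h⟩

lemma io_natM (I : Ideal R) (i : ℕ) (j : ℕᵒᵖ) {M N : ModuleCat.{0} R} (f : M ⟶ N)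
    (y : EE i ((XX I).obj j) M) :
    (localCohomology I i).map f (io I i j M y) =
      io I i j N (((Ext R (ModuleCat.{0} R) i).obj (op ((XX I).obj j))).map f y) :=
  (congrArg (fun t => ModuleCat.Hom.hom t y) (((cc I i).ι.app (op j)).naturality f)).symm

lemma io_natj (I : Ideal R) (i : ℕ) {j k : ℕᵒᵖ} (f : k ⟶ j) (M : ModuleCat.{0} R)
    (y : EE i ((XX I).obj j) M) :
    io I i k M (((Ext R (ModuleCat.{0} R) i).map ((XX I).map f).op).app M y) = io I i j M y :=
  congrArg (fun t => ModuleCat.Hom.hom (t.app M) y) ((cc I i).w f.op)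

lemma io_eq (I : Ideal R) (i : ℕ) {j k : ℕᵒᵖ} (M : ModuleCat.{0} R)
    (y : EE i ((XX I).obj j) M) (z : EE i ((XX I).obj k) M) (h : io I i j M y = io I i k M z) :
    ∃ l, ∃ f : l ⟶ j, ∃ g : l ⟶ k,
      ((Ext R (ModuleCat.{0} R) i).map ((XX I).map f).op).app M y =
        ((Ext R (ModuleCat.{0} R) i).map ((XX I).map g).op).app M z := by
  obtain ⟨l, f, g, h⟩ := Concrete.isColimit_exists_of_rep_eq _ (ccEv I i M) y z h
  exact ⟨l.unop, f.unop, g.unop, h⟩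

lemma io_zero (I : Ideal R) (i : ℕ) {j : ℕᵒᵖ} (M : ModuleCat.{0} R)
    (y : EE i ((XX I).obj j) M) (h : io I i j M y = 0) :
    ∃ l, ∃ f : l ⟶ j, ((Ext R (ModuleCat.{0} R) i).map ((XX I).map f).op).app M y = 0 := by
  obtain ⟨l, f, g, h⟩ := io_eq I i M y (0 : EE i ((XX I).obj j) M) (by rw [h, map_zero])
  exact ⟨l, f, by rw [h, map_zero]⟩

lemma natMj (i : ℕ) {X Y : ModuleCat.{0} R} (g : X ⟶ Y) {M N : ModuleCat.{0} R}
    (f : M ⟶ N) (y : EE i Y M) :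
    ((Ext R (ModuleCat.{0} R) i).map g.op).app N
      (((Ext R (ModuleCat.{0} R) i).obj (op Y)).map f y) =
    ((Ext R (ModuleCat.{0} R) i).obj (op X)).map f
      (((Ext R (ModuleCat.{0} R) i).map g.op).app M y) :=
  congrArg (fun t => ModuleCat.Hom.hom t y) (((Ext R (ModuleCat.{0} R) i).map g.op).naturality f)

lemma T_exact₂ (I : Ideal R) (i : ℕ) {S : ShortComplex (ModuleCat.{0} R)} (hS : S.ShortExact) :
    Function.Exact ((localCohomology I i).map S.f) ((localCohomology I i).map S.g) := by
  intro t
  obtain ⟨j, y, rfl⟩ := io_rep I i _ t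
  constructor
  · intro h
    rw [io_natM] at h
    obtain ⟨l, f, h⟩ := io_zero _ _ _ _ h
    rw [natMj] at h
    obtain ⟨z, hz⟩ := (ext_exact₂ i _ hS _).1 h
    refine ⟨io I i l _ z, ?_⟩
    rw [io_natM, hz, io_natj]
  · rintro ⟨s, hs⟩
    obtain ⟨k, z, rfl⟩ := io_rep I i _ s
    rw [← hs, io_natM, io_natM, (ext_exact₂ i _ hS _).2 ⟨_, rfl⟩, map_zero]

/-- connecting map -/
def TDcocone (I : Ideal R) (i : ℕ) {S : ShortComplex (ModuleCat.{0} R)} (hS : S.ShortExact) :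
    Cocone (dg I i ⋙ (evaluation _ _).obj S.X₃) where
  pt := (localCohomology I (i+1)).obj S.X₁
  ι := { app := fun j => dd i ((XX I).obj j.unop) hS ≫ io I (i+1) j.unop S.X₁
         naturality := by
          intro j k f
          have h := dd_nat i ((XX I).map f.unop) hS
          ext y
          have h' := congrArg (fun t => ModuleCat.Hom.hom t y) h
          have h2 := io_natj I (i+1) f.unop S.X₁ (dd i ((XX I).obj j.unop) hS y)
          refine Eq.trans ?_ h2
          exact congrArg (io I (i+1) k.unop S.X₁) h'.symm }

def TD (I : Ideal R) (i : ℕ) {S : ShortComplex (ModuleCat.{0} R)} (hS : S.ShortExact) :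
    (localCohomology I i).obj S.X₃ ⟶ (localCohomology I (i+1)).obj S.X₁ :=
  (ccEv I i S.X₃).desc (TDcocone I i hS)

lemma TD_io (I : Ideal R) (i : ℕ) {S : ShortComplex (ModuleCat.{0} R)} (hS : S.ShortExact)
    (j : ℕᵒᵖ) (y : EE i ((XX I).obj j) S.X₃) :
    TD I i hS (io I i j _ y) = io I (i+1) j _ (dd i ((XX I).obj j) hS y) :=
  congrArg (fun t => ModuleCat.Hom.hom t y) ((ccEv I i S.X₃).fac (TDcocone I i hS) (op j))

lemma dd_nat' (n : ℕ) {X Y : ModuleCat.{0} R} (g : X ⟶ Y)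
    {S : ShortComplex (ModuleCat.{0} R)} (hS : S.ShortExact) (y : EE n Y S.X₃) :
    ((Ext R (ModuleCat.{0} R) (n + 1)).map g.op).app S.X₁ (dd n Y hS y) =
      dd n X hS (((Ext R (ModuleCat.{0} R) n).map g.op).app S.X₃ y) :=
  congrArg (fun t => ModuleCat.Hom.hom t y) (dd_nat n g hS)

lemma T_exact₃ (I : Ideal R) (i : ℕ) {S : ShortComplex (ModuleCat.{0} R)} (hS : S.ShortExact) :
    Function.Exact ((localCohomology I i).map S.g) (TD I i hS) := by
  intro t
  obtain ⟨j, y, rfl⟩ := io_rep I i _ t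
  constructor
  · intro h
    rw [TD_io] at h
    obtain ⟨l, f, h⟩ := io_zero _ _ _ _ h
    rw [dd_nat'] at h
    obtain ⟨z, hz⟩ := (ext_exact₃ i _ hS _).1 h
    refine ⟨io I i l _ z, ?_⟩
    rw [io_natM, hz, io_natj]
  · rintro ⟨s, hs⟩
    obtain ⟨k, z, rfl⟩ := io_rep I i _ s
    rw [← hs, io_natM, TD_io, (ext_exact₃ i _ hS _).2 ⟨_, rfl⟩, map_zero]

lemma T_exact₁ (I : Ideal R) (i : ℕ) {S : ShortComplex (ModuleCat.{0} R)} (hS : S.ShortExact) :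
    Function.Exact (TD I i hS) ((localCohomology I (i+1)).map S.f) := by
  intro t
  obtain ⟨j, y, rfl⟩ := io_rep I _ _ t
  constructor
  · intro h
    rw [io_natM] at h
    obtain ⟨l, f, h⟩ := io_zero _ _ _ _ h
    rw [natMj] at h
    obtain ⟨z, hz⟩ := (ext_exact₁ i _ hS _).1 h
    refine ⟨io I i l _ z, ?_⟩
    rw [TD_io, hz, io_natj]
  · rintro ⟨s, hs⟩
    obtain ⟨k, z, rfl⟩ := io_rep I i _ s
    rw [← hs, TD_io, io_natM, (ext_exact₁ i _ hS _).2 ⟨_, rfl⟩, map_zero]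

lemma T_sc (I : Ideal R) (i : ℕ) (M : ModuleCat.{0} R) (r : R)
    (t : (localCohomology I i).obj M) : (localCohomology I i).map (sc r M) t = r • t := by
  obtain ⟨j, y, rfl⟩ := io_rep I _ _ t
  rw [io_natM, ext_sc, ← map_smul]
  rfl

lemma T_injective (I : Ideal R) (i : ℕ) (E : ModuleCat.{0} R) [Injective E] :
    Subsingleton ((localCohomology I (i+1)).obj E) := by
  refine subsingleton_of_forall_eq 0 fun t => ?_
  obtain ⟨j, y, rfl⟩ := io_rep I _ _ t
  have := ext_injective i ((XX I).obj j) E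
  rw [Subsingleton.elim y 0, map_zero]

/-- evaluation at one -/
def ev1 (I : Ideal R) (j : ℕᵒᵖ) (M : ModuleCat.{0} R) :
    ModuleCat.of R ((XX I).obj j ⟶ M) ⟶ M :=
  ModuleCat.ofHom
    { toFun := fun f => f.hom (Submodule.Quotient.mk (1 : R) : R ⧸ (I ^ j.unop))
      map_add' := fun _ _ => rfl
      map_smul' := fun _ _ => rfl }

lemma e0_natX' {X Y : ModuleCat.{0} R} (g : X ⟶ Y) (M : ModuleCat.{0} R) (y : EE 0 Y M) :
    (e0 X M).inv (((Ext R (ModuleCat.{0} R) 0).map g.op).app M y) = g ≫ (e0 Y M).inv y := by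
  obtain ⟨f, rfl⟩ : ∃ f, (e0 Y M).hom f = y := ⟨(e0 Y M).inv y, by simp⟩
  have h1 := congrArg (e0 X M).inv (e0_natX g M f)
  have h2 : ∀ (X : ModuleCat.{0} R) f, (e0 X M).inv ((e0 X M).hom f) = f := fun X f => by simp
  rw [h2] at h1 ⊢
  exact h1

def gaCocone (I : Ideal R) (M : ModuleCat.{0} R) :
    Cocone (dg I 0 ⋙ (evaluation _ _).obj M) where
  pt := M
  ι := { app := fun j => (e0 ((XX I).obj j.unop) M).inv ≫ ev1 I j.unop M
         naturality := by
          intro j k f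
          ext (y : EE 0 ((XX I).obj j.unop) M)
          have h2 := congrArg (ev1 I k.unop M) (e0_natX' ((XX I).map f.unop) M y)
          exact h2 }

/-- The map from `H^0` to `M`. -/
def ga (I : Ideal R) (M : ModuleCat.{0} R) : (localCohomology I 0).obj M ⟶ M :=
  (ccEv I 0 M).desc (gaCocone I M)

lemma ga_io (I : Ideal R) (M : ModuleCat.{0} R) (j : ℕᵒᵖ) (f : (XX I).obj j ⟶ M) :
    ga I M (io I 0 j M ((e0 _ M).hom f)) = ev1 I j M f := by
  have := congrArg (fun t => ModuleCat.Hom.hom t ((e0 _ M).hom f))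
    ((ccEv I 0 M).fac (gaCocone I M) (op j))
  refine Eq.trans this ?_
  show ev1 I j M ((e0 _ M).inv ((e0 _ M).hom f)) = _
  congr 1
  simp

lemma ga_rep (I : Ideal R) (M : ModuleCat.{0} R) (t : (localCohomology I 0).obj M) :
    ∃ j, ∃ f : (XX I).obj j ⟶ M, io I 0 j M ((e0 _ M).hom f) = t := by
  obtain ⟨j, y, rfl⟩ := io_rep I _ _ t
  exact ⟨j, (e0 _ M).inv y, by simp⟩

lemma ga_nat (I : Ideal R) {M N : ModuleCat.{0} R} (g : M ⟶ N)
    (t : (localCohomology I 0).obj M) :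
    ga I N ((localCohomology I 0).map g t) = g (ga I M t) := by
  obtain ⟨j, f, rfl⟩ := ga_rep I M t
  rw [io_natM, e0_natM, ga_io, ga_io]
  rfl

lemma ga_inj (I : Ideal R) (M : ModuleCat.{0} R) : Function.Injective (ga I M) := by
  rw [injective_iff_map_eq_zero]
  intro t ht
  obtain ⟨j, f, rfl⟩ := ga_rep I M t
  rw [ga_io] at ht
  have : f = 0 := by
    ext (x : R ⧸ (I ^ j.unop))
    obtain ⟨r, rfl⟩ := Submodule.Quotient.mk_surjective _ x
    have h3 : (Submodule.Quotient.mk r : R ⧸ (I ^ j.unop)) = r • Submodule.Quotient.mk 1 := by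
      rw [← Submodule.Quotient.mk_smul, smul_eq_mul, mul_one]
    have h4 : f.hom (Submodule.Quotient.mk (1 : R) : R ⧸ (I ^ j.unop)) = 0 := ht
    rw [h3]
    refine (f.hom.map_smul r _).trans ?_
    erw [h4]
    exact smul_zero r
  subst this
  rw [show (e0 ((XX I).obj j) M).hom 0 = 0 from map_zero _, map_zero]

lemma ga_tors (I : Ideal R) (M : ModuleCat.{0} R) (t : (localCohomology I 0).obj M) :
    ∃ n : ℕ, ∀ a ∈ I ^ n, a • ga I M t = 0 := by
  obtain ⟨j, f, rfl⟩ := ga_rep I M t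
  refine ⟨j.unop, fun a ha => ?_⟩
  rw [ga_io]
  refine (f.hom.map_smul a (Submodule.Quotient.mk (1 : R) : R ⧸ (I ^ j.unop))).symm.trans ?_
  have : a • (Submodule.Quotient.mk (1 : R) : R ⧸ (I ^ j.unop)) = 0 := by
    rw [← Submodule.Quotient.mk_smul, smul_eq_mul, mul_one, Submodule.Quotient.mk_eq_zero]
    exact ha
  exact (congrArg f.hom this).trans (map_zero f.hom)

lemma ga_range (I : Ideal R) (M : ModuleCat.{0} R) (m : M) (n : ℕ)
    (h : ∀ a ∈ I ^ n, a • m = 0) : ∃ t, ga I M t = m := by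
  have hle : I ^ n ≤ LinearMap.ker (LinearMap.toSpanSingleton R M m) :=
    fun a ha => LinearMap.mem_ker.2
      ((LinearMap.toSpanSingleton_apply R M m a).trans (h a ha))
  let g : (R ⧸ I ^ n) →ₗ[R] M :=
    Submodule.liftQ (I ^ n) (LinearMap.toSpanSingleton R M m) hle
  let f : (XX I).obj (op n) ⟶ M := ModuleCat.ofHom g
  refine ⟨io I 0 (op n) M ((e0 _ M).hom f), ?_⟩
  rw [ga_io]
  exact (Submodule.liftQ_apply (I ^ n) (LinearMap.toSpanSingleton R M m) (h := hle) (1 : R)).trans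
    ((LinearMap.toSpanSingleton_apply R M m 1).trans (one_smul R m))

end LC
namespace LC
open CategoryTheory Limits Opposite

/-- `I`-torsion modules. -/
def Tor (I : Ideal R) (N : Type) [AddCommGroup N] [Module R N] : Prop :=
  ∀ m : N, ∃ n : ℕ, ∀ a ∈ I ^ n, a • m = 0

/-- induced maps -/
def Hm (I : Ideal R) (i : ℕ) {M N : Type} [AddCommGroup M] [Module R M] [AddCommGroup N]
    [Module R N] (f : M →ₗ[R] N) : locH I i M →ₗ[R] locH I i N :=
  ((localCohomology I i).map (ModuleCat.ofHom f)).hom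

lemma Hm_comp (I : Ideal R) (i : ℕ) {M N L : Type} [AddCommGroup M] [Module R M] [AddCommGroup N]
    [Module R N] [AddCommGroup L] [Module R L] (f : M →ₗ[R] N) (g : N →ₗ[R] L) (t : locH I i M) :
    Hm I i g (Hm I i f t) = Hm I i (g ∘ₗ f) t := by
  have := (localCohomology I i).map_comp (ModuleCat.ofHom f) (ModuleCat.ofHom g)
  exact (congrArg (fun s => ModuleCat.Hom.hom s t) this).symm

lemma Hm_smul (I : Ideal R) (i : ℕ) {M : Type} [AddCommGroup M] [Module R M] (r : R)
    (t : locH I i M) : Hm I i (r • (LinearMap.id : M →ₗ[R] M)) t = r • t :=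
  T_sc I i (ModuleCat.of R M) r t

lemma LES (I : Ideal R) (i : ℕ) {A B C : Type} [AddCommGroup A] [Module R A] [AddCommGroup B]
    [Module R B] [AddCommGroup C] [Module R C] (f : A →ₗ[R] B) (g : B →ₗ[R] C)
    (hf : Function.Injective f) (hg : Function.Surjective g) (h : Function.Exact f g) :
    (∀ i, Function.Exact (Hm I i f) (Hm I i g)) ∧
    ∃ δ : locH I i C →ₗ[R] locH I (i+1) A, Function.Exact (Hm I i g) δ ∧
      Function.Exact δ (Hm I (i+1) f) := by
  let S : ShortComplex (ModuleCat.{0} R) := ShortComplex.mk (ModuleCat.ofHom f) (ModuleCat.ofHom g)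
    (by ext x; exact h.apply_apply_eq_zero x)
  have hS : S.ShortExact := ShortComplex.ShortExact.mk'
    ((ShortComplex.ShortExact.moduleCat_exact_iff_function_exact S).2 h)
    ((ModuleCat.mono_iff_injective S.f).2 hf) ((ModuleCat.epi_iff_surjective S.g).2 hg)
  exact ⟨fun i => T_exact₂ I i hS, (TD I i hS).hom, T_exact₃ I i hS, T_exact₁ I i hS⟩

/-- embedding in an injective module -/
lemma exists_inj (M : Type) [AddCommGroup M] [Module R M] :
    ∃ (E : ModuleCat.{0} R) (f : M →ₗ[R] E), Injective E ∧ Function.Injective f := by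
  refine ⟨Injective.under (ModuleCat.of R M), (Injective.ι (ModuleCat.of R M)).hom,
    inferInstance, ?_⟩
  exact (ModuleCat.mono_iff_injective (Injective.ι (ModuleCat.of R M))).1 inferInstance

lemma H_tors (I : Ideal R) (i : ℕ) : ∀ (M : Type) [AddCommGroup M] [Module R M],
    Tor I (locH I i M) := by
  induction i with
  | zero =>
    intro M _ _ t
    obtain ⟨n, hn⟩ := ga_tors I (ModuleCat.of R M) t
    refine ⟨n, fun a ha => ga_inj I _ ?_⟩
    rw [map_smul, hn a ha, map_zero]
  | succ i ih =>
    intro M _ _ t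
    obtain ⟨E, f, hE, hf⟩ := exists_inj (R := R) M
    obtain ⟨-, δ, -, h⟩ := LES I i f (LinearMap.range f).mkQ hf
      (Submodule.mkQ_surjective _) (LinearMap.exact_map_mkQ_range f)
    have : Subsingleton (locH I (i+1) E) := T_injective I i E
    obtain ⟨s, rfl⟩ := (h t).1 (Subsingleton.elim _ _)
    obtain ⟨n, hn⟩ := ih _ s
    exact ⟨n, fun a ha => by rw [← map_smul, hn a ha, map_zero]⟩

lemma tors_unif (I : Ideal R) (L : Type) [AddCommGroup L] [Module R L] [Module.Finite R L]
    (h : Tor I L) : ∃ n : ℕ, ∀ a ∈ I ^ n, ∀ x : L, a • x = 0 := by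
  obtain ⟨s, hs⟩ := Module.Finite.fg_top (R := R) (M := L)
  choose n hn using h
  refine ⟨s.sup n, fun a ha x => ?_⟩
  have hx : x ∈ Submodule.span R (s : Set L) := by rw [hs]; trivial
  induction hx using Submodule.span_induction with
  | mem x hx => exact hn x a (Ideal.pow_le_pow_right (Finset.le_sup (f := n) hx) ha)
  | zero => exact smul_zero a
  | add x y _ _ hx hy => rw [smul_add, hx, hy, add_zero]
  | smul r x _ hx => rw [smul_comm, hx, smul_zero]

/-- The torsion submodule. -/
def Ga (I : Ideal R) (E : Type) [AddCommGroup E] [Module R E] : Submodule R E where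
  carrier := {m | ∃ n : ℕ, ∀ a ∈ I ^ n, a • m = 0}
  zero_mem' := ⟨0, fun a _ => smul_zero a⟩
  add_mem' := by
    rintro x y ⟨n, hn⟩ ⟨k, hk⟩
    refine ⟨max n k, fun a ha => ?_⟩
    rw [smul_add, hn a (Ideal.pow_le_pow_right (le_max_left _ _) ha),
      hk a (Ideal.pow_le_pow_right (le_max_right _ _) ha), add_zero]
  smul_mem' := by
    rintro r x ⟨n, hn⟩
    exact ⟨n, fun a ha => by rw [smul_comm, hn a ha, smul_zero]⟩

lemma Ga_tors (I : Ideal R) (E : Type) [AddCommGroup E] [Module R E] : Tor I (Ga I E) := by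
  rintro ⟨x, n, hn⟩
  exact ⟨n, fun a ha => Subtype.ext (hn a ha)⟩

lemma Ga_inj [IsNoetherianRing R] (I : Ideal R) (E : Type) [AddCommGroup E] [Module R E]
    (hE : Module.Injective R E) : Module.Injective R (Ga I E) := by
  apply Module.Baer.injective
  intro J g
  have hr : Tor I (LinearMap.range g) := by
    rintro ⟨x, hx⟩
    obtain ⟨n, hn⟩ := Ga_tors I E x
    exact ⟨n, fun a ha => Subtype.ext (hn a ha)⟩
  obtain ⟨n, hn⟩ := tors_unif I _ hr
  obtain ⟨k, hk⟩ := Ideal.exists_pow_inf_eq_pow_smul I (J : Submodule R R)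
  have hk' := hk (n + k) (Nat.le_add_left _ _)
  rw [Nat.add_sub_cancel] at hk'
  have hker : ∀ x : J, (x : R) ∈ I ^ (n + k) → g x = 0 := by
    intro x hx
    have h1 : (x : R) ∈ I ^ (n + k) • (⊤ : Submodule R R) ⊓ J := ⟨by simpa using hx, x.2⟩
    rw [hk'] at h1
    have h2 : (x : R) ∈ I ^ n • (J : Submodule R R) :=
      Submodule.smul_mono le_rfl inf_le_right h1
    have h3 : I ^ n • (J : Submodule R R) ≤ Submodule.map J.subtype (LinearMap.ker g) := by
      rw [Submodule.smul_le]
      intro a ha y hy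
      refine ⟨a • ⟨y, hy⟩, ?_, rfl⟩
      have := hn a ha ⟨g ⟨y, hy⟩, ⟨_, rfl⟩⟩
      have := congrArg Subtype.val this
      rw [SetLike.mem_coe, LinearMap.mem_ker, map_smul]
      exact this
    obtain ⟨y, hy, hxy⟩ := h3 h2
    have : y = x := Subtype.ext hxy
    rw [← this]
    exact hy
  let q : J →ₗ[R] R ⧸ I ^ (n + k) := (Submodule.mkQ (I ^ (n + k))) ∘ₗ Submodule.subtype J
  let f : (J ⧸ LinearMap.ker q) →ₗ[R] R ⧸ I ^ (n + k) := (LinearMap.ker q).liftQ q le_rfl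
  have hf : Function.Injective f := by
    rw [← LinearMap.ker_eq_bot]
    exact Submodule.ker_liftQ_eq_bot _ _ _ le_rfl
  let g' : (J ⧸ LinearMap.ker q) →ₗ[R] E := (LinearMap.ker q).liftQ ((Ga I E).subtype ∘ₗ g) (by
    intro x hx
    have : (x : R) ∈ I ^ (n + k) := (Submodule.Quotient.mk_eq_zero _).1 hx
    simp [hker x this])
  obtain ⟨h, hh⟩ := hE.out f hf g'
  have hmem : ∀ r : R, h (Submodule.Quotient.mk r) ∈ Ga I E := by
    intro r
    refine ⟨n + k, fun a ha => ?_⟩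
    rw [← map_smul, ← Submodule.Quotient.mk_smul,
      (Submodule.Quotient.mk_eq_zero _).2 (show a • r ∈ I ^ (n + k) from Ideal.mul_mem_right r _ ha), map_zero]
  refine ⟨LinearMap.codRestrict (Ga I E) (h ∘ₗ Submodule.mkQ (I ^ (n + k))) hmem, ?_⟩
  intro x hx
  apply Subtype.ext
  exact hh (Submodule.Quotient.mk ⟨x, hx⟩)

lemma H_vanish [IsNoetherianRing R] (I : Ideal R) (i : ℕ) :
    ∀ (N : Type) [AddCommGroup N] [Module R N], Tor I N → Subsingleton (locH I (i+1) N) := by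
  induction i with
  | zero =>
    intro N _ _ hN
    obtain ⟨E, f, hE, hf⟩ := exists_inj (R := R) N
    obtain ⟨-, δ, h3, h1⟩ := LES I 0 f (LinearMap.range f).mkQ hf
      (Submodule.mkQ_surjective _) (LinearMap.exact_map_mkQ_range f)
    have : Subsingleton (locH I 1 E) := T_injective I 0 E
    refine subsingleton_of_forall_eq 0 fun t => ?_
    obtain ⟨s, rfl⟩ := (h1 t).1 (Subsingleton.elim _ _)
    apply (h3 s).2
    obtain ⟨e, he⟩ := Submodule.mkQ_surjective _ (ga I _ s)
    obtain ⟨n, hn⟩ := ga_tors I _ s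
    -- `I ^ n • e ⊆ N`, hence `e` is torsion
    have hfin : Tor I (LinearMap.range f) := by
      rintro ⟨_, x, rfl⟩
      obtain ⟨k, hk⟩ := hN x
      exact ⟨k, fun a ha => Subtype.ext (by simp [← map_smul, hk a ha])⟩
    have hmem : ∀ a ∈ I ^ n, a • e ∈ LinearMap.range f := by
      intro a ha
      rw [← Submodule.Quotient.mk_eq_zero]
      have h4 := hn a ha
      rw [← he] at h4
      exact h4
    let L : Submodule R E := (I ^ n) • Submodule.span R {e}
    have hL : L ≤ LinearMap.range f := by
      refine Submodule.smul_le.2 fun a ha y hy => ?_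
      obtain ⟨r, rfl⟩ := Submodule.mem_span_singleton.1 hy
      rw [smul_comm]
      exact Submodule.smul_mem _ r (hmem a ha)
    have hLt : Tor I L := by
      rintro ⟨x, hx⟩
      obtain ⟨k, hk⟩ := hfin ⟨x, hL hx⟩
      refine ⟨k, fun a ha => Subtype.ext ?_⟩
      have h5 := congrArg (fun u : LinearMap.range f => (u : E)) (hk a ha)
      exact h5
    have : Module.Finite R L := Module.Finite.iff_fg.2
      (Submodule.FG.smul (IsNoetherian.noetherian _) (Submodule.fg_span_singleton e))
    obtain ⟨k, hk⟩ := tors_unif I L hLt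
    have he0 : ∀ a ∈ I ^ (k + n), a • e = 0 := by
      intro a ha
      rw [pow_add] at ha
      induction ha using Submodule.mul_induction_on' with
      | mem_mul_mem a ha b hb =>
        have := hk a ha ⟨b • e, Submodule.smul_mem_smul hb (Submodule.mem_span_singleton_self e)⟩
        rw [mul_smul]
        exact congrArg Subtype.val this
      | add x _ y _ hx hy => rw [add_smul, hx, hy, add_zero]
    obtain ⟨u, hu⟩ := ga_range I E e _ he0
    refine ⟨u, ga_inj I _ ?_⟩
    refine (ga_nat I (ModuleCat.ofHom (LinearMap.range f).mkQ) u).trans ?_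
    rw [hu]
    exact he
  | succ i ih =>
    intro N _ _ hN
    obtain ⟨E, f, hE, hf⟩ := exists_inj (R := R) N
    have hE' : Module.Injective R E := (Module.injective_iff_injective_object R E).2 hE
    have hG := Ga_inj I E hE'
    let f' : N →ₗ[R] Ga I E := f.codRestrict _ (by
      intro x
      obtain ⟨n, hn⟩ := hN x
      exact ⟨n, fun a ha => by rw [← map_smul, hn a ha, map_zero]⟩)
    have hf' : Function.Injective f' := fun x y hxy => hf (congrArg Subtype.val hxy)
    obtain ⟨-, δ, -, h1⟩ := LES I (i+1) f' (LinearMap.range f').mkQ hf'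
      (Submodule.mkQ_surjective _) (LinearMap.exact_map_mkQ_range f')
    have : Injective (ModuleCat.of R (Ga I E)) := (Module.injective_iff_injective_object R _).1 hG
    have : Subsingleton (locH I (i+1+1) (Ga I E)) := T_injective I (i+1) (ModuleCat.of R (Ga I E))
    have hQ : Tor I (Ga I E ⧸ LinearMap.range f') := by
      intro x
      obtain ⟨x, rfl⟩ := Submodule.Quotient.mk_surjective _ x
      obtain ⟨n, hn⟩ := Ga_tors I E x
      exact ⟨n, fun a ha => by rw [← Submodule.Quotient.mk_smul, hn a ha]; rfl⟩
    have := ih _ hQ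
    refine subsingleton_of_forall_eq 0 fun t => ?_
    obtain ⟨s, rfl⟩ := (h1 t).1 (Subsingleton.elim _ _)
    rw [Subsingleton.elim s 0, map_zero]

/-- multiplication by `z` -/
abbrev mu (M : Type) [AddCommGroup M] [Module R M] (z : R) : M →ₗ[R] M :=
  z • (LinearMap.id : M →ₗ[R] M)

lemma step [IsNoetherianRing R] (I : Ideal R) (M : Type) [AddCommGroup M] [Module R M] (z : R)
    (hz : ∀ m : M, z • m = 0 → ∀ a ∈ I, a • m = 0) (i : ℕ) :
    (∃ δ : locH I i (M ⧸ LinearMap.range (mu M z)) →ₗ[R] locH I (i+1) M,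
      ∀ t, z • t = 0 ↔ ∃ s, δ s = t) ∧
    (Subsingleton (locH I (i+1) (M ⧸ LinearMap.range (mu M z))) →
      ∀ t : locH I (i+1) M, ∃ s, z • s = t) := by
  have hK : Tor I (LinearMap.ker (mu M z)) := by
    rintro ⟨m, hm⟩
    refine ⟨1, fun a ha => Subtype.ext (hz m (by simpa using hm) a (by simpa using ha))⟩
  have hK1 := H_vanish I i _ hK
  have hK2 := H_vanish I (i+1) _ hK
  let p : M →ₗ[R] LinearMap.range (mu M z) := (mu M z).rangeRestrict
  let ι : LinearMap.range (mu M z) →ₗ[R] M := (LinearMap.range (mu M z)).subtype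
  have hpι : ∀ t : locH I (i+1) M, Hm I (i+1) ι (Hm I (i+1) p t) = z • t := by
    intro t
    rw [Hm_comp, ← Hm_smul]
    rfl
  obtain ⟨e2, δ1, e3, -⟩ := LES I (i+1) (LinearMap.ker (mu M z)).subtype p
    (Submodule.injective_subtype _) (LinearMap.surjective_rangeRestrict _) (by
      intro x
      constructor
      · intro hx
        exact ⟨⟨x, congrArg Subtype.val hx⟩, rfl⟩
      · rintro ⟨y, rfl⟩
        exact Subtype.ext y.2)
  have hinj : Function.Injective (Hm I (i+1) p) := by
    rw [injective_iff_map_eq_zero]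
    intro t ht
    obtain ⟨s, rfl⟩ := (e2 (i+1) t).1 ht
    rw [Subsingleton.elim s 0, map_zero]
  have hsurj : Function.Surjective (Hm I (i+1) p) := by
    intro t
    exact (e3 t).1 (Subsingleton.elim _ _)
  obtain ⟨e2', δ2, -, e1'⟩ := LES I i ι (LinearMap.range (mu M z)).mkQ
    (Submodule.injective_subtype _) (Submodule.mkQ_surjective _) (by
      intro x
      rw [Submodule.mkQ_apply, Submodule.Quotient.mk_eq_zero]
      constructor
      · intro hx; exact ⟨⟨x, hx⟩, rfl⟩
      · rintro ⟨y, rfl⟩; exact y.2)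
  let e := LinearEquiv.ofBijective (Hm I (i+1) p) ⟨hinj, hsurj⟩
  constructor
  · refine ⟨e.symm.toLinearMap ∘ₗ δ2, fun t => ?_⟩
    rw [← hpι, e1' _]
    constructor
    · rintro ⟨s, hs⟩
      refine ⟨s, ?_⟩
      show e.symm (δ2 s) = t
      rw [hs]
      exact e.symm_apply_apply t
    · rintro ⟨s, rfl⟩
      exact ⟨s, (e.apply_symm_apply (δ2 s)).symm⟩
  · intro hs t
    obtain ⟨u, rfl⟩ := (e2' (i+1) t).1 (Subsingleton.elim _ _)
    obtain ⟨v, rfl⟩ := hsurj u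
    exact ⟨v, (hpι v).symm⟩

end LC
namespace LC

lemma mem_pSpan_quot (M : Type) [AddCommGroup M] [Module R M] {r : ℕ} (x : Fin (r+1) → R)
    (z : R) (hz : x 0 = z) (i : Fin r) (m : M) :
    (Submodule.Quotient.mk m : M ⧸ LinearMap.range (mu M z)) ∈
      pSpan (M ⧸ LinearMap.range (mu M z)) (fun j => x j.succ) i ↔ m ∈ pSpan M x i.succ := by
  subst hz
  have hset : x '' {j | j < i.succ} = insert (x 0) ((fun j => x j.succ) '' {j | j < i}) := by
    ext a
    constructor
    · rintro ⟨j, hj, rfl⟩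
      induction j using Fin.cases with
      | zero => exact Or.inl rfl
      | succ j => exact Or.inr ⟨j, Fin.succ_lt_succ_iff.1 hj, rfl⟩
    · rintro (rfl | ⟨j, hj, rfl⟩)
      · exact ⟨0, Fin.succ_pos i, rfl⟩
      · exact ⟨j.succ, Fin.succ_lt_succ_iff.2 hj, rfl⟩
  have hr : LinearMap.range (mu M (x 0)) = Ideal.span {x 0} • (⊤ : Submodule R M) := by
    ext u
    rw [Submodule.ideal_span_singleton_smul, Submodule.mem_smul_pointwise_iff_exists]
    constructor
    · rintro ⟨v, rfl⟩; exact ⟨v, trivial, rfl⟩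
    · rintro ⟨v, -, rfl⟩; exact ⟨v, rfl⟩
  have hQ : pSpan (M ⧸ LinearMap.range (mu M (x 0))) (fun j => x j.succ) i =
      Submodule.map (LinearMap.range (mu M (x 0))).mkQ
        (Ideal.span ((fun j => x j.succ) '' {j | j < i}) • (⊤ : Submodule R M)) := by
    rw [Submodule.map_smul'', Submodule.map_top, Submodule.range_mkQ]
    rfl
  rw [hQ, ← Submodule.mkQ_apply, ← Submodule.mem_comap, Submodule.comap_map_eq,
    Submodule.ker_mkQ, pSpan, hset, Ideal.span_insert, Submodule.sup_smul, hr, sup_comm]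

lemma weak_quot (I : Ideal R) (M : Type) [AddCommGroup M] [Module R M] {r : ℕ}
    (x : Fin (r+1) → R) (z : R) (hz : x 0 = z) (h : IsWeakSeq I M x) :
    IsWeakSeq I (M ⧸ LinearMap.range (mu M z)) (fun j => x j.succ) := by
  intro i m
  obtain ⟨m, rfl⟩ := Submodule.Quotient.mk_surjective _ m
  intro hm a ha
  rw [← Submodule.Quotient.mk_smul, mem_pSpan_quot M x z hz] at hm ⊢
  exact h i.succ m hm a ha

/-- All positive powers form a weak sequence. -/
def PW (I : Ideal R) (M : Type) [AddCommGroup M] [Module R M] {r : ℕ} (x : Fin r → R) : Prop :=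
  ∀ α : Fin r → ℕ, (∀ k, 0 < α k) → IsWeakSeq I M fun k => x k ^ α k

lemma PW_quot (I : Ideal R) (M : Type) [AddCommGroup M] [Module R M] {r : ℕ}
    (x : Fin (r+1) → R) (h : PW I M x) (n : ℕ) (hn : 0 < n) :
    PW I (M ⧸ LinearMap.range (mu M (x 0 ^ n))) (fun j => x j.succ) := by
  intro β hβ
  have hα : ∀ k, 0 < (Fin.cons n β : Fin (r+1) → ℕ) k := by
    intro k
    induction k using Fin.cases with
    | zero => rw [Fin.cons_zero]; exact hn
    | succ k => rw [Fin.cons_succ]; exact hβ k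
  have h1 := weak_quot I M (fun k => x k ^ (Fin.cons n β : Fin (r+1) → ℕ) k) (x 0 ^ n)
    (by simp only [Fin.cons_zero]) (h _ hα)
  simp only [Fin.cons_succ] at h1
  exact h1

lemma PW_zero (I : Ideal R) (M : Type) [AddCommGroup M] [Module R M] {r : ℕ}
    (x : Fin (r+1) → R) (h : PW I M x) (n : ℕ) (hn : 0 < n) :
    ∀ m : M, x 0 ^ n • m = 0 → ∀ a ∈ I, a • m = 0 := by
  intro m hm a ha
  have h1 := h (fun _ => n) (fun _ => hn) 0 m
  have h2 : pSpan M (fun k => x k ^ n) (0 : Fin (r+1)) = ⊥ := by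
    have : {j : Fin (r+1) | j < 0} = ∅ := by
      ext j; simp
    rw [pSpan, this, Set.image_empty, Ideal.span_empty, Submodule.bot_smul]
  simp only [h2, Submodule.mem_bot] at h1
  exact h1 hm a ha

lemma lemP [IsNoetherianRing R] (I : Ideal R) (r : ℕ) : ∀ (M : Type) [AddCommGroup M] [Module R M]
    [Module.Finite R M] (x : Fin r → R), (∀ k, x k ∈ I) → PW I M x →
    ∀ i, i < r → Module.Finite R (locH I i M) ∧ ∀ a ∈ I, ∀ t : locH I i M, a • t = 0 := by
  induction r with
  | zero => intro M _ _ _ x _ _ i hi; omega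
  | succ r ih =>
    intro M _ _ _ x hx h i hi
    have htor : ∀ t : locH I i M, ∃ n : ℕ, 0 < n ∧ x 0 ^ n • t = 0 := by
      intro t
      obtain ⟨n, hn⟩ := H_tors I i M t
      exact ⟨n + 1, n.succ_pos, hn _ (Ideal.pow_le_pow_right n.le_succ
        (Ideal.pow_mem_pow (hx 0) _))⟩
    cases i with
    | zero =>
      constructor
      · exact Module.Finite.of_injective (ga I (ModuleCat.of R M)).hom (ga_inj I _)
      · intro a ha t
        obtain ⟨n, hn, hnt⟩ := htor t
        apply ga_inj I _
        rw [map_smul, map_zero]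
        refine PW_zero I M x h n hn _ ?_ a ha
        refine (map_smul (ga I (ModuleCat.of R M)).hom (x 0 ^ n) t).symm.trans ?_
        rw [hnt, map_zero]
    | succ i =>
      have key : ∀ a ∈ I, ∀ t : locH I (i+1) M, a • t = 0 := by
        intro a ha t
        obtain ⟨n, hn, hnt⟩ := htor t
        obtain ⟨δ, hδ⟩ := (step I M (x 0 ^ n) (PW_zero I M x h n hn) i).1
        obtain ⟨s, rfl⟩ := (hδ t).1 hnt
        have := (ih (M ⧸ LinearMap.range (mu M (x 0 ^ n))) (fun j => x j.succ)
          (fun k => hx _) (PW_quot I M x h n hn) i (by omega)).2 a ha s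
        rw [← map_smul, this, map_zero]
      refine ⟨?_, key⟩
      obtain ⟨δ, hδ⟩ := (step I M (x 0 ^ 1) (PW_zero I M x h 1 one_pos) i).1
      have := (ih (M ⧸ LinearMap.range (mu M (x 0 ^ 1))) (fun j => x j.succ)
          (fun k => hx _) (PW_quot I M x h 1 one_pos) i (by omega)).1
      refine Module.Finite.of_surjective δ fun t => (hδ t).1 ?_
      rw [pow_one]
      exact key _ (hx 0) t

lemma rad_quot (I : Ideal R) (M : Type) [AddCommGroup M] [Module R M] {r : ℕ}
    (x : Fin (r+1) → R)
    (hI : I ≤ (Ideal.span (Set.range x) + Module.annihilator R M).radical) :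
    I ≤ (Ideal.span (Set.range fun j : Fin r => x j.succ) +
      Module.annihilator R (M ⧸ LinearMap.range (mu M (x 0 ^ 1)))).radical := by
  refine hI.trans (Ideal.radical_mono ?_)
  have hann : ∀ b, (∀ m : M, b • m ∈ LinearMap.range (mu M (x 0 ^ 1))) →
      b ∈ Module.annihilator R (M ⧸ LinearMap.range (mu M (x 0 ^ 1))) := by
    intro b hb
    rw [Module.mem_annihilator]
    intro m
    obtain ⟨m, rfl⟩ := Submodule.Quotient.mk_surjective _ m
    rw [← Submodule.Quotient.mk_smul, Submodule.Quotient.mk_eq_zero]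
    exact hb m
  refine sup_le (Ideal.span_le.2 ?_) ?_
  · rintro _ ⟨j, rfl⟩
    induction j using Fin.cases with
    | zero =>
      refine Ideal.mem_sup_right (hann _ fun m => ⟨m, ?_⟩)
      simp
    | succ j => exact Ideal.mem_sup_left (Ideal.subset_span ⟨j, rfl⟩)
  · intro b hb
    refine Ideal.mem_sup_right (hann _ fun m => ?_)
    rw [Module.mem_annihilator.1 hb m]
    exact Submodule.zero_mem _

lemma lemQ [IsNoetherianRing R] (I : Ideal R) (r : ℕ) : ∀ (M : Type) [AddCommGroup M] [Module R M]
    (x : Fin r → R), (∀ k, x k ∈ I) → PW I M x →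
    I ≤ (Ideal.span (Set.range x) + Module.annihilator R M).radical →
    ∀ i, r < i → Subsingleton (locH I i M) := by
  induction r with
  | zero =>
    intro M _ _ x _ _ hI i hi
    obtain ⟨k, rfl⟩ : ∃ k, i = k + 1 := ⟨i - 1, by omega⟩
    apply H_vanish I k M
    rw [Set.range_eq_empty, Ideal.span_empty, Submodule.add_eq_sup, bot_sup_eq] at hI
    obtain ⟨n, hn⟩ := Ideal.exists_pow_le_of_le_radical_of_fg hI (IsNoetherian.noetherian I)
    exact fun m => ⟨n, fun a ha => Module.mem_annihilator.1 (hn ha) m⟩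
  | succ r ih =>
    intro M _ _ x hx h hI i hi
    obtain ⟨k, rfl⟩ : ∃ k, i = k + 1 := ⟨i - 1, by omega⟩
    have hsub := ih (M ⧸ LinearMap.range (mu M (x 0 ^ 1))) (fun j => x j.succ) (fun k => hx _)
      (PW_quot I M x h 1 one_pos) (rad_quot I M x hI) k (by omega)
    obtain ⟨δ, hδ⟩ := (step I M (x 0 ^ 1) (PW_zero I M x h 1 one_pos) k).1
    have hz : ∀ t : locH I (k+1) M, x 0 • t = 0 → t = 0 := by
      intro t ht
      obtain ⟨s, rfl⟩ := (hδ t).1 (by rw [pow_one]; exact ht)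
      rw [Subsingleton.elim s 0, map_zero]
    refine subsingleton_of_forall_eq 0 fun t => ?_
    obtain ⟨n, hn⟩ := H_tors I (k+1) M t
    have hnt := hn _ (Ideal.pow_mem_pow (hx 0) n)
    clear hn
    induction n with
    | zero => simpa using hnt
    | succ n ihn =>
      apply ihn
      apply hz
      rw [← mul_smul, ← pow_succ']
      exact hnt

lemma not_fg [IsNoetherianRing R] (I : Ideal R) (r : ℕ) (M : Type) [AddCommGroup M] [Module R M]
    (x : Fin (r+1) → R) (hx : ∀ k, x k ∈ I) (h : PW I M x)
    (hI : I ≤ (Ideal.span (Set.range x) + Module.annihilator R M).radical)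
    (hnt : Nontrivial (locH I (r+1) M)) : ¬ Module.Finite R (locH I (r+1) M) := by
  intro hfin
  have hsub := lemQ I r (M ⧸ LinearMap.range (mu M (x 0 ^ 1))) (fun j => x j.succ) (fun k => hx _)
      (PW_quot I M x h 1 one_pos) (rad_quot I M x hI) (r+1) (by omega)
  have hs := (step I M (x 0 ^ 1) (PW_zero I M x h 1 one_pos) r).2 hsub
  obtain ⟨n, hn⟩ := tors_unif I _ (H_tors I (r+1) M)
  have hs' : ∀ k : ℕ, ∀ t : locH I (r+1) M, ∃ s, x 0 ^ k • s = t := by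
    intro k
    induction k with
    | zero => intro t; exact ⟨t, by simp⟩
    | succ k ihk =>
      intro t
      obtain ⟨s, rfl⟩ := ihk t
      obtain ⟨u, rfl⟩ := hs s
      exact ⟨u, by rw [← mul_smul, pow_one, pow_succ]⟩
  have : Subsingleton (locH I (r+1) M) := by
    refine subsingleton_of_forall_eq 0 fun t => ?_
    obtain ⟨s, rfl⟩ := hs' n t
    exact hn _ (Ideal.pow_mem_pow (hx 0) n) s
  exact not_subsingleton _ this

lemma rsop (I : Ideal R) (M : Type) [AddCommGroup M] [Module R M] {c : ℕ} (x : Fin c → R)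
    (hx : (Ideal.span (Set.range x) + Module.annihilator R M).radical
      = (I + Module.annihilator R M).radical) :
    ∃ y : Fin c → R, ∀ α : Fin c → ℕ, (∀ k, 0 < α k) →
      IsRsop I M (fun k => y k ^ α k) ∧ ∀ k, y k ^ α k ∈ I ^ 2 := by
  have h1 : ∀ k, ∃ n : ℕ, x k ^ n ∈ I + Module.annihilator R M := by
    intro k
    have : x k ∈ (I + Module.annihilator R M).radical := by
      rw [← hx]
      exact Ideal.le_radical (Ideal.mem_sup_left (Ideal.subset_span ⟨k, rfl⟩))
    exact this
  choose n hn using h1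
  have h2 : ∀ k, ∃ a ∈ I, ∃ b ∈ Module.annihilator R M, a + b = x k ^ n k :=
    fun k => Submodule.mem_sup.1 (hn k)
  choose a ha b hb hab using h2
  refine ⟨fun k => a k ^ 2, fun α hα => ?_⟩
  have hmem : ∀ k, (a k ^ 2) ^ α k ∈ I ^ 2 := fun k =>
    Ideal.pow_mem_of_mem _ (Ideal.pow_mem_pow (ha k) 2) _ (hα k)
  have hle : I ^ 2 ≤ I := Ideal.pow_le_self two_ne_zero
  refine ⟨⟨fun k => hle (hmem k), le_antisymm ?_ ?_⟩, hmem⟩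
  · refine Ideal.radical_mono (sup_le_sup_right (Ideal.span_le.2 ?_) _)
    rintro _ ⟨k, rfl⟩
    exact hle (hmem k)
  · rw [← hx, Ideal.radical_le_radical_iff]
    refine sup_le (Ideal.span_le.2 ?_) (le_sup_right.trans Ideal.le_radical)
    rintro _ ⟨k, rfl⟩
    set J := Ideal.span (Set.range fun k => (a k ^ 2) ^ α k) + Module.annihilator R M with hJ
    have h3 : a k ∈ J.radical := by
      refine ⟨2 * α k, ?_⟩
      rw [pow_mul]
      exact Ideal.mem_sup_left (Ideal.subset_span ⟨k, rfl⟩)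
    have h4 : b k ∈ J.radical := Ideal.le_radical (Ideal.mem_sup_right (hb k))
    have h5 : x k ^ n k ∈ J.radical := by
      rw [← hab]
      exact Ideal.add_mem _ h3 h4
    exact (Ideal.radical_isRadical J) ⟨_, h5⟩

end LC

/-- **Corollary 4.3(iv).** Any `I`-relative quasi Buchsbaum module is `I`-relative
generalized Cohen-Macaulay. -/
theorem corollary_4_3_iv [IsNoetherianRing R] (I : Ideal R)
    (M : Type) [AddCommGroup M] [Module R M] [Module.Finite R M]
    (hqb : IsRelQuasiBuchsbaum I M) :
    IsRelGCM I M := by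
  obtain ⟨c, hcd, ⟨⟨x, hx⟩, -⟩, hw⟩ := hqb
  cases c with
  | zero => exact Or.inl hcd.2
  | succ r =>
    obtain ⟨y, hy⟩ := LC.rsop I M x hx
    have hpw : LC.PW I M y := fun α hα => hw _ (hy α hα).1 (hy α hα).2
    have h1 := (hy (fun _ => 1) (fun _ => one_pos)).1
    simp only [pow_one] at h1
    have hI : I ≤ (Ideal.span (Set.range y) + Module.annihilator R M).radical := by
      have h2 := h1.2
      rw [h2]
      exact le_sup_left.trans Ideal.le_radical
    exact Or.inr ⟨r + 1, hcd, fun i hi => (LC.lemP I (r+1) M y h1.1 hpw i hi).1,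
      LC.not_fg I r M y h1.1 hpw hI hcd.1⟩
end
end

section
/- Let (R,m) be a Buchsbaum Noetherian local ring and let a be an ideal of R which is generated by a part x_1,...,x_n of a system of parameters of R. Then R is an a-relative Buchsbaum R-module; in particular cd(a,R) = n = ara(a,R). -/
/-!
Formalization of a statement from "A theory of relative generalized Cohen-Macaulay modules"
by Divaani-Aazar, Ghanbari Doust, Tousi and Zakeri.

Throughout, `R` is a commutative Noetherian ring and `M` a finitely generated `R`-module.
Conventions used below:
* `locH I i M` is the local cohomology module `H^i_I(M)` (Mathlib's `localCohomology`).
* Conditions `cd(I,M) = c`, `ara(I,M) = n`, `f_I(M) = f`, `grade(I,M) = r` are expressed by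
  the predicates `IsCd`, `IsAra`, `IsFinDim`, `IsGrade`.
* Sequences are given as functions `Fin r → R`; `pSpan M x i = ⟨x_0,…,x_{i-1}⟩M`.
* Koszul (co)homology is defined via the explicit (co)chain complex on the `p`-element
  subsets of `{0,…,n-1}`, and the canonical map `λ^i` into local cohomology is the structure
  map (at exponent 1) into the direct limit of Koszul cohomologies of powers of the sequence,
  which is the realization of `H^i_{⟨x⟩}(M)` used in the paper (2.1(iv)).
-/

open CategoryTheory

noncomputable section

variable {R : Type} [CommRing R]

section Helpers

open Limits Opposite


def ClsRel (K : ChainComplex (ModuleCat.{0} R)ᵒᵖ ℕ) (n : ℕ) (e : (unop (K.homology n) : ModuleCat.{0} R))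
    (f : (unop (K.X n) : ModuleCat.{0} R)) : Prop :=
  ∃ z : (unop (K.opcycles n) : ModuleCat.{0} R), (K.homologyι n).unop z = e ∧ (K.pOpcycles n).unop z = f

lemma ClsRel.of_eq {K : ChainComplex (ModuleCat.{0} R)ᵒᵖ ℕ} {n : ℕ}
    {e e' : (unop (K.homology n) : ModuleCat.{0} R)} {f : (unop (K.X n) : ModuleCat.{0} R)}
    (h : ClsRel K n e f) (he : e' = e) : ClsRel K n e' f := he ▸ h

lemma ClsRel.exists_left (K : ChainComplex (ModuleCat.{0} R)ᵒᵖ ℕ) (n : ℕ)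
    (e : (unop (K.homology n) : ModuleCat.{0} R)) :
    ∃ f, ClsRel K n e f ∧ (K.d (n+1) n).unop f = 0 := by
  have h : Function.Surjective (K.homologyι n).unop :=
    (ModuleCat.epi_iff_surjective _).1 inferInstance
  obtain ⟨z, rfl⟩ := h e
  refine ⟨_, ⟨z, rfl, rfl⟩, ?_⟩
  have := K.d_pOpcycles (n+1) n
  have h2 : (K.pOpcycles n).unop ≫ (K.d (n+1) n).unop = 0 := by
    rw [← unop_comp, this, unop_zero]
  have := congrArg (fun t => t.hom z) h2
  exact this

lemma ClsRel.exists_right (K : ChainComplex (ModuleCat.{0} R)ᵒᵖ ℕ) (n : ℕ)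
    (f : (unop (K.X n) : ModuleCat.{0} R)) (hf : (K.d (n+1) n).unop f = 0) :
    ∃ e, ClsRel K n e f := by
  have h1 := (ShortComplex.exact_of_g_is_cokernel
    (ShortComplex.mk _ _ (K.d_pOpcycles (n+1) n)) (K.opcyclesIsCokernel (n+1) n (by simp))).unop
  rw [ShortComplex.moduleCat_exact_iff] at h1
  obtain ⟨z, hz⟩ := h1 f hf
  exact ⟨_, z, rfl, hz⟩

lemma ClsRel.eq_zero_iff {K : ChainComplex (ModuleCat.{0} R)ᵒᵖ ℕ} {n m : ℕ}
    (hm : (ComplexShape.down ℕ).next n = m)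
    {e : (unop (K.homology n) : ModuleCat.{0} R)} {f : (unop (K.X n) : ModuleCat.{0} R)} (h : ClsRel K n e f) :
    e = 0 ↔ ∃ g, (K.d n m).unop g = f := by
  obtain ⟨z, rfl, rfl⟩ := h
  have h1 := (ShortComplex.exact_of_f_is_kernel
    (ShortComplex.mk _ _ (K.homologyι_comp_fromOpcycles n m)) (K.homologyIsKernel n m hm)).unop
  rw [ShortComplex.moduleCat_exact_iff] at h1
  have h2 : (K.d n m).unop = (K.fromOpcycles n m).unop ≫ (K.pOpcycles n).unop := by
    rw [← unop_comp, K.p_fromOpcycles]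
  have h3 : Function.Injective (K.pOpcycles n).unop :=
    (ModuleCat.mono_iff_injective _).1 inferInstance
  have h4 : (K.fromOpcycles n m).unop ≫ (K.homologyι n).unop = 0 := by
    rw [← unop_comp, K.homologyι_comp_fromOpcycles, unop_zero]
  constructor
  · intro hz
    obtain ⟨g, hg⟩ := h1 z hz
    refine ⟨g, ?_⟩
    rw [h2, ← hg]; rfl
  · rintro ⟨g, hg⟩
    rw [h2] at hg
    have := h3 hg
    rw [← this]
    exact congrArg (fun t => t.hom g) h4

lemma ClsRel.map {K L : ChainComplex (ModuleCat.{0} R)ᵒᵖ ℕ} (φ : K ⟶ L) {n : ℕ}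
    {e : (unop (L.homology n) : ModuleCat.{0} R)} {f : (unop (L.X n) : ModuleCat.{0} R)} (h : ClsRel L n e f) :
    ClsRel K n ((HomologicalComplex.homologyMap φ n).unop e) ((φ.f n).unop f) := by
  obtain ⟨z, rfl, rfl⟩ := h
  refine ⟨(HomologicalComplex.opcyclesMap φ n).unop z, ?_, ?_⟩
  · have := congrArg Quiver.Hom.unop (HomologicalComplex.homologyι_naturality φ n)
    rw [unop_comp, unop_comp] at this
    exact (congrArg (fun t => t.hom z) this).symm
  · have := congrArg Quiver.Hom.unop (HomologicalComplex.p_opcyclesMap φ n)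
    rw [unop_comp, unop_comp] at this
    exact congrArg (fun t => t.hom z) this

abbrev oldF (Y : ModuleCat.{0} R) : ModuleCat.{0} R ⥤ (ModuleCat.{0} R)ᵒᵖ :=
  ((linearYoneda R (ModuleCat.{0} R)).obj Y).rightOp

abbrev oldK (Y : ModuleCat.{0} R) {X : ModuleCat.{0} R} (P : ProjectiveResolution X) :
    ChainComplex (ModuleCat.{0} R)ᵒᵖ ℕ :=
  ((oldF Y).mapHomologicalComplex (ComplexShape.down ℕ)).obj P.complex

abbrev OldExt (X Y : ModuleCat.{0} R) (n : ℕ) : ModuleCat.{0} R :=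
  ((Ext R (ModuleCat.{0} R) n).obj (op X)).obj Y

abbrev OldExt.map {X X' : ModuleCat.{0} R} (g : X ⟶ X') (Y : ModuleCat.{0} R) (n : ℕ) :
    OldExt X' Y n ⟶ OldExt X Y n :=
  ((Ext R (ModuleCat.{0} R) n).map g.op).app Y

/-- Comparison relation between the two versions of Ext. -/
def ExtRel {X Y : ModuleCat.{0} R} {n : ℕ} (e : OldExt X Y n) (α : Abelian.Ext X Y n) : Prop :=
  ∃ (f : (projectiveResolution X).complex.X n ⟶ Y)
    (hf : (projectiveResolution X).complex.d (n+1) n ≫ f = 0),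
    ClsRel (oldK Y (projectiveResolution X)) n
      (((projectiveResolution X).isoLeftDerivedObj (oldF Y) n).inv.unop e) f ∧
    α = (projectiveResolution X).extMk f (n+1) rfl hf

lemma ExtRel.exists_left {X Y : ModuleCat.{0} R} {n : ℕ} (e : OldExt X Y n) :
    ∃ α, ExtRel e α := by
  obtain ⟨f, h1, h2⟩ := ClsRel.exists_left (oldK Y (projectiveResolution X)) n
    (((projectiveResolution X).isoLeftDerivedObj (oldF Y) n).inv.unop e)
  exact ⟨_, f, h2, h1, rfl⟩

lemma ExtRel.exists_right {X Y : ModuleCat.{0} R} {n : ℕ} (α : Abelian.Ext X Y n) :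
    ∃ e : OldExt X Y n, ExtRel e α := by
  obtain ⟨f, hf, rfl⟩ := (projectiveResolution X).extMk_surjective α (n+1) rfl
  obtain ⟨e, he⟩ := ClsRel.exists_right (oldK Y (projectiveResolution X)) n f hf
  refine ⟨((projectiveResolution X).isoLeftDerivedObj (oldF Y) n).hom.unop e, f, hf, ?_, rfl⟩
  refine he.of_eq ?_
  have : ((projectiveResolution X).isoLeftDerivedObj (oldF Y) n).hom.unop ≫
    ((projectiveResolution X).isoLeftDerivedObj (oldF Y) n).inv.unop = 𝟙 _ := by
    rw [← unop_comp, Iso.inv_hom_id, unop_id]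
  exact congrArg (fun t => t.hom e) this

lemma extMk_eq_zero_iff_next {X Y : ModuleCat.{0} R} (P : ProjectiveResolution X) {n m : ℕ}
    (hm : (ComplexShape.down ℕ).next n = m) (f : P.complex.X n ⟶ Y)
    (hf : P.complex.d (n+1) n ≫ f = 0) :
    P.extMk f (n+1) rfl hf = 0 ↔ ∃ g, P.complex.d n m ≫ g = f := by
  rcases n with _ | n
  · obtain rfl : m = 0 := by rw [← hm]; simp
    simp only [← P.extEquivCohomologyClass.apply_eq_iff_eq,
      ProjectiveResolution.extEquivCohomologyClass_extMk,
      ProjectiveResolution.extEquivCohomologyClass_zero,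
      CochainComplex.HomComplex.CohomologyClass.mk_eq_zero_iff]
    rw [CochainComplex.HomComplex.Cocycle.toSingleMk_mem_coboundaries_iff _ _ _ _ _ 1 (by simp)]
    have hz : IsZero (P.cochainComplex.X 1) :=
      CochainComplex.isZero_of_isStrictlyLE P.cochainComplex 0 1 (by simp)
    have hd : P.complex.d 0 0 = 0 := P.complex.shape _ _ (by simp)
    constructor
    · rintro ⟨g, hg⟩
      rw [hz.eq_of_src g 0, comp_zero] at hg
      refine ⟨0, ?_⟩
      rw [← cancel_epi (P.cochainComplexXIso (-(0:ℕ)) 0 rfl).hom, comp_zero, comp_zero]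
      exact hg
    · rintro ⟨g, hg⟩
      refine ⟨0, ?_⟩
      rw [← hg, hd]; simp
  · obtain rfl : m = n := by rw [← hm]; simp
    exact P.extMk_eq_zero_iff f _ rfl hf m rfl

lemma ExtRel.eq_zero_iff {X Y : ModuleCat.{0} R} {n : ℕ} {e : OldExt X Y n}
    {α : Abelian.Ext X Y n} (h : ExtRel e α) : e = 0 ↔ α = 0 := by
  obtain ⟨f, hf, h1, rfl⟩ := h
  rw [extMk_eq_zero_iff_next _ rfl]
  have := h1.eq_zero_iff rfl
  refine Iff.trans ?_ this
  have hinj : Function.Injective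
      ((projectiveResolution X).isoLeftDerivedObj (oldF Y) n).inv.unop :=
    (ModuleCat.mono_iff_injective _).1 inferInstance
  exact (map_eq_zero_iff _ hinj).symm

lemma ExtRel.map {X X' Y : ModuleCat.{0} R} (g : X ⟶ X') {n : ℕ} {e : OldExt X' Y n}
    {α : Abelian.Ext X' Y n} (h : ExtRel e α) :
    ExtRel (OldExt.map g Y n e) ((Abelian.Ext.mk₀ g).comp α (zero_add _)) := by
  obtain ⟨f, hf, h1, rfl⟩ := h
  let P := projectiveResolution X
  let P' := projectiveResolution X'
  let φ : ProjectiveResolution.Hom P P' g :=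
    ⟨ProjectiveResolution.lift g P P', by
      have := congrArg (fun t => t.f 0) (ProjectiveResolution.lift_commutes g P P')
      exact this⟩
  rw [ProjectiveResolution.mk₀_comp_extMk f _ rfl hf φ]
  refine ⟨_, _, ?_, rfl⟩
  have h2 := h1.map (((oldF Y).mapHomologicalComplex (ComplexShape.down ℕ)).map φ.hom)
  refine ClsRel.of_eq h2 ?_
  have h3 := ProjectiveResolution.isoLeftDerivedObj_inv_naturality g P P' φ.hom
    (by have := φ.hom_f_zero_comp_π_f_zero; exact this) (oldF Y) n
  have h4 := congrArg Quiver.Hom.unop h3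
  rw [unop_comp, unop_comp] at h4
  exact congrArg (fun t => t.hom e) h4

/-- Local cohomology, evaluated at a module, as a colimit of modules. -/
def locHIso (I : Ideal R) (i : ℕ) (M : ModuleCat.{0} R) :
    (localCohomology I i).obj M ≅
      colimit (localCohomology.diagram (localCohomology.idealPowersDiagram I) i ⋙
        (evaluation _ _).obj M) :=
  colimitObjIsoColimitCompEvaluation _ _

abbrev quo (A : Ideal R) : ModuleCat.{0} R := ModuleCat.of R (R ⧸ A)

/-- The map `R/A ⟶ R/B` sending `1` to `c`. -/
def qmap (c : R) {A B : Ideal R} (h : ∀ a ∈ A, c * a ∈ B) : quo A ⟶ quo B :=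
  ModuleCat.ofHom (Submodule.mapQ A B (LinearMap.mulLeft R c) h)

lemma le1 {A B : Ideal R} (h : A ≤ B) : ∀ a ∈ A, 1 * a ∈ B := fun a ha => by
  rw [one_mul]; exact h ha

lemma locH_subsingleton (I : Ideal R) (i : ℕ) (M : ModuleCat.{0} R)
    (H : ∀ t, ∀ α : Abelian.Ext (quo (I ^ t)) M i, ∃ s, ∃ h : t ≤ s,
      (Abelian.Ext.mk₀ (qmap 1 (A := I ^ s) (B := I ^ t)
        (le1 (Ideal.pow_le_pow_right h)))).comp α (zero_add _) = 0) :
    Subsingleton ((localCohomology I i).obj M) := by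
  let e := (locHIso I i M).toLinearEquiv
  refine @Equiv.subsingleton _ _ e.toEquiv ⟨?_⟩
  suffices h : ∀ x : (colimit (localCohomology.diagram (localCohomology.idealPowersDiagram I) i ⋙
        (evaluation _ _).obj M) : ModuleCat.{0} R), x = 0 by
    intro a b; rw [h a, h b]
  intro x
  obtain ⟨t, y, rfl⟩ := Concrete.colimit_exists_rep _ x
  obtain ⟨α, hα⟩ := ExtRel.exists_left (X := quo (I ^ (unop (unop t)))) (Y := M) (n := i) y
  obtain ⟨s, hs, h0⟩ := H _ α
  have h1 := (hα.map (qmap 1 (A := I ^ s) (B := I ^ (unop (unop t)))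
        (le1 (Ideal.pow_le_pow_right hs)))).eq_zero_iff.2 h0
  let u : t ⟶ op (op s) := (homOfLE hs).op.op
  rw [← colimit.w _ u]
  have h2 : ((localCohomology.diagram (localCohomology.idealPowersDiagram I) i ⋙
        (evaluation _ _).obj M).map u) y = 0 := by
    refine Eq.trans ?_ h1
    have : (localCohomology.ringModIdeals (localCohomology.idealPowersDiagram I)).map u.unop =
      qmap 1 (A := I ^ s) (B := I ^ (unop (unop t)))
        (le1 (Ideal.pow_le_pow_right hs)) := by
      ext; simp [localCohomology.ringModIdeals, qmap]; rfl
    rw [← this]; rfl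
  have h3 := congrArg (colimit.ι (localCohomology.diagram (localCohomology.idealPowersDiagram I) i ⋙
        (evaluation _ _).obj M) (op (op s))) h2
  rw [map_zero] at h3
  exact h3

lemma locH_nontrivial (I : Ideal R) (i : ℕ) (M : ModuleCat.{0} R)
    (t : ℕ) (α : Abelian.Ext (quo (I ^ t)) M i)
    (H : ∀ s, ∀ h : t ≤ s,
      (Abelian.Ext.mk₀ (qmap 1 (A := I ^ s) (B := I ^ t)
        (le1 (Ideal.pow_le_pow_right h)))).comp α (zero_add _) ≠ 0) :
    Nontrivial ((localCohomology I i).obj M) := by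
  let e := (locHIso I i M).toLinearEquiv
  refine @Equiv.nontrivial _ _ e.toEquiv ?_
  obtain ⟨y, hy⟩ := ExtRel.exists_right α
  refine ⟨colimit.ι (localCohomology.diagram (localCohomology.idealPowersDiagram I) i ⋙
        (evaluation _ _).obj M) (op (op t)) y, 0, ?_⟩
  intro h0
  obtain ⟨s, u, hu⟩ := Concrete.colimit_rep_eq_zero _ _ _ _ h0
  have hs : t ≤ unop (unop s) := leOfHom u.unop.unop
  refine H _ hs ?_
  refine (hy.map _).eq_zero_iff.1 ?_
  refine Eq.trans ?_ hu
  have : (localCohomology.ringModIdeals (localCohomology.idealPowersDiagram I)).map u.unop =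
      qmap 1 (A := I ^ (unop (unop s))) (B := I ^ t)
        (le1 (Ideal.pow_le_pow_right hs)) := by
      ext; simp [localCohomology.ringModIdeals, qmap]; rfl
  rw [← this]; rfl

/-! ### Computing with Ext groups of cyclic modules -/

section Pull

variable {M : ModuleCat.{0} R} {n : ℕ}

lemma qmap_comp {A B C : Ideal R} {c c' c'' : R} (h : ∀ a ∈ A, c * a ∈ B)
    (h' : ∀ a ∈ B, c' * a ∈ C) (h'' : ∀ a ∈ A, c'' * a ∈ C) (hc : c'' = c * c') :
    qmap c h ≫ qmap c' h' = qmap c'' h'' := by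
  subst hc
  ext
  change Ideal.Quotient.mk C (c' * (c * 1)) = Ideal.Quotient.mk C (c * c' * 1)
  congr 1
  ring

/-- Pull back of an Ext class along `R/A ⟶ R/B`, `1 ↦ c`. -/
def pull (c : R) {A B : Ideal R} (h : ∀ a ∈ A, c * a ∈ B) (α : Abelian.Ext (quo B) M n) :
    Abelian.Ext (quo A) M n :=
  (Abelian.Ext.mk₀ (qmap c h)).comp α (zero_add _)

lemma pull_pull {A B C : Ideal R} {c c' c'' : R} (h : ∀ a ∈ A, c * a ∈ B)
    (h' : ∀ a ∈ B, c' * a ∈ C) (h'' : ∀ a ∈ A, c'' * a ∈ C) (hc : c'' = c * c')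
    (α : Abelian.Ext (quo C) M n) :
    pull c h (pull c' h' α) = pull c'' h'' α := by
  simp only [pull, Abelian.Ext.mk₀_comp_mk₀_assoc, qmap_comp h h' h'' hc]

lemma pull_zero {A B : Ideal R} {c : R} (h : ∀ a ∈ A, c * a ∈ B) :
    pull c h (0 : Abelian.Ext (quo B) M n) = 0 := by
  simp [pull]

lemma pull_sub {A B : Ideal R} {c c' c'' : R} (h : ∀ a ∈ A, c * a ∈ B)
    (h' : ∀ a ∈ A, c' * a ∈ B) (h'' : ∀ a ∈ A, c'' * a ∈ B) (hc : c'' = c - c')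
    (α : Abelian.Ext (quo B) M n) :
    pull c'' h'' α = pull c h α - pull c' h' α := by
  subst hc
  rw [eq_sub_iff_add_eq]
  simp only [pull]
  rw [← Abelian.Ext.add_comp, ← Abelian.Ext.mk₀_add]
  congr 2
  ext
  change Ideal.Quotient.mk B ((c - c') * 1) + Ideal.Quotient.mk B (c' * 1) =
    Ideal.Quotient.mk B (c * 1)
  rw [← map_add]
  congr 1
  ring

/-- The colon ideal `A : z`. -/
def cln (A : Ideal R) (z : R) : Ideal R := Submodule.comap (LinearMap.mulLeft R z) A

lemma mem_cln {A : Ideal R} {z r : R} : r ∈ cln A z ↔ z * r ∈ A := Iff.rfl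

lemma cln_mul {A : Ideal R} {z : R} : ∀ a ∈ cln A z, z * a ∈ A := fun _ h => h

/-- `0 → R/(A:z) → R/A → R/(A+z) → 0`. -/
def sesC (A : Ideal R) (z : R) : ShortComplex (ModuleCat.{0} R) :=
  ShortComplex.mk (qmap z (A := cln A z) (B := A) (fun _ h => h))
    (qmap 1 (A := A) (B := A ⊔ Ideal.span {z}) (le1 le_sup_left)) (by
      ext
      change Ideal.Quotient.mk (A ⊔ Ideal.span {z}) (1 * (z * 1)) = 0
      rw [one_mul, mul_one, Ideal.Quotient.eq_zero_iff_mem]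
      exact Ideal.mem_sup_right (Ideal.mem_span_singleton_self z))

lemma qmap_mk {A B : Ideal R} {c : R} (h : ∀ a ∈ A, c * a ∈ B) (r : R) :
    (qmap c h) (Ideal.Quotient.mk A r) = Ideal.Quotient.mk B (c * r) := rfl

lemma sesC_exact (A : Ideal R) (z : R) : (sesC A z).ShortExact where
  exact := by
    rw [ShortComplex.moduleCat_exact_iff]
    intro x hx
    obtain ⟨r, rfl⟩ := Ideal.Quotient.mk_surjective x
    have hx' : Ideal.Quotient.mk (A ⊔ Ideal.span {z}) (1 * r) = 0 := hx
    rw [one_mul, Ideal.Quotient.eq_zero_iff_mem] at hx'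
    obtain ⟨a, ha, b, hb, rfl⟩ := Submodule.mem_sup.1 hx'
    obtain ⟨q, rfl⟩ := Ideal.mem_span_singleton'.1 hb
    refine ⟨Ideal.Quotient.mk (cln A z) q, ?_⟩
    change Ideal.Quotient.mk A (z * q) = _
    rw [Ideal.Quotient.eq]
    have : z * q - (a + q * z) = - a := by ring
    rw [this]
    exact neg_mem ha
  mono_f := by
    rw [ModuleCat.mono_iff_injective]
    rw [injective_iff_map_eq_zero]
    intro x hx
    obtain ⟨r, rfl⟩ := Ideal.Quotient.mk_surjective x
    have hx' : Ideal.Quotient.mk A (z * r) = 0 := hx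
    rw [Ideal.Quotient.eq_zero_iff_mem] at hx'
    exact Ideal.Quotient.eq_zero_iff_mem.2 hx'
  epi_g := by
    rw [ModuleCat.epi_iff_surjective]
    intro x
    obtain ⟨r, rfl⟩ := Ideal.Quotient.mk_surjective x
    refine ⟨Ideal.Quotient.mk A r, ?_⟩
    change Ideal.Quotient.mk _ (1 * r) = _
    rw [one_mul]

/-- The connecting map. -/
def dl (A : Ideal R) (z : R) (f : Abelian.Ext (quo (cln A z)) M n) :
    Abelian.Ext (quo (A ⊔ Ideal.span {z})) M (n + 1) :=
  (sesC_exact A z).extClass.comp f (add_comm 1 n)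

lemma dl_exact₃ (A : Ideal R) (z : R) (e : Abelian.Ext (quo (A ⊔ Ideal.span {z})) M (n + 1))
    (he : pull 1 (le1 le_sup_left) e = (0 : Abelian.Ext (quo A) M (n + 1))) :
    ∃ f, dl A z f = e :=
  Abelian.Ext.contravariant_sequence_exact₃ (sesC_exact A z) _ e he (add_comm 1 n)

lemma dl_exact₁ (A : Ideal R) (z : R) (f : Abelian.Ext (quo (cln A z)) M n)
    (hf : dl A z f = 0) :
    ∃ g : Abelian.Ext (quo A) M n, pull z cln_mul g = f :=
  Abelian.Ext.contravariant_sequence_exact₁ (sesC_exact A z) _ f (add_comm 1 n) hf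

lemma dl_zero (A : Ideal R) (z : R) :
    dl A z (0 : Abelian.Ext (quo (cln A z)) M n) = 0 :=
  Abelian.Ext.comp_zero ..

lemma ses_nat {S S' : ShortComplex (ModuleCat.{0} R)} (h : S.ShortExact) (h' : S'.ShortExact)
    (φ : S' ⟶ S) (f : Abelian.Ext S.X₁ M n) :
    (Abelian.Ext.mk₀ φ.τ₃).comp (h.extClass.comp f (add_comm 1 n)) (zero_add _) =
      h'.extClass.comp ((Abelian.Ext.mk₀ φ.τ₁).comp f (zero_add _)) (add_comm 1 n) := by
  have := ShortComplex.ShortExact.extClass_naturality h' h φ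
  rw [← Abelian.Ext.comp_assoc (a₁₂ := 1) _ _ _ (by omega) (by omega) (by omega), ← this,
    Abelian.Ext.comp_assoc (a₂₃ := n) _ _ _ (by omega) (by omega) (by omega)]

lemma dl_nat {A A' : Ideal R} {z z' c d : R} (h1 : ∀ a ∈ A', c * a ∈ A)
    (h2 : ∀ a ∈ cln A' z', d * a ∈ cln A z)
    (h3 : ∀ a ∈ A' ⊔ Ideal.span {z'}, c * a ∈ A ⊔ Ideal.span {z})
    (hcd : z' * c = d * z) (f : Abelian.Ext (quo (cln A z)) M n) :
    pull c h3 (dl A z f) = dl A' z' (pull d h2 f) := by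
  let φ : sesC A' z' ⟶ sesC A z :=
    { τ₁ := qmap d h2
      τ₂ := qmap c h1
      τ₃ := qmap c h3
      comm₁₂ := by
        have h : ∀ a ∈ cln A' z', (z' * c) * a ∈ A := fun a ha => by
          have := h1 _ (mem_cln.1 ha)
          convert this using 1; ring
        exact (qmap_comp _ _ h hcd).trans (qmap_comp _ _ h rfl).symm
      comm₂₃ := by
        have h : ∀ a ∈ A', c * a ∈ A ⊔ Ideal.span {z} := fun a ha =>
          Ideal.mem_sup_left (h1 a ha)
        exact (qmap_comp _ _ h (by ring)).trans (qmap_comp _ _ h (by ring)).symm }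
  exact ses_nat (sesC_exact A z) (sesC_exact A' z') φ f

end Pull

/-! ### The tower of ideals -/

/-- `J k t = (y_0^t, …, y_{k-1}^t)`. -/
def towerJ (y : ℕ → R) : ℕ → ℕ → Ideal R
  | 0, _ => ⊥
  | k + 1, t => towerJ y k t ⊔ Ideal.span {y k ^ t}

/-- `w k = y_0 ⋯ y_{k-1}`. -/
def prodW (y : ℕ → R) : ℕ → R
  | 0 => 1
  | k + 1 => prodW y k * y k

lemma towerJ_anti (y : ℕ → R) (k : ℕ) {t s : ℕ} (h : t ≤ s) : towerJ y k s ≤ towerJ y k t := by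
  induction k with
  | zero => exact le_rfl
  | succ k ih =>
    refine sup_le_sup ih ?_
    rw [Ideal.span_singleton_le_span_singleton]
    exact pow_dvd_pow _ h

/-- multiplication on the tower. -/
lemma mulJ {A B : Ideal R} (h : A ≤ B) (c : R) : ∀ a ∈ A, c * a ∈ B :=
  fun a ha => B.mul_mem_left c (h ha)

/-- The weakness hypothesis. -/
def WeakTower (y : ℕ → R) (n : ℕ) : Prop :=
  ∀ k < n, ∀ t s a, y k ^ s * a ∈ towerJ y k t → y k * a ∈ towerJ y k t

lemma ext_quo_bot {M : ModuleCat.{0} R} {j : ℕ} (hj : 0 < j)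
    (e : Abelian.Ext (quo (⊥ : Ideal R)) M j) : e = 0 := by
  obtain ⟨j, rfl⟩ : ∃ i, j = i + 1 := ⟨j - 1, by omega⟩
  have : Projective (quo (⊥ : Ideal R)) := by
    have : Projective (ModuleCat.of R R) :=
      (IsProjective.iff_projective R).1 inferInstance
    exact Projective.of_iso (Submodule.quotEquivOfEqBot (⊥ : Ideal R) rfl).symm.toModuleIso this
  exact Abelian.Ext.eq_zero_of_projective e

lemma tower_vanish {y : ℕ → R} {n : ℕ} (hW : WeakTower y n) (M : ModuleCat.{0} R) :
    ∀ k ≤ n, ∀ j, k < j → ∀ t, ∀ e : Abelian.Ext (quo (towerJ y k t)) M j,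
      ∃ s, ∃ h : t ≤ s, pull 1 (le1 (towerJ_anti y k h)) e = 0 := by
  intro k
  induction k with
  | zero =>
    intro _ j hj t e
    exact ⟨t, le_rfl, ext_quo_bot (R := R) hj _⟩
  | succ k ih =>
    intro hk j hj t e
    obtain ⟨j, rfl⟩ : ∃ i, j = i + 1 := ⟨j - 1, by omega⟩
    obtain ⟨t₁, ht₁, h1⟩ := ih (by omega) (j+1) (by omega) t (pull 1 (le1 le_sup_left) e)
    have h2 : pull 1 (le1 le_sup_left) (pull 1 (le1 (towerJ_anti y (k+1) ht₁)) e) =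
        (0 : Abelian.Ext (quo (towerJ y k t₁)) M (j + 1)) := by
      rw [← h1]
      have h := le1 ((towerJ_anti y k ht₁).trans (le_sup_left : _ ≤ towerJ y (k+1) t))
      exact (pull_pull _ _ h (by ring) _).trans (pull_pull _ _ h (by ring) _).symm
    obtain ⟨f, hf⟩ := dl_exact₃ _ _ _ h2
    obtain ⟨t₂, ht₂, h3⟩ := ih (by omega) j (by omega) t₁
      (pull 1 (le1 (fun a ha => Ideal.mul_mem_left _ _ ha)) f)
    refine ⟨t₂ + 1, by omega, ?_⟩
    have ht₁₂ : t₁ ≤ t₂ + 1 := by omega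
    have ht₂' : t₂ ≤ t₂ + 1 := by omega
    have hD : ∀ a ∈ cln (towerJ y k (t₂+1)) (y k ^ (t₂+1)),
        y k ^ (t₂ + 1 - t₁) * a ∈ cln (towerJ y k t₁) (y k ^ t₁) := by
      intro a ha
      rw [mem_cln] at ha ⊢
      rw [← mul_assoc, ← pow_add, show t₁ + (t₂ + 1 - t₁) = t₂ + 1 by omega]
      exact towerJ_anti y k ht₁₂ ha
    have h4 : pull 1 (le1 (towerJ_anti y (k+1) ht₁₂)) (pull 1 (le1 (towerJ_anti y (k+1) ht₁)) e) =
        dl (towerJ y k (t₂ + 1)) (y k ^ (t₂ + 1)) (pull (y k ^ (t₂ + 1 - t₁)) hD f) := by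
      rw [← hf]
      refine dl_nat (le1 (towerJ_anti y k ht₁₂)) _ _ ?_ _
      rw [mul_one, ← pow_add]; congr 1; omega
    rw [pull_pull _ _ (le1 (towerJ_anti y (k+1) (ht₁.trans ht₁₂))) (by ring)] at h4
    refine h4.trans ?_
    -- factor
    have hE : ∀ a ∈ cln (towerJ y k (t₂+1)) (y k ^ (t₂+1)),
        y k ^ (t₂ + 1 - t₁) * a ∈ towerJ y k t₂ := by
      intro a ha
      have := hW k (by omega) _ _ _ (mem_cln.1 ha)
      have h5 : y k ^ (t₂ + 1 - t₁) * a = y k ^ (t₂ - t₁) * (y k * a) := by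
        rw [← mul_assoc, ← pow_succ]; congr 2; omega
      rw [h5]
      exact Ideal.mul_mem_left _ _ (towerJ_anti y k ht₂' this)
    have h6 := congrArg (pull _ hE) h3
    rw [pull_zero, pull_pull (c'' := 1) (h'' := le1 ((towerJ_anti y k ht₂).trans
      (fun a ha => Ideal.mul_mem_left _ _ ha))) (hc := by ring),
      pull_pull (h'' := hD) (hc := by ring)] at h6
    rw [h6]
    exact dl_zero _ _

/-- The inductive statement describing `lim Ext^k (R/J_t, R)`. -/
def Good (y : ℕ → R) (k : ℕ) : Prop :=
  ∃ c : ∀ t, Abelian.Ext (quo (towerJ y k t)) (ModuleCat.of R R) k,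
    (∀ t s (h : t ≤ s), pull 1 (le1 (towerJ_anti y k h)) (c t) =
      pull (prodW y k ^ (s - t)) (mulJ le_rfl _) (c s)) ∧
    (∀ t e, ∃ s, ∃ h : t ≤ s, ∃ m, pull 1 (le1 (towerJ_anti y k h)) e =
      pull m (mulJ le_rfl m) (c s)) ∧
    (∀ t a, pull a (mulJ le_rfl a) (c t) = 0 →
      ∃ u r, u = t + r ∧ prodW y k ^ (r + 1) * a ∈ towerJ y k u)

/-- `R/0 ≅ R`. -/
def isoBot : quo (⊥ : Ideal R) ≅ ModuleCat.of R R :=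
    (Submodule.quotEquivOfEqBot (⊥ : Ideal R) rfl).toModuleIso

lemma base3 (e : Abelian.Ext (quo (⊥ : Ideal R)) (ModuleCat.of R R) 0) :
    ∃ m : R, pull 1 (le1 le_rfl) e = pull m (mulJ le_rfl m) (Abelian.Ext.mk₀ isoBot.hom) := by
  obtain ⟨f, rfl⟩ : ∃ f, Abelian.Ext.mk₀ f = e := (Abelian.Ext.mk₀_bijective _ _).2 e
  refine ⟨f (Ideal.Quotient.mk (⊥ : Ideal R) 1), ?_⟩
  simp only [pull]
  rw [Abelian.Ext.mk₀_comp_mk₀, Abelian.Ext.mk₀_comp_mk₀]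
  congr 1
  ext
  change f (Ideal.Quotient.mk (⊥ : Ideal R) (1 * 1)) =
      f (Ideal.Quotient.mk (⊥ : Ideal R) 1) * 1
  rw [mul_one, mul_one]

lemma base4 (a : R) (h : pull a (mulJ le_rfl a) (Abelian.Ext.mk₀ (isoBot (R := R)).hom) = 0) :
    a = 0 := by
  simp only [pull] at h
  rw [Abelian.Ext.mk₀_comp_mk₀, Abelian.Ext.mk₀_eq_zero_iff] at h
  have h1 := congrArg (fun f => f.hom (Ideal.Quotient.mk (⊥ : Ideal R) 1)) h
  change a * 1 = 0 at h1
  simpa only [mul_one] using h1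

lemma good_zero (y : ℕ → R) : Good y 0 := by
  refine ⟨fun _ => Abelian.Ext.mk₀ isoBot.hom, ?_, ?_, ?_⟩
  · intro t s h
    simp only [prodW, one_pow]
    rfl
  · intro t e
    obtain ⟨m, hm⟩ := base3 e
    exact ⟨t, le_rfl, m, hm⟩
  · intro t a h
    refine ⟨t, 0, rfl, ?_⟩
    rw [base4 a h, mul_zero]
    exact zero_mem _

lemma good_succ {y : ℕ → R} {n : ℕ} (hW : WeakTower y n) (k : ℕ) (hk : k < n) (hG : Good y k) :
    Good y (k + 1) := by
  obtain ⟨c, c2, c3, c4⟩ := hG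
  set x := y k with hx
  have hC : ∀ t, ∀ a ∈ cln (towerJ y k t) (x ^ t), x * a ∈ towerJ y k t :=
    fun t a ha => hW k hk _ _ _ (mem_cln.1 ha)
  have hC' : ∀ t p q, ∀ a ∈ cln (towerJ y k t) (x ^ t), (p * x * q) * a ∈ towerJ y k t := by
    intro t p q a ha
    have : p * x * q * a = p * q * (x * a) := by ring
    rw [this]
    exact Ideal.mul_mem_left _ _ (hC t a ha)
  have hxx : ∀ t s, t ≤ s → ∀ a ∈ cln (towerJ y k s) (x ^ s),
      x ^ (s - t) * a ∈ cln (towerJ y k t) (x ^ t) := by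
    intro t s h a ha
    rw [mem_cln] at ha ⊢
    rw [← mul_assoc, ← pow_add, show t + (s - t) = s by omega]
    exact towerJ_anti y k h ha
  refine ⟨fun t => dl (towerJ y k t) (x ^ t) (pull x (hC t) (c t)), ?_, ?_, ?_⟩
  · intro t s h
    have e1 := dl_nat (M := ModuleCat.of R R) (n := k) (le1 (towerJ_anti y k h)) (hxx t s h)
      (le1 (towerJ_anti y (k+1) h))
      (by rw [mul_one, ← pow_add]; congr 1; omega) (pull x (hC t) (c t))
    refine e1.trans ?_
    have e2 := dl_nat (M := ModuleCat.of R R) (n := k) (A := towerJ y k s) (A' := towerJ y k s)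
      (z := x ^ s) (z' := x ^ s) (c := prodW y (k+1) ^ (s - t)) (d := prodW y (k+1) ^ (s - t))
      (mulJ le_rfl _) (mulJ le_rfl _) (mulJ le_rfl _) (mul_comm _ _) (pull x (hC s) (c s))
    refine Eq.trans ?_ e2.symm
    congr 1
    have hh : ∀ a ∈ cln (towerJ y k s) (x ^ s), (x ^ (s - t) * x * 1) * a ∈ towerJ y k s :=
      hC' _ _ _
    have hh' : ∀ a ∈ cln (towerJ y k s) (x ^ s), (x ^ (s - t) * x * 1) * a ∈ towerJ y k t :=
      fun a ha => towerJ_anti y k h (hh a ha)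
    have hh2 : ∀ a ∈ cln (towerJ y k s) (x ^ s),
        (x ^ (s - t) * x * prodW y k ^ (s - t)) * a ∈ towerJ y k s :=
      hC' _ _ _
    rw [pull_pull _ _ hh' (by ring), ← pull_pull hh (le1 (towerJ_anti y k h)) hh' (by ring),
      c2 t s h, pull_pull _ _ hh2 (by ring), pull_pull _ _ hh2 (by
        rw [prodW, mul_pow]; ring)]
  · intro t e
    obtain ⟨t₁, ht₁, h1⟩ := tower_vanish hW (ModuleCat.of R R) k hk.le (k+1) (by omega) t
      (pull 1 (le1 le_sup_left) e)
    have h2 : pull 1 (le1 le_sup_left) (pull 1 (le1 (towerJ_anti y (k+1) ht₁)) e) =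
        (0 : Abelian.Ext (quo (towerJ y k t₁)) _ (k + 1)) := by
      rw [← h1]
      have h := le1 ((towerJ_anti y k ht₁).trans (le_sup_left : _ ≤ towerJ y (k+1) t))
      exact (pull_pull _ _ h (by ring) _).trans (pull_pull _ _ h (by ring) _).symm
    obtain ⟨f, hf⟩ := dl_exact₃ _ _ _ h2
    have hAC : towerJ y k t₁ ≤ cln (towerJ y k t₁) (x ^ t₁) :=
      fun a ha => Ideal.mul_mem_left _ _ ha
    obtain ⟨s, hs, m, hm⟩ := c3 t₁ (pull 1 (le1 hAC) f)
    obtain ⟨p, rfl⟩ : ∃ p, s = t₁ + p := ⟨s - t₁, by omega⟩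
    have hm' := congrArg (pull 1 (le1 (towerJ_anti y k (Nat.le_succ (t₁ + p))))) hm
    have hle : t₁ ≤ t₁ + p + 1 := by omega
    have hle' : t₁ + p ≤ t₁ + p + 1 := by omega
    rw [pull_pull _ _ (le1 (towerJ_anti y k hle)) (by ring),
      pull_pull _ _ (le1 ((towerJ_anti y k hle).trans hAC)) (by ring),
      pull_pull (c'' := m) _ _ (mulJ (towerJ_anti y k hle') m) (by ring),
      ← pull_pull (c := m) (c' := 1) (mulJ le_rfl _) (le1 (towerJ_anti y k hle')) _ (by ring),
      c2 _ _ hle', pull_pull (c'' := m * prodW y k) _ _ (mulJ le_rfl _)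
        (by rw [show t₁ + p + 1 - (t₁ + p) = 1 by omega, pow_one])] at hm'
    refine ⟨t₁ + p + 1, ht₁.trans hle, x ^ p * (m * prodW y k), ?_⟩
    rw [← pull_pull (le1 (towerJ_anti y (k+1) hle)) (le1 (towerJ_anti y (k+1) ht₁)) _ (by ring)]
    have e1 := dl_nat (M := ModuleCat.of R R) (n := k) (le1 (towerJ_anti y k hle))
      (hxx _ _ hle) (le1 (towerJ_anti y (k+1) hle))
      (by rw [mul_one, ← pow_add]; congr 1; omega) f
    rw [← hf]
    refine e1.trans ?_
    have e2 := dl_nat (M := ModuleCat.of R R) (n := k) (A := towerJ y k (t₁+p+1))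
      (A' := towerJ y k (t₁+p+1))
      (z := x ^ (t₁+p+1)) (z' := x ^ (t₁+p+1)) (c := x ^ p * (m * prodW y k))
      (d := x ^ p * (m * prodW y k))
      (mulJ le_rfl _) (mulJ le_rfl _) (mulJ le_rfl _) (mul_comm _ _)
      (pull x (hC (t₁+p+1)) (c (t₁+p+1)))
    refine Eq.trans ?_ e2.symm
    congr 1
    rw [pull_pull _ _ (hC' _ (x ^ p) (m * prodW y k)) (by ring),
      ← pull_pull (hC' _ (x ^ p) 1) (mulJ le_rfl (m * prodW y k)) _ (by ring), ← hm']
    rw [pull_pull]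
    rw [show t₁ + p + 1 - t₁ = p + 1 by omega]
    ring
  · intro t a ha
    have e2 := dl_nat (M := ModuleCat.of R R) (n := k) (A := towerJ y k t)
      (A' := towerJ y k t)
      (z := x ^ t) (z' := x ^ t) (c := a) (d := a)
      (mulJ le_rfl _) (mulJ le_rfl _) (mulJ le_rfl _) (mul_comm _ _)
      (pull x (hC t) (c t))
    have e3 := e2.symm.trans ha
    rw [pull_pull _ _ (hC' _ a 1) (by ring)] at e3
    obtain ⟨g, hg⟩ := dl_exact₁ _ _ _ e3
    obtain ⟨s, hs, m, hm⟩ := c3 t g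
    have hq : ∀ b ∈ towerJ y k s, x ^ (s - t) * b ∈ cln (towerJ y k t) (x ^ t) := by
      intro b hb
      rw [mem_cln]
      exact Ideal.mul_mem_left _ _ (Ideal.mul_mem_left _ _ (towerJ_anti y k hs hb))
    have h1 := congrArg (pull (x ^ (s - t)) hq) hg
    have hst : x ^ s = x ^ (s - t) * x ^ t := by rw [← pow_add]; congr 1; omega
    rw [pull_pull (c'' := x ^ s) _ _ (mulJ (towerJ_anti y k hs) _) hst,
      pull_pull (c'' := x ^ (s - t) * (a * x)) _ _ (mulJ (towerJ_anti y k hs) _) (by ring),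
      ← pull_pull (c := x ^ s) (c' := 1) (mulJ le_rfl _) (le1 (towerJ_anti y k hs)) _ (by ring),
      ← pull_pull (c := x ^ (s - t) * (a * x)) (c' := 1) (mulJ le_rfl _)
        (le1 (towerJ_anti y k hs)) _ (by ring) (c t),
      hm, c2 t s hs,
      pull_pull (c'' := x ^ s * m) _ _ (mulJ le_rfl _) rfl,
      pull_pull (c'' := x ^ (s - t) * (a * x) * prodW y k ^ (s - t)) _ _ (mulJ le_rfl _) rfl,
      ← sub_eq_zero, ← pull_sub _ _ (mulJ le_rfl _) rfl] at h1
    obtain ⟨u, r, rfl, hr⟩ := c4 _ _ h1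
    refine ⟨s + r, s - t + r, by omega, ?_⟩
    have h2 : prodW y (k + 1) ^ (s - t + r + 1) * a =
      - (x ^ r * (prodW y k ^ (r + 1) * (x ^ s * m - x ^ (s - t) * (a * x) *
        prodW y k ^ (s - t)))) + (prodW y k ^ (r + 1) * m) * x ^ (s + r) := by
      rw [prodW]; ring
    rw [h2]
    exact Ideal.add_mem _ (neg_mem (Ideal.mem_sup_left (Ideal.mul_mem_left _ _ hr)))
      (Ideal.mem_sup_right (Ideal.mul_mem_left _ _ (Ideal.mem_span_singleton_self _)))

lemma good_all {y : ℕ → R} {n : ℕ} (hW : WeakTower y n) : ∀ k ≤ n, Good y k := by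
  intro k
  induction k with
  | zero => exact fun _ => good_zero y
  | succ k ih => exact fun h => good_succ hW k (by omega) (ih (by omega))

section Algebra

lemma pSpan_self {r : ℕ} (x : Fin r → R) (i : Fin r) :
    pSpan R x i = Ideal.span (x '' {j | j < i}) := by
  rw [pSpan, Ideal.smul_eq_mul, Ideal.mul_top]

lemma weakV {J : Ideal R} {d : ℕ} {y : Fin d → R} (h : IsUncondWeakSeq J R y)
    (σ : Equiv.Perm (Fin d)) (α : Fin d → ℕ) (hα : ∀ k, 0 < α k) (i : Fin d) (a : R)
    (ha : y (σ i) ^ α i * a ∈ Ideal.span ((fun k => y (σ k) ^ α k) '' {j | j < i})) (b : R)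
    (hb : b ∈ J) :
    b * a ∈ Ideal.span ((fun k => y (σ k) ^ α k) '' {j | j < i}) := by
  have := h σ α hα i a
  rw [pSpan_self] at this
  exact this ha b hb

lemma towerJ_eq (y : ℕ → R) (k t : ℕ) :
    towerJ y k t = Ideal.span ((fun i => y i ^ t) '' {i | i < k}) := by
  induction k with
  | zero => simp [towerJ]
  | succ k ih =>
    rw [towerJ, ih, ← Ideal.span_union]
    congr 1
    ext z
    simp only [Set.mem_union, Set.mem_image, Set.mem_ofPred_eq, Set.mem_singleton_iff]
    constructor
    · rintro (⟨i, hi, rfl⟩ | rfl)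
      · exact ⟨i, by omega, rfl⟩
      · exact ⟨k, by omega, rfl⟩
    · rintro ⟨i, hi, rfl⟩
      rcases Nat.lt_succ_iff_lt_or_eq.1 hi with h | rfl
      · exact Or.inl ⟨i, h, rfl⟩
      · exact Or.inr rfl

/-- Extend a finite sequence by ones. -/
def ex {d : ℕ} (y : Fin d → R) (i : ℕ) : R := if h : i < d then y ⟨i, h⟩ else 1

lemma ex_coe {d : ℕ} (y : Fin d → R) (i : Fin d) : ex y i = y i := by
  simp [ex]

lemma towerJ_ex {d : ℕ} (y : Fin d → R) (k t : ℕ) (hk : k ≤ d) :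
    towerJ (ex y) k t = Ideal.span ((fun i => y i ^ t) '' {i : Fin d | (i : ℕ) < k}) := by
  rw [towerJ_eq]
  congr 1
  ext z
  constructor
  · rintro ⟨i, hi, rfl⟩
    refine ⟨⟨i, lt_of_lt_of_le hi hk⟩, hi, ?_⟩
    simp only
    rw [← ex_coe y]
  · rintro ⟨i, hi, rfl⟩
    exact ⟨i, hi, by simp only [ex_coe]⟩

lemma weakTower_ex {J : Ideal R} {d : ℕ} {y : Fin d → R} (h : IsUncondWeakSeq J R y)
    (hy : ∀ j, y j ∈ J) : WeakTower (ex y) d := by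
  intro k hk t s a ha
  rcases Nat.eq_zero_or_pos s with rfl | hs
  · rw [pow_zero, one_mul] at ha
    exact Ideal.mul_mem_left _ _ ha
  wlog ht : 0 < t generalizing t
  · obtain rfl : t = 0 := by omega
    rcases Nat.eq_zero_or_pos k with rfl | hk0
    · exact this 1 ha one_pos
    · have : towerJ (ex y) k 0 = ⊤ := by
        rw [towerJ_eq, Ideal.eq_top_iff_one]
        exact Ideal.subset_span ⟨0, hk0, by simp⟩
      rw [this]; trivial
  rw [towerJ_ex _ _ _ hk.le] at ha ⊢
  have hyk : ex y k = y ⟨k, hk⟩ := by rw [← ex_coe y]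
  rw [hyk] at ha ⊢
  have key : (fun i => y i ^ t) '' {i : Fin d | (i : ℕ) < k} =
      (fun j => y ((1 : Equiv.Perm (Fin d)) j) ^ (if (j : ℕ) < k then t else s)) ''
        {j | j < ⟨k, hk⟩} := by
    have : {j : Fin d | j < ⟨k, hk⟩} = {i : Fin d | (i : ℕ) < k} := by
      ext j; simp [Fin.lt_def]
    rw [this]
    refine Set.image_congr ?_
    intro i hi
    simp only [Set.mem_ofPred_eq] at hi
    simp [hi]
  rw [key] at ha ⊢
  refine weakV h 1 _ (fun j => ?_) ⟨k, hk⟩ a ?_ _ (hy _)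
  · split_ifs <;> omega
  · simpa using ha

lemma prodW_dvd (y : ℕ → R) (n p : ℕ) : prodW y n ∣ prodW y (n + p) := by
  induction p with
  | zero => exact dvd_rfl
  | succ p ih => exact ih.trans (Dvd.intro _ rfl)


/-- mixed powers. -/
def mixL {d : ℕ} (y : Fin d → R) (k b : ℕ) : Ideal R :=
  Ideal.span (Set.range fun i : Fin d => y i ^ (if (i : ℕ) < k then b else 1))

lemma prodW_mem {d : ℕ} {y : Fin d → R} {J : Ideal R} (hy : ∀ j, y j ∈ J) (k : ℕ)
    (hk : k < d) : prodW (ex y) (k + 1) ∈ J := by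
  rw [prodW]
  refine Ideal.mul_mem_left _ _ ?_
  have := hy ⟨k, hk⟩
  rwa [← ex_coe y] at this

variable [IsNoetherianRing R] [IsLocalRing R]

lemma dim_le {d : ℕ} (hd : ringKrullDim R = d) (s : Set R) (hs : s.Finite)
    (h : (Ideal.span s).radical = IsLocalRing.maximalIdeal R) : d ≤ s.ncard := by
  have hm : IsLocalRing.maximalIdeal R ∈ (Ideal.span s).minimalPrimes := by
    refine ⟨⟨inferInstance, h ▸ Ideal.le_radical⟩, ?_⟩
    rintro q ⟨hq, hle⟩ _
    rw [← h]
    exact hq.radical_le_iff.2 hle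
  have h1 := Ideal.height_le_card_of_mem_minimalPrimes_span hs hm
  have h2 := IsLocalRing.maximalIdeal_height_eq_ringKrullDim (R := R)
  rw [hd] at h2
  have h3 : (IsLocalRing.maximalIdeal R).height = (d : ℕ∞) := by exact_mod_cast h2
  rw [h3] at h1
  exact_mod_cast h1

lemma claimE {d : ℕ} (hd : ringKrullDim R = d) {y : Fin d → R}
    (h : IsUncondWeakSeq (IsLocalRing.maximalIdeal R) R y)
    (hy1 : ∀ j, y j ∈ IsLocalRing.maximalIdeal R)
    (hy2 : (Ideal.span (Set.range y)).radical = IsLocalRing.maximalIdeal R) :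
    ∀ k ≤ d, ∀ a b, 1 ≤ a → a + k ≤ b → prodW (ex y) k ^ a ∉ mixL y k b := by
  intro k
  induction k with
  | zero =>
    intro _ a b _ _ hmem
    have hle : mixL y 0 b ≤ IsLocalRing.maximalIdeal R := by
      rw [mixL, Ideal.span_le]
      rintro _ ⟨i, rfl⟩
      simpa using hy1 i
    have := hle hmem
    simp only [prodW, one_pow] at this
    exact (Ideal.ne_top_iff_one _).1 (IsLocalRing.maximalIdeal.isMaximal R).ne_top this
  | succ k ih =>
    intro hk a b ha hab hmem
    let kk : Fin d := ⟨k, hk⟩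
    have hyk : ex y k = y kk := by rw [← ex_coe y]
    let O : Ideal R := Ideal.span
      ((fun i : Fin d => y i ^ (if (i : ℕ) < k + 1 then b else 1)) '' {kk}ᶜ)
    have hsplit : mixL y (k + 1) b ≤ O ⊔ Ideal.span {y kk ^ b} := by
      rw [mixL, Ideal.span_le]
      rintro _ ⟨i, rfl⟩
      by_cases hi : i = kk
      · subst hi
        refine Ideal.mem_sup_right (Ideal.subset_span ?_)
        simp [kk]
      · exact Ideal.mem_sup_left (Ideal.subset_span ⟨i, hi, rfl⟩)
    obtain ⟨o, ho, q, hq, hoq⟩ := Submodule.mem_sup.1 (hsplit hmem)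
    obtain ⟨r, rfl⟩ := Ideal.mem_span_singleton'.1 hq
    have h1 : y kk ^ a * (prodW (ex y) k ^ a - r * y kk ^ (b - a)) ∈ O := by
      have hb : y kk ^ b = y kk ^ a * y kk ^ (b - a) := by rw [← pow_add]; congr 1; omega
      have : y kk ^ a * (prodW (ex y) k ^ a - r * y kk ^ (b - a)) = o := by
        rw [prodW, hyk, mul_pow, hb] at hoq
        linear_combination -hoq
      rw [this]; exact ho
    have h2 : ∀ c ∈ IsLocalRing.maximalIdeal R,
        c * (prodW (ex y) k ^ a - r * y kk ^ (b - a)) ∈ O := by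
      intro c hc
      let l : Fin d := ⟨d - 1, by omega⟩
      let σ := Equiv.swap kk l
      let α : Fin d → ℕ := fun j => if σ j = kk then a else if (σ j : ℕ) < k + 1 then b else 1
      have hσ : σ l = kk := Equiv.swap_apply_right _ _
      have hO : (fun i : Fin d => y i ^ (if (i : ℕ) < k + 1 then b else 1)) '' {kk}ᶜ =
          (fun j => y (σ j) ^ α j) '' {j | j < l} := by
        ext z
        constructor
        · rintro ⟨i, hi, rfl⟩
          refine ⟨σ i, ?_, ?_⟩
          · have : σ i ≠ l := fun hh => hi (by
              have := congrArg σ hh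
              rwa [hσ, Equiv.swap_apply_self] at this)
            simp only [Set.mem_ofPred_eq, Fin.lt_def, l]
            have h5 : (σ i : ℕ) ≠ d - 1 := fun hh => this (Fin.ext hh)
            have := (σ i).2
            omega
          · have h6 : σ (σ i) = i := Equiv.swap_apply_self _ _ _
            have hi' : i ≠ kk := hi
            simp only [α, h6, if_neg hi']
        · rintro ⟨j, hj, rfl⟩
          have h7 : σ j ≠ kk := fun hh => by
            rw [← hσ] at hh
            exact (ne_of_lt hj) (σ.injective hh)
          refine ⟨σ j, h7, ?_⟩
          simp only [α, if_neg h7]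
      have hα : α l = a := by simp only [α, hσ, if_true]
      change _ ∈ Ideal.span _
      rw [hO]
      refine weakV h σ α ?_ l _ ?_ c hc
      · intro j
        simp only [α]
        split_ifs <;> omega
      · rw [← hO, hσ, hα]
        exact h1
    rcases Nat.eq_zero_or_pos k with rfl | hk0
    · have hx := h2 (y kk) (hy1 kk)
      have hu : IsUnit (prodW (ex y) 0 ^ a - r * y kk ^ (b - a)) := by
        rw [prodW, one_pow]
        by_contra hn
        have h3 : 1 - r * y kk ^ (b - a) ∈ IsLocalRing.maximalIdeal R := hn
        have h4 : r * y kk ^ (b - a) ∈ IsLocalRing.maximalIdeal R :=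
          Ideal.mul_mem_left _ _ (Ideal.pow_mem_of_mem _ (hy1 kk) _ (by omega))
        have := add_mem h3 h4
        rw [sub_add_cancel] at this
        exact (Ideal.ne_top_iff_one _).1 (IsLocalRing.maximalIdeal.isMaximal R).ne_top this
      rw [Ideal.mul_unit_mem_iff_mem _ hu] at hx
      have hOy : O ≤ Ideal.span (y '' {kk}ᶜ) := by
        simp only [O]
        rw [Ideal.span_le]
        rintro _ ⟨i, hi, rfl⟩
        have : ¬ ((i : ℕ) < 0 + 1) := fun hh => hi (Fin.ext (by simp [kk]; omega))
        simp only [if_neg this, pow_one]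
        exact Ideal.subset_span ⟨i, hi, rfl⟩
      have heq : Ideal.span (y '' {kk}ᶜ) = Ideal.span (Set.range y) := by
        refine le_antisymm (Ideal.span_mono (Set.image_subset_range _ _)) ?_
        rw [Ideal.span_le]
        rintro _ ⟨i, rfl⟩
        by_cases hi : i = kk
        · rw [hi]; exact hOy hx
        · exact Ideal.subset_span ⟨i, hi, rfl⟩
      have hle := dim_le hd (y '' {kk}ᶜ) (Set.toFinite _) (by rw [heq, hy2])
      have h8 := Set.ncard_image_le (f := y) (Set.toFinite ({kk}ᶜ : Set (Fin d)))
      rw [Set.ncard_compl, Set.ncard_singleton, Nat.card_fin] at h8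
      omega
    · have hW : prodW (ex y) k ∈ IsLocalRing.maximalIdeal R := by
        obtain ⟨k', rfl⟩ : ∃ k', k = k' + 1 := ⟨k - 1, by omega⟩
        exact prodW_mem hy1 k' (by omega)
      have h3 := h2 _ hW
      have hOL : O ≤ mixL y k b := by
        simp only [O]
        rw [Ideal.span_le]
        rintro _ ⟨i, hi, rfl⟩
        have hne : (i : ℕ) ≠ k := fun hh => hi (Fin.ext hh)
        have : ((i : ℕ) < k + 1) ↔ ((i : ℕ) < k) := by omega
        simp only [this]
        exact Ideal.subset_span ⟨i, rfl⟩
      have hxL : y kk ∈ mixL y k b := Ideal.subset_span ⟨kk, by simp [kk]⟩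
      refine ih (by omega) (a + 1) b (by omega) (by omega) ?_
      have h4 : prodW (ex y) k ^ (a + 1) =
          prodW (ex y) k * (prodW (ex y) k ^ a - r * y kk ^ (b - a)) +
          (prodW (ex y) k * r) * y kk ^ (b - a) := by ring
      rw [h4]
      exact Ideal.add_mem _ (hOL h3) (Ideal.mul_mem_left _ _
        (Ideal.pow_mem_of_mem _ hxL _ (by omega)))

lemma claimE' {d : ℕ} (hd : ringKrullDim R = d) {y : Fin d → R}
    (h : IsUncondWeakSeq (IsLocalRing.maximalIdeal R) R y)
    (hy1 : ∀ j, y j ∈ IsLocalRing.maximalIdeal R)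
    (hy2 : (Ideal.span (Set.range y)).radical = IsLocalRing.maximalIdeal R)
    (n : ℕ) (hn : n ≤ d) (a b : ℕ) (ha : 1 ≤ a) (hab : a + d ≤ b) :
    prodW (ex y) n ^ a ∉ towerJ (ex y) n b := by
  intro hmem
  refine claimE hd h hy1 hy2 d le_rfl a b ha hab ?_
  have hdvd : prodW (ex y) n ∣ prodW (ex y) d := by
    obtain ⟨p, hp⟩ := Nat.exists_eq_add_of_le hn
    have := prodW_dvd (ex y) n p
    rwa [← hp] at this
  refine Ideal.mem_of_dvd _ (pow_dvd_pow_of_dvd hdvd a) ?_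
  refine (?_ : towerJ (ex y) n b ≤ _) hmem
  rw [towerJ_ex _ _ _ hn, Ideal.span_le]
  rintro _ ⟨i, hi, rfl⟩
  exact Ideal.subset_span ⟨i, by simp⟩

end Algebra

section Final

variable [IsNoetherianRing R] [IsLocalRing R] {d : ℕ} {y : Fin d → R} {n : ℕ} {I : Ideal R}

lemma J_le_pow (hn : n ≤ d) (hI : I = Ideal.span (y '' {j : Fin d | (j : ℕ) < n})) (t : ℕ) :
    towerJ (ex y) n t ≤ I ^ t := by
  rw [towerJ_ex _ _ _ hn, Ideal.span_le]
  rintro _ ⟨i, hi, rfl⟩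
  refine Ideal.pow_mem_pow ?_ t
  rw [hI]
  exact Ideal.subset_span ⟨i, hi, rfl⟩

lemma pow_le_J (hn : n ≤ d) (hI : I = Ideal.span (y '' {j : Fin d | (j : ℕ) < n})) (t : ℕ) :
    ∃ N, I ^ N ≤ towerJ (ex y) n t := by
  refine Ideal.exists_pow_le_of_le_radical_of_fg ?_ (IsNoetherian.noetherian I)
  rw [towerJ_ex _ _ _ hn, hI, Ideal.span_le]
  rintro _ ⟨i, hi, rfl⟩
  exact ⟨t, Ideal.subset_span ⟨i, hi, rfl⟩⟩

lemma cd_vanish (hW : WeakTower (ex y) d) (hn : n ≤ d)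
    (hI : I = Ideal.span (y '' {j : Fin d | (j : ℕ) < n})) (i : ℕ) (hi : n < i)
    (M : ModuleCat.{0} R) : Subsingleton ((localCohomology I i).obj M) := by
  refine locH_subsingleton I i M ?_
  intro t α
  obtain ⟨s, hs, h0⟩ := tower_vanish hW M n hn i hi t (pull 1 (le1 (J_le_pow hn hI t)) α)
  obtain ⟨N, hN⟩ := pow_le_J hn hI s
  have hle : I ^ (max N t) ≤ towerJ (ex y) n s :=
    (Ideal.pow_le_pow_right (le_max_left _ _)).trans hN
  refine ⟨max N t, le_max_right _ _, ?_⟩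
  change pull 1 _ α = 0
  have h1 := congrArg (pull 1 (le1 hle)) h0
  rw [pull_zero, pull_pull (c'' := 1) _ _
    (le1 ((towerJ_anti (ex y) n hs).trans (J_le_pow hn hI t))) (by ring),
    pull_pull (c'' := 1) _ _ (le1 (Ideal.pow_le_pow_right (le_max_right _ _))) (by ring)] at h1
  exact h1

lemma cd_nontrivial (hd : ringKrullDim R = d)
    (h : IsUncondWeakSeq (IsLocalRing.maximalIdeal R) R y)
    (hy1 : ∀ j, y j ∈ IsLocalRing.maximalIdeal R)
    (hy2 : (Ideal.span (Set.range y)).radical = IsLocalRing.maximalIdeal R) (hn : n ≤ d)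
    (hI : I = Ideal.span (y '' {j : Fin d | (j : ℕ) < n})) :
    Nontrivial ((localCohomology I n).obj (ModuleCat.of R R)) := by
  have hW := weakTower_ex h hy1
  obtain ⟨c, c2, -, c4⟩ := good_all hW n hn
  obtain ⟨N, hN⟩ := pow_le_J hn hI (d + 1)
  refine locH_nontrivial I n _ N (pull 1 (le1 hN) (c (d + 1))) ?_
  intro s hs h0
  change pull 1 (le1 (Ideal.pow_le_pow_right hs)) (pull 1 (le1 hN) (c (d + 1))) = 0 at h0
  have hd1 : d + 1 ≤ max s (d + 1) := le_max_right _ _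
  have hle : towerJ (ex y) n (max s (d + 1)) ≤ I ^ s :=
    (J_le_pow hn hI _).trans (Ideal.pow_le_pow_right (le_max_left _ _))
  have h1 := congrArg (pull 1 (le1 hle)) h0
  rw [pull_zero, pull_pull (c'' := 1) _ _
    (le1 ((Ideal.pow_le_pow_right hs).trans hN)) (by ring),
    pull_pull (c'' := 1) _ _ (le1 (towerJ_anti (ex y) n hd1)) (by ring), c2 _ _ hd1] at h1
  obtain ⟨u, r, rfl, hr⟩ := c4 _ _ h1
  rw [← pow_add] at hr
  exact claimE' hd h hy1 hy2 n hn _ _ (by omega) (by omega) hr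

lemma cd_main (hd : ringKrullDim R = d)
    (h : IsUncondWeakSeq (IsLocalRing.maximalIdeal R) R y)
    (hy1 : ∀ j, y j ∈ IsLocalRing.maximalIdeal R)
    (hy2 : (Ideal.span (Set.range y)).radical = IsLocalRing.maximalIdeal R) (hn : n ≤ d)
    (hI : I = Ideal.span (y '' {j : Fin d | (j : ℕ) < n})) : IsCd I R n :=
  ⟨cd_nontrivial hd h hy1 hy2 hn hI,
    fun i hi => cd_vanish (weakTower_ex h hy1) hn hI i hi (ModuleCat.of R R)⟩

lemma ann_self : Module.annihilator R R = ⊥ := by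
  rw [eq_bot_iff]
  intro r hr
  have := Module.mem_annihilator.1 hr 1
  simpa using this

lemma rad_join {A : Ideal R}
    (hy2 : (Ideal.span (Set.range y)).radical = IsLocalRing.maximalIdeal R)
    (hI : I = Ideal.span (y '' {j : Fin d | (j : ℕ) < n})) (hA : A.radical = I.radical) :
    (A ⊔ Ideal.span (y '' {j : Fin d | ¬ (j : ℕ) < n})).radical =
      IsLocalRing.maximalIdeal R := by
  rw [Ideal.radical_sup, hA, ← Ideal.radical_sup, hI, ← Ideal.span_union, ← Set.image_union,
    ← hy2]
  congr 2
  rw [← Set.image_univ]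
  congr 1
  ext j
  simp only [Set.mem_union, Set.mem_ofPred_eq, Set.mem_univ, iff_true]
  exact em _

lemma ncard_tail (hn : n ≤ d) : (y '' {j : Fin d | ¬ (j : ℕ) < n}).ncard ≤ d - n := by
  refine (Set.ncard_image_le (Set.toFinite _)).trans ?_
  have h1 := Set.ncard_add_ncard_compl {j : Fin d | (j : ℕ) < n}
  have h2 : n ≤ {j : Fin d | (j : ℕ) < n}.ncard := by
    have h3 : Set.range (Fin.castLE hn) ⊆ {j : Fin d | (j : ℕ) < n} := by
      rintro _ ⟨i, rfl⟩
      exact i.2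
    have h4 := Set.ncard_le_ncard h3 (Set.toFinite _)
    rwa [← Set.image_univ, Set.ncard_image_of_injective _ (Fin.castLE_injective hn),
      Set.ncard_univ, Nat.card_fin] at h4
  rw [Nat.card_fin] at h1
  have h5 : {j : Fin d | ¬ (j : ℕ) < n} = {j : Fin d | (j : ℕ) < n}ᶜ := rfl
  rw [h5]
  omega

lemma ara_main (hd : ringKrullDim R = d)
    (hy2 : (Ideal.span (Set.range y)).radical = IsLocalRing.maximalIdeal R) (hn : n ≤ d)
    (hI : I = Ideal.span (y '' {j : Fin d | (j : ℕ) < n})) : IsAra I R n := by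
  constructor
  · refine ⟨fun i => y (Fin.castLE hn i), ?_⟩
    congr 2
    rw [hI]
    congr 1
    ext z
    constructor
    · rintro ⟨i, rfl⟩
      exact ⟨_, i.2, rfl⟩
    · rintro ⟨j, hj, rfl⟩
      exact ⟨⟨j, hj⟩, rfl⟩
  · rintro k ⟨x, hx⟩
    rw [ann_self, Submodule.add_eq_sup, Submodule.add_eq_sup, sup_bot_eq, sup_bot_eq] at hx
    have h1 := rad_join hy2 hI hx
    rw [← Ideal.span_union] at h1
    have h2 := dim_le hd _ (Set.toFinite _) h1
    have h3 := Set.ncard_union_le (Set.range x) (y '' {j : Fin d | ¬ (j : ℕ) < n})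
    have h4 : (Set.range x).ncard ≤ k := by
      rw [← Set.image_univ]
      refine (Set.ncard_image_le (Set.toFinite _)).trans ?_
      rw [Set.ncard_univ, Nat.card_fin]
    have h5 := ncard_tail (y := y) hn
    omega

lemma weak_main
    (hB : ∀ y : Fin d → R,
      (∀ j, y j ∈ IsLocalRing.maximalIdeal R) →
      (Ideal.span (Set.range y)).radical = IsLocalRing.maximalIdeal R →
      IsUncondWeakSeq (IsLocalRing.maximalIdeal R) R y)
    (hy1 : ∀ j, y j ∈ IsLocalRing.maximalIdeal R)
    (hy2 : (Ideal.span (Set.range y)).radical = IsLocalRing.maximalIdeal R) (hn : n ≤ d)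
    (hI : I = Ideal.span (y '' {j : Fin d | (j : ℕ) < n})) (x : Fin n → R)
    (hx : IsRsop I R x) : IsWeakSeq I R x := by
  obtain ⟨hxI, hxr⟩ := hx
  have hIm : I ≤ IsLocalRing.maximalIdeal R := by
    rw [hI, Ideal.span_le]
    rintro _ ⟨i, _, rfl⟩
    exact hy1 i
  rw [ann_self, Submodule.add_eq_sup, Submodule.add_eq_sup, sup_bot_eq, sup_bot_eq] at hxr
  let z : Fin d → R := fun j => if hj : (j : ℕ) < n then x ⟨j, hj⟩ else y j
  have hz : ∀ i : Fin n, z (Fin.castLE hn i) = x i := by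
    intro i
    simp [z]
  have hrange : Set.range z = Set.range x ∪ y '' {j : Fin d | ¬ (j : ℕ) < n} := by
    ext w
    constructor
    · rintro ⟨j, rfl⟩
      by_cases hj : (j : ℕ) < n
      · exact Or.inl ⟨⟨j, hj⟩, by simp [z, hj]⟩
      · exact Or.inr ⟨j, hj, by simp [z, hj]⟩
    · rintro (⟨i, rfl⟩ | ⟨j, hj, rfl⟩)
      · exact ⟨_, hz i⟩
      · have hj' : ¬ (j : ℕ) < n := hj
        exact ⟨j, by simp [z, hj']⟩
  have hzm : ∀ j, z j ∈ IsLocalRing.maximalIdeal R := by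
    intro j
    by_cases hj : (j : ℕ) < n
    · simpa [z, hj] using hIm (hxI ⟨j, hj⟩)
    · simpa [z, hj] using hy1 j
  have hU := hB z hzm (by rw [hrange, Ideal.span_union]; exact rad_join hy2 hI hxr)
  intro i m hm a ha
  have hw := weakV hU 1 (fun _ => 1) (fun _ => one_pos) (Fin.castLE hn i) m
  have key : pSpan R x i =
      Ideal.span ((fun k => z ((1 : Equiv.Perm (Fin d)) k) ^ 1) '' {j | j < Fin.castLE hn i}) := by
    rw [pSpan_self]
    congr 1
    ext w
    constructor
    · rintro ⟨j, hj, rfl⟩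
      exact ⟨Fin.castLE hn j, hj, by simp [hz]⟩
    · rintro ⟨j, hj, rfl⟩
      have hjn : (j : ℕ) < n := lt_trans hj i.2
      exact ⟨⟨j, hjn⟩, hj, by simp [z, hjn]⟩
  rw [← key] at hw
  refine hw ?_ a (hIm ha)
  rw [pow_one, Equiv.Perm.one_apply, hz]
  exact hm

end Final

end Helpers

/-- **Corollary 4.4.** Let `(R, m)` be a Buchsbaum Noetherian local ring (i.e. every system
of parameters of `R` is an unconditioned `m`-weak sequence on `R`) and let `I` be an ideal of
`R` generated by a part `y₁, …, yₙ` of a system of parameters of `R`. Then `R` is an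
`I`-relative Buchsbaum `R`-module; in particular `cd(I,R) = n = ara(I,R)`. -/
theorem corollary_4_4 [IsNoetherianRing R] [IsLocalRing R]
    (d : ℕ) (hd : ringKrullDim R = d)
    (hBuchsbaum : ∀ y : Fin d → R,
      (∀ j, y j ∈ IsLocalRing.maximalIdeal R) →
      (Ideal.span (Set.range y)).radical = IsLocalRing.maximalIdeal R →
      IsUncondWeakSeq (IsLocalRing.maximalIdeal R) R y)
    (y : Fin d → R) (hy1 : ∀ j, y j ∈ IsLocalRing.maximalIdeal R)
    (hy2 : (Ideal.span (Set.range y)).radical = IsLocalRing.maximalIdeal R)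
    (n : ℕ) (hn : n ≤ d)
    (I : Ideal R) (hI : I = Ideal.span (y '' {j : Fin d | (j : ℕ) < n})) :
    IsRelBuchsbaum I R ∧ IsCd I R n ∧ IsAra I R n := by
  have h := hBuchsbaum y hy1 hy2
  have h1 := cd_main hd h hy1 hy2 hn hI
  have h2 := ara_main hd hy2 hn hI
  exact ⟨⟨n, h1, h2, weak_main hBuchsbaum hy1 hy2 hn hI⟩, h1, h2⟩
end
end
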